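/- arXiv:1404.5147 — 11 statements merged into one kernel-verified Lean document; each statement's English description precedes it below -/
import Mathlib

section
/- Let p be a prime, let R be a Noetherian integral domain of characteristic p that is integrally closed in its fraction field, and let B be a perfect F_p-algebra that is an integral domain integrally closed in its fraction field, contains R as a subring, and is integral over R. Then the ring of p-typical Witt vectors W(B) is an integral domain that is integrally closed in its fraction field. -/
open Polynomial in
lemma aux_cic
    (R : Type*) [CommRing R] [IsDomain R] [IsNoetherianRing R] [IsIntegrallyClosed R]
    (B : Type*) [CommRing B] [IsDomain B] [IsIntegrallyClosed B]
    [Algebra R B] (hinj : Function.Injective (algebraMap R B)) [Algebra.IsIntegral R B]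
    (c : B) (hc : c ≠ 0) (y : FractionRing B)
    (h : ∀ n, algebraMap B (FractionRing B) c * y ^ n ∈ (algebraMap B (FractionRing B)).range) :
    y ∈ (algebraMap B (FractionRing B)).range := by
  have : FaithfulSMul R B := (faithfulSMul_iff_algebraMap_injective R B).2 hinj
  let K := FractionRing B
  let F := FractionRing R
  let Ω := AlgebraicClosure K
  have hRK : Function.Injective (algebraMap R K) := by
    rw [IsScalarTower.algebraMap_eq R B K]
    exact (IsFractionRing.injective B K).comp hinj
  have : FaithfulSMul R K := (faithfulSMul_iff_algebraMap_injective R K).2 hRK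
  let _ : Algebra F K := FractionRing.liftAlgebra R K
  have : IsScalarTower R F K := inferInstance
  have : IsScalarTower F K Ω := inferInstance
  have : IsScalarTower R K Ω := inferInstance
  have : IsScalarTower R F Ω := IsScalarTower.of_algebraMap_eq fun x => by
    rw [IsScalarTower.algebraMap_apply R K Ω, IsScalarTower.algebraMap_apply F K Ω,
      ← IsScalarTower.algebraMap_apply R F K]
  have hRΩ : Function.Injective (algebraMap R Ω) := by
    rw [IsScalarTower.algebraMap_eq R K Ω]
    exact (algebraMap K Ω).injective.comp hRK
  obtain ⟨b, r, hr, hb⟩ := Algebra.IsAlgebraic.exists_smul_eq_mul R (1 : B) hc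
  have hint : ∀ n, IsIntegral R (algebraMap R K r * y ^ n) := by
    intro n
    obtain ⟨d, hd⟩ := h n
    have : algebraMap R K r * y ^ n = algebraMap B K (b * d) := by
      rw [map_mul, hd, IsScalarTower.algebraMap_apply R B K, ← mul_assoc, ← map_mul, mul_comm b,
        ← hb, Algebra.smul_def, mul_one]
    rw [this]
    exact (Algebra.IsIntegral.isIntegral (R := R) (b * d)).algebraMap
  suffices hy : IsIntegral R y by
    exact IsIntegrallyClosed.isIntegral_iff.1 (hy.tower_top (A := B))
  have hyF : IsIntegral F y := by
    have h1 := hint 1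
    rw [pow_one] at h1
    have h2 : IsIntegral F (algebraMap R K r * y) := h1.tower_top
    have hr' : algebraMap R F r ≠ 0 := by
      simpa using hr
    have h3 : IsIntegral F (algebraMap F K (algebraMap R F r)⁻¹) := isIntegral_algebraMap
    have := h3.mul h2
    rw [IsScalarTower.algebraMap_apply R F K, ← mul_assoc, ← map_mul, inv_mul_cancel₀ hr',
      map_one, one_mul] at this
    exact this
  let A := integralClosure R Ω
  let T := completeIntegralClosure A Ω
  have hroots : ∀ z ∈ ((minpoly F y).map (algebraMap F Ω)).roots,
      z ∈ (algebraMap T Ω).range := by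
    intro z hz
    rw [mem_roots', IsRoot.def, eval_map_algebraMap] at hz
    have hzi : ∀ n, IsIntegral R (algebraMap R Ω r * z ^ n) := by
      intro n
      obtain ⟨q, hq, hq0⟩ := hint n
      refine ⟨q, hq, ?_⟩
      have hdvd : minpoly F y ∣ (q.map (algebraMap R F)).comp (C (algebraMap R F r) * X ^ n) := by
        apply minpoly.dvd
        rw [aeval_def, eval₂_comp, eval₂_map, ← IsScalarTower.algebraMap_eq, ← hq0]
        congr 1
        simp [← IsScalarTower.algebraMap_apply]
        exact Or.inl rfl
      obtain ⟨s, hs⟩ := hdvd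
      have := congrArg (aeval z) hs
      rw [map_mul, hz.2, zero_mul, aeval_def, eval₂_comp, eval₂_map,
        ← IsScalarTower.algebraMap_eq] at this
      rw [← this]
      congr 1
      simp [← IsScalarTower.algebraMap_apply]
    refine ⟨⟨z, algebraMap R A r, ?_, fun n => ?_⟩, rfl⟩
    · rw [mem_nonZeroDivisors_iff_ne_zero]
      intro h0
      apply hr
      apply hRΩ
      have := congrArg (algebraMap A Ω) h0
      simpa [← IsScalarTower.algebraMap_apply] using this
    · refine ⟨⟨_, hzi n⟩, ?_⟩
      rw [Algebra.smul_def, ← IsScalarTower.algebraMap_apply]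
      rfl
  have hlift := (IsAlgClosed.splits ((minpoly F y).map (algebraMap F Ω))).mem_lift_of_roots_mem_range
    ((minpoly.monic hyF).map _) (algebraMap T Ω) hroots
  rw [lifts_iff_coeff_lifts] at hlift
  have hcoef : minpoly F y ∈ lifts (algebraMap R F) := by
    rw [lifts_iff_coeff_lifts]
    intro n
    obtain ⟨⟨t, c', hc', ht⟩, ht'⟩ := hlift n
    rw [coeff_map] at ht'
    set a := (minpoly F y).coeff n
    change t = _ at ht'
    subst ht'
    have : FaithfulSMul R A := (faithfulSMul_iff_algebraMap_injective R A).2 fun u v huv => by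
      apply hRΩ
      exact congrArg (algebraMap A Ω) huv
    have : Algebra.IsIntegral R A := integralClosure.AlgebraIsIntegral
    obtain ⟨b', r', hr', hb'⟩ := Algebra.IsAlgebraic.exists_smul_eq_mul R (1 : A)
      (nonZeroDivisors.ne_zero hc')
    have hai : IsAlmostIntegral R a := by
      refine ⟨r', mem_nonZeroDivisors_of_ne_zero hr', fun m => ?_⟩
      apply IsIntegrallyClosed.isIntegral_iff.1
      rw [← isIntegral_algebraMap_iff (algebraMap F Ω).injective]
      obtain ⟨d, hd⟩ := ht m
      have : algebraMap F Ω (r' • a ^ m) = algebraMap A Ω (b' * d) := by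
        rw [map_mul, hd, Algebra.smul_def, Algebra.smul_def, map_mul, map_pow,
          ← IsScalarTower.algebraMap_apply R F Ω, ← mul_assoc, ← map_mul, mul_comm b', ← hb',
          Algebra.smul_def, mul_one, ← IsScalarTower.algebraMap_apply R A Ω]
      rw [this]
      exact (Algebra.IsIntegral.isIntegral (R := R) (b' * d)).algebraMap
    exact IsIntegrallyClosed.isIntegral_iff.1 hai.isIntegral
  obtain ⟨q, hq, -, hqm⟩ := lifts_and_natDegree_eq_and_monic hcoef (minpoly.monic hyF)
  refine ⟨q, hqm, ?_⟩
  rw [IsScalarTower.algebraMap_eq R F K, ← eval₂_map, hq]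
  exact minpoly.aeval F y

lemma aux_perfect (p : ℕ) [Fact p.Prime] (B : Type*) [CommRing B] [IsDomain B] [CharP B p]
    [PerfectRing B p] [CharP (FractionRing B) p] : PerfectRing (FractionRing B) p := by
  apply PerfectRing.ofSurjective
  intro x
  obtain ⟨a, b, hb, rfl⟩ := IsFractionRing.div_surjective (A := B) x
  obtain ⟨a, rfl⟩ := (PerfectRing.bijective_frobenius (R := B) (p := p)).2 a
  obtain ⟨b, rfl⟩ := (PerfectRing.bijective_frobenius (R := B) (p := p)).2 b
  exact ⟨algebraMap B _ a / algebraMap B _ b, by simp [frobenius_def, div_pow]⟩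

namespace WittAux
open WittVector

variable {p : ℕ} [Fact p.Prime] {B : Type*} [CommRing B] {K : Type*} [CommRing K]
  (f : B →+* K)

lemma mem_range_iff (w : WittVector p K) :
    w ∈ (WittVector.map (p := p) f).range ↔ ∀ i, w.coeff i ∈ f.range := by
  constructor
  · rintro ⟨v, rfl⟩ i
    exact ⟨v.coeff i, by simp [map_coeff]⟩
  · intro h
    choose g hg using h
    exact ⟨WittVector.mk p g, by ext i; simp [map_coeff, hg]⟩

lemma mem_range_of_mul_p [CharP B p] [PerfectRing B p] [CharP K p] [PerfectRing K p]
    (w : WittVector p K) (h : w * p ∈ (WittVector.map (p := p) f).range) :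
    w ∈ (WittVector.map (p := p) f).range := by
  rw [mem_range_iff] at h ⊢
  intro i
  obtain ⟨b, hb⟩ := h (i + 1)
  rw [mul_charP_coeff_succ] at hb
  obtain ⟨b, rfl⟩ := (PerfectRing.bijective_frobenius (R := B) (p := p)).2 b
  refine ⟨b, (PerfectRing.bijective_frobenius (R := K) (p := p)).1 ?_⟩
  change f b ^ p = w.coeff i ^ p
  rw [← hb, ← map_pow]

lemma mem_range_of_mul_p_pow [CharP B p] [PerfectRing B p] [CharP K p] [PerfectRing K p] (m : ℕ)
    (w : WittVector p K) (h : w * p ^ m ∈ (WittVector.map (p := p) f).range) :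
    w ∈ (WittVector.map (p := p) f).range := by
  induction m with
  | zero => simpa using h
  | succ m ih =>
    apply ih
    apply mem_range_of_mul_p
    rwa [mul_assoc, ← pow_succ]

lemma decomp [CharP K p] [PerfectRing K p] (x : WittVector p K) :
    ∃ y : WittVector p K, x = teichmuller p (x.coeff 0) + y * p ∧
      ∀ i, x.coeff (i + 1) = y.coeff i ^ p := by
  choose g hg using fun i => (PerfectRing.bijective_frobenius (R := K) (p := p)).2 (x.coeff (i+1))
  refine ⟨WittVector.mk p g, ?_, fun i => by simp [← hg, frobenius_def]⟩
  ext n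
  rw [coeff_add_of_disjoint]
  · cases n with
    | zero => simp [mul_charP_coeff_zero]
    | succ n =>
      rw [mul_charP_coeff_succ, teichmuller_coeff_pos _ _ _ (Nat.succ_pos _)]
      simp [← hg, frobenius_def]
  · intro n
    cases n with
    | zero => right; simp [mul_charP_coeff_zero]
    | succ n => left; rw [teichmuller_coeff_pos _ _ _ (Nat.succ_pos _)]

lemma main_step [CharP B p] [PerfectRing B p] [CharP K p] [PerfectRing K p]
    (hcic : ∀ (c : B), c ≠ 0 → ∀ y : K, (∀ n, f c * y ^ n ∈ f.range) → y ∈ f.range)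
    (c : WittVector p B) (hc : c.coeff 0 ≠ 0) (k : ℕ) : ∀ x : WittVector p K,
    (∀ n, WittVector.map f c * x ^ n ∈ (WittVector.map (p := p) f).range) →
    x.coeff k ∈ f.range := by
  have h0 : ∀ x : WittVector p K,
      (∀ n, WittVector.map f c * x ^ n ∈ (WittVector.map (p := p) f).range) →
      x.coeff 0 ∈ f.range := by
    intro x hx
    apply hcic _ hc
    intro n
    have := (mem_range_iff f _).1 (hx n) 0
    rw [← constantCoeff_apply, map_mul, map_pow] at this
    simpa [map_coeff] using this
  induction k with
  | zero => exact h0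
  | succ k ih =>
    intro x hx
    obtain ⟨b, hb⟩ := h0 x hx
    obtain ⟨y, hy, hyc⟩ := decomp x
    rw [hyc]
    refine pow_mem (ih y fun n => ?_) p
    apply mem_range_of_mul_p_pow f n
    have hyx : y * p = x - WittVector.map f (teichmuller p b) := by
      rw [map_teichmuller, hb]; exact eq_sub_of_add_eq' hy.symm
    rw [mul_assoc, ← mul_pow, hyx, sub_eq_add_neg, add_pow, Finset.mul_sum]
    refine sum_mem fun i _ => ?_
    rw [mul_assoc (x ^ i), ← mul_assoc]
    refine mul_mem (hx i) (mul_mem (pow_mem (neg_mem (RingHom.mem_range_self _ _)) _) (natCast_mem _ _))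

end WittAux

/-- Main Theorem: Let `R` be a Noetherian integrally closed domain of
characteristic `p`, and let `B` be a perfect `𝔽_p`-algebra which is an integrally closed
domain containing `R` as a subring and integral over `R`. Then the ring of `p`-typical Witt
vectors `𝕎 B` is an integrally closed integral domain. -/
theorem witt_vectors_integrally_closed_of_integral_over_noetherian
    (p : ℕ) [Fact p.Prime]
    (R : Type*) [CommRing R] [IsDomain R] [IsNoetherianRing R] [CharP R p]
    [IsIntegrallyClosed R]
    (B : Type*) [CommRing B] [IsDomain B] [CharP B p] [PerfectRing B p]
    [IsIntegrallyClosed B]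
    [Algebra R B] (hinj : Function.Injective (algebraMap R B))
    [Algebra.IsIntegral R B] :
    IsDomain (WittVector p B) ∧ IsIntegrallyClosed (WittVector p B) := by
  refine ⟨inferInstance, ?_⟩
  rw [isIntegrallyClosed_iff (FractionRing (WittVector p B))]
  intro x hx
  let K := FractionRing B
  have : CharP K p := charP_of_injective_algebraMap (IsFractionRing.injective B K) p
  have : PerfectRing K p := aux_perfect p B
  let f : B →+* K := algebraMap B K
  let W := WittVector.map (p := p) f
  have hW : Function.Injective W := WittVector.map_injective f (IsFractionRing.injective B K)
  let L := FractionRing (WittVector p K)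
  let g : WittVector p B →+* L := (algebraMap (WittVector p K) L).comp W
  have hWL : Function.Injective (algebraMap (WittVector p K) L) := IsFractionRing.injective _ _
  have hg : Function.Injective g := hWL.comp hW
  let φ : FractionRing (WittVector p B) →+* L := IsFractionRing.lift hg
  have hφ : ∀ b, φ (algebraMap _ _ b) = algebraMap (WittVector p K) L (W b) :=
    fun b => IsFractionRing.lift_algebraMap hg b
  obtain ⟨c, hc, hcx⟩ := hx.isAlmostIntegral
  have hx' : IsIntegral (WittVector p K) (φ x) := by
    obtain ⟨q, hq, hq0⟩ := hx
    refine ⟨q.map W, hq.map _, ?_⟩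
    rw [Polynomial.eval₂_map]
    have := congrArg φ hq0
    rw [Polynomial.hom_eval₂, map_zero] at this
    rw [← this]
    congr 1
    ext b
    exact (hφ b).symm
  obtain ⟨z, hz⟩ := IsIntegrallyClosed.isIntegral_iff.1 hx'
  obtain ⟨m, c', hc', rfl⟩ := WittVector.exists_eq_pow_p_mul c (nonZeroDivisors.ne_zero hc)
  have hcz : ∀ n, W c' * z ^ n ∈ W.range := by
    intro n
    apply WittAux.mem_range_of_mul_p_pow f m
    obtain ⟨d, hd⟩ := hcx n
    refine ⟨d, hWL ?_⟩
    change algebraMap _ L (W d) = _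
    rw [← hφ, hd, Algebra.smul_def, map_mul, hφ, map_pow, ← hz, ← map_pow, ← map_mul]
    congr 1
    simp only [map_mul, map_pow, map_natCast]
    ring
  have hzr : z ∈ W.range := (WittAux.mem_range_iff f z).2 fun k =>
    WittAux.main_step f (aux_cic R B hinj) c' hc' k z hcz
  obtain ⟨b, hb⟩ := hzr
  refine ⟨b, φ.injective ?_⟩
  rw [hφ, hb, hz]
end

section
/- Let p be a prime and let B be a perfect F_p-algebra that is an integral domain and is completely integrally closed. Then the ring of p-typical Witt vectors W(B) is an integral domain that is completely integrally closed (and in particular integrally closed in its fraction field). -/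
/-- An integral domain `A` is completely integrally closed if every element `x` of its fraction
field, for which there is a nonzero `a ∈ A` with `a * xⁿ ∈ A` for all `n ≥ 1`, lies in `A`. -/
def CompletelyIntegrallyClosed (A : Type*) [CommRing A] : Prop :=
  ∀ x : FractionRing A,
    (∃ a : A, a ≠ 0 ∧ ∀ n : ℕ, 1 ≤ n →
      algebraMap A (FractionRing A) a * x ^ n ∈ (algebraMap A (FractionRing A)).range) →
    x ∈ (algebraMap A (FractionRing A)).range

section helpers

variable {p : ℕ} [hp : Fact p.Prime] {B K : Type*} [CommRing B] [IsDomain B] [CharP B p]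
  [PerfectRing B p] [Field K] [Algebra B K] [IsFractionRing B K] [CharP K p]

theorem cic_perfect_frac (p : ℕ) [hp : Fact p.Prime] (B K : Type*) [CommRing B] [IsDomain B]
    [CharP B p] [PerfectRing B p] [Field K] [Algebra B K] [IsFractionRing B K] [CharP K p] :
    PerfectRing K p := by
  refine PerfectRing.ofSurjective K p fun x => ?_
  obtain ⟨a, b, hb, rfl⟩ := IsFractionRing.div_surjective (A := B) x
  obtain ⟨a', rfl⟩ := surjective_frobenius B p a
  obtain ⟨b', rfl⟩ := surjective_frobenius B p b
  refine ⟨algebraMap B K a' / algebraMap B K b', ?_⟩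
  simp [frobenius_def]

theorem cic_map_inj : Function.Injective (WittVector.map (p := p) (algebraMap B K)) :=
  WittVector.map_injective _ (IsFractionRing.injective B K)

theorem cic_descent (m : ℕ) (z : WittVector p K)
    (h : z * (p : WittVector p K) ^ m ∈ (WittVector.map (p := p) (algebraMap B K)).range) :
    z ∈ (WittVector.map (p := p) (algebraMap B K)).range := by
  obtain ⟨c, hc⟩ := h
  have h0 : c ∈ Ideal.span {((p : WittVector p B) ^ m)} := by
    rw [WittVector.mem_span_p_pow_iff_le_coeff_eq_zero]
    intro i hi
    apply IsFractionRing.injective B K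
    rw [← WittVector.map_coeff, hc, WittVector.mul_pow_charP_coeff_zero _ hi, map_zero]
  rw [Ideal.mem_span_singleton] at h0
  obtain ⟨d, rfl⟩ := h0
  refine ⟨d, ?_⟩
  have hp0 : ((p : WittVector p K) ^ m) ≠ 0 := pow_ne_zero _ (WittVector.p_nonzero p K)
  apply mul_right_cancel₀ hp0
  rw [← hc, map_mul, map_pow, map_natCast, mul_comm]

theorem cic_approx [PerfectRing K p]
    (hB : ∀ x : K, (∃ a : B, a ≠ 0 ∧ ∀ n : ℕ, 1 ≤ n →
      algebraMap B K a * x ^ n ∈ (algebraMap B K).range) → x ∈ (algebraMap B K).range)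
    (a : WittVector p B) (ha : a.coeff 0 ≠ 0) (N : ℕ) : ∀ (y : WittVector p K),
    (∀ n : ℕ, WittVector.map (algebraMap B K) a * y ^ n ∈
      (WittVector.map (p := p) (algebraMap B K)).range) →
    ∃ b z, y = WittVector.map (algebraMap B K) b + z * (p : WittVector p K) ^ N := by
  induction N with
  | zero => intro y _; exact ⟨0, y, by simp⟩
  | succ N ih =>
    intro y hy
    obtain ⟨y0, hy0⟩ : y.coeff 0 ∈ (algebraMap B K).range := by
      refine hB _ ⟨a.coeff 0, ha, fun n _ => ?_⟩
      obtain ⟨c, hc⟩ := hy n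
      refine ⟨c.coeff 0, ?_⟩
      have := congrArg WittVector.constantCoeff hc
      rw [map_mul, map_pow] at this
      simpa using this
    have h0 : y - WittVector.map (algebraMap B K) (WittVector.teichmuller p y0) ∈
        Ideal.span {(p : WittVector p K)} := by
      rw [WittVector.mem_span_p_iff_coeff_zero_eq_zero, ← WittVector.constantCoeff_apply,
        map_sub]
      simp [hy0]
    rw [Ideal.mem_span_singleton'] at h0
    obtain ⟨y1, hy1⟩ := h0
    obtain ⟨b, z, hbz⟩ := ih y1 (fun n => by
      apply cic_descent n
      rw [mul_assoc, ← mul_pow, hy1, sub_eq_add_neg, add_pow, Finset.mul_sum]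
      refine sum_mem fun i _ => ?_
      rw [← mul_assoc, ← mul_assoc]
      refine mul_mem (mul_mem (hy i) (pow_mem (neg_mem (RingHom.mem_range_self _ _)) _)) (natCast_mem _ _))
    refine ⟨WittVector.teichmuller p y0 + b * p, z, ?_⟩
    rw [eq_add_of_sub_eq hy1.symm, hbz]
    simp only [map_add, map_mul, map_natCast]
    ring

theorem cic_mem [PerfectRing K p]
    (hB : ∀ x : K, (∃ a : B, a ≠ 0 ∧ ∀ n : ℕ, 1 ≤ n →
      algebraMap B K a * x ^ n ∈ (algebraMap B K).range) → x ∈ (algebraMap B K).range)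
    (a : WittVector p B) (ha : a ≠ 0) (y : WittVector p K)
    (hy : ∀ n : ℕ, WittVector.map (algebraMap B K) a * y ^ n ∈
      (WittVector.map (p := p) (algebraMap B K)).range) :
    y ∈ (WittVector.map (p := p) (algebraMap B K)).range := by
  obtain ⟨m, a', ha', rfl⟩ := WittVector.exists_eq_pow_p_mul a ha
  have key : ∀ i, ∃ b : B, algebraMap B K b = y.coeff i := by
    intro i
    obtain ⟨b, z, hbz⟩ := cic_approx hB a' ha' (i + 1) y (fun n => by
      apply cic_descent m
      have := hy n
      rw [map_mul, map_pow, map_natCast] at this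
      convert! this using 1
      ring)
    refine ⟨b.coeff i, ?_⟩
    rw [← WittVector.map_coeff]
    symm
    refine WittVector.le_coeff_eq_iff_le_sub_coeff_eq_zero (n := i + 1).mpr ?_ i (Nat.lt_succ_self i)
    intro j hj
    rw [hbz, add_sub_cancel_left]
    exact WittVector.mul_pow_charP_coeff_zero _ hj
  choose b hb using key
  refine ⟨WittVector.mk p b, ?_⟩
  ext i
  rw [WittVector.map_coeff, WittVector.coeff_mk, hb]

end helpers

theorem cic_main (p : ℕ) [Fact p.Prime] (B : Type*) [CommRing B] [IsDomain B]
    [CharP B p] [PerfectRing B p]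
    (hB : CompletelyIntegrallyClosed B) : CompletelyIntegrallyClosed (WittVector p B) := by
  have : CharP (FractionRing B) p := IsFractionRing.charP_of_isFractionRing B p
  have : PerfectRing (FractionRing B) p := cic_perfect_frac p B (FractionRing B)
  rintro x ⟨a, ha, hx⟩
  obtain ⟨f, g, hg, rfl⟩ := IsFractionRing.div_surjective (A := WittVector p B) x
  have hg0 : g ≠ 0 := nonZeroDivisors.ne_zero hg
  have hgL : algebraMap _ (FractionRing (WittVector p B)) g ≠ 0 := by
    simpa using hg0
  have hc : ∀ n : ℕ, ∃ c, a * f ^ n = c * g ^ n := by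
    intro n
    rcases Nat.eq_zero_or_pos n with rfl | hn
    · exact ⟨a, by simp⟩
    obtain ⟨c, hc⟩ := hx n hn
    refine ⟨c, IsFractionRing.injective _ (FractionRing (WittVector p B)) ?_⟩
    rw [map_mul, map_mul, map_pow, map_pow, hc, div_pow]
    field_simp
  set φ := WittVector.map (p := p) (algebraMap B (FractionRing B)) with hφ
  have hφi : Function.Injective φ := cic_map_inj
  have hφ0 : ∀ {t}, t ≠ 0 → φ t ≠ 0 := fun h => (map_ne_zero_iff φ hφi).mpr h
  obtain ⟨y, hy⟩ : ∃ y, φ f = y * φ g := by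
    have hgM : algebraMap (WittVector p (FractionRing B)) (FractionRing (WittVector p (FractionRing B))) (φ g) ≠ 0 := by simpa using hφ0 hg0
    have : IsAlmostIntegral (WittVector p (FractionRing B)) (algebraMap (WittVector p (FractionRing B)) (FractionRing (WittVector p (FractionRing B))) (φ f) / algebraMap (WittVector p (FractionRing B)) (FractionRing (WittVector p (FractionRing B))) (φ g)) := by
      refine ⟨φ a, mem_nonZeroDivisors_of_ne_zero (hφ0 ha), fun n => ?_⟩
      obtain ⟨c, hc⟩ := hc n
      refine ⟨φ c, ?_⟩
      have h1 := congrArg (fun t => algebraMap (WittVector p (FractionRing B)) (FractionRing (WittVector p (FractionRing B))) (φ t)) hc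
      simp only [map_mul, map_pow] at h1
      rw [Algebra.smul_def, div_pow, ← mul_div_assoc, h1]
      field_simp
    obtain ⟨y, hy⟩ := (isIntegrallyClosed_iff (FractionRing (WittVector p (FractionRing B)))).mp inferInstance this.isIntegral
    refine ⟨y, IsFractionRing.injective (WittVector p (FractionRing B)) (FractionRing (WittVector p (FractionRing B))) ?_⟩
    rw [map_mul, hy]
    field_simp
  obtain ⟨b, hb⟩ := cic_mem hB a ha y (fun n => by
    obtain ⟨c, hc⟩ := hc n
    refine ⟨c, ?_⟩
    apply mul_right_cancel₀ (pow_ne_zero n (hφ0 hg0))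
    have h1 := congrArg φ hc
    simp only [map_mul, map_pow, hy] at h1
    rw [← h1]
    ring)
  refine ⟨b, ?_⟩
  have : f = b * g := hφi (by rw [hy, ← hb, map_mul])
  rw [this, map_mul]
  field_simp

/-- If `B` is a perfect `𝔽_p`-algebra which is a completely integrally closed
domain, then `𝕎 B` is a completely integrally closed domain (in particular it is integrally
closed in its fraction field). -/
theorem witt_vectors_completely_integrally_closed
    (p : ℕ) [Fact p.Prime] (B : Type*) [CommRing B] [IsDomain B]
    [CharP B p] [PerfectRing B p]
    (hB : CompletelyIntegrallyClosed B) :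
    IsDomain (WittVector p B) ∧ CompletelyIntegrallyClosed (WittVector p B) ∧
      IsIntegrallyClosed (WittVector p B) := by
  have h := cic_main p B hB
  refine ⟨inferInstance, h, ?_⟩
  rw [isIntegrallyClosed_iff (FractionRing (WittVector p B))]
  intro x hx
  obtain ⟨r, hr, hr'⟩ := hx.isAlmostIntegral
  exact h x ⟨r, nonZeroDivisors.ne_zero hr, fun n _ => by
    rw [← Algebra.smul_def]; exact hr' n⟩
end

section
/- Let A be a Noetherian integral domain that is integrally closed in its fraction field, and let C be an integral domain integrally closed in its own fraction field such that A ⊆ C ⊆ A^+, where A^+ is the absolute integral closure of A (equivalently, C contains A and every element of C is integral over A). Then C is completely integrally closed. -/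
/-- If `A` is a Noetherian integrally closed domain and `C` is an integrally
closed domain with `A ⊆ C ⊆ A⁺` (i.e. `C` contains `A` and every element of `C` is integral
over `A`), then `C` is completely integrally closed. -/
theorem completely_integrally_closed_of_integral_over_noetherian_normal
    (A : Type*) [CommRing A] [IsDomain A] [IsNoetherianRing A] [IsIntegrallyClosed A]
    (C : Type*) [CommRing C] [IsDomain C] [IsIntegrallyClosed C]
    [Algebra A C] (hinj : Function.Injective (algebraMap A C))
    [Algebra.IsIntegral A C] :
    CompletelyIntegrallyClosed C := by
  intro x ⟨c, hc0, hc⟩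
  have : FaithfulSMul A C := (faithfulSMul_iff_algebraMap_injective A C).2 hinj
  obtain ⟨a, ha0, hac⟩ : ∃ a : A, a ≠ 0 ∧ c ∣ algebraMap A C a := by
    obtain ⟨y, hy, h⟩ := (Algebra.IsIntegral.isIntegral (R := A) c).isAlgebraic.exists_nonzero_dvd
      (mem_nonZeroDivisors_of_ne_zero hc0)
    exact ⟨y, hy, h⟩
  let K := FractionRing A
  let L := FractionRing C
  have hAL : Function.Injective (algebraMap A L) := FaithfulSMul.algebraMap_injective A L
  let _ : Algebra K L := FractionRing.liftAlgebra A L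
  have : IsScalarTower A K L := FractionRing.isScalarTower_liftAlgebra A L
  have hint : ∀ n : ℕ, IsIntegral A (algebraMap A L a * x ^ n) := by
    intro n
    obtain ⟨d, hd⟩ := hac
    have key : ∀ z : C, IsIntegral A (algebraMap C L z) := fun z =>
      (Algebra.IsIntegral.isIntegral (R := A) z).algebraMap
    rcases Nat.eq_zero_or_pos n with rfl | hn
    · rw [pow_zero, mul_one]; exact isIntegral_algebraMap
    · obtain ⟨z, hz⟩ := hc n hn
      have : algebraMap A L a * x ^ n = algebraMap C L (z * d) := by
        rw [IsScalarTower.algebraMap_apply A C L, hd, map_mul, map_mul, hz]; ring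
      rw [this]; exact key _
  have hxK : IsIntegral K x := by
    have h1 := (hint 1).tower_top (A := K)
    have h2 : algebraMap K L (algebraMap A K a) ≠ 0 := by
      rw [← IsScalarTower.algebraMap_apply A K L]
      exact fun h => ha0 (hAL (by rw [h, map_zero]))
    have h3 : x = algebraMap K L (algebraMap A K a)⁻¹ * (algebraMap A L a * x ^ 1) := by
      rw [map_inv₀, IsScalarTower.algebraMap_apply A K L, pow_one, inv_mul_cancel_left₀ h2]
    rw [h3]
    exact isIntegral_algebraMap.mul h1
  let Ω := AlgebraicClosure K
  let B := integralClosure A Ω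
  have hAΩ : Function.Injective (algebraMap A Ω) := by
    rw [IsScalarTower.algebraMap_eq A K Ω]
    exact (algebraMap K Ω).injective.comp (IsFractionRing.injective A K)
  have hroot : ∀ y ∈ ((minpoly K x).map (algebraMap K Ω)).roots,
      y ∈ completeIntegralClosure B Ω := by
    intro y hy
    rw [mem_completeIntegralClosure]
    refine ⟨algebraMap A B a, mem_nonZeroDivisors_of_ne_zero ?_, fun n => ?_⟩
    · intro h
      apply ha0
      apply hAΩ
      rw [IsScalarTower.algebraMap_apply A B Ω, h, map_zero, map_zero]
    · have hy0 : Polynomial.aeval y (minpoly K x) = 0 := by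
        have := Polynomial.isRoot_of_mem_roots hy
        rwa [Polynomial.IsRoot, Polynomial.eval_map_algebraMap] at this
      obtain ⟨p, hpm, hp⟩ := hint n
      have hdvd : minpoly K x ∣ (p.map (algebraMap A K)).comp
          (Polynomial.C (algebraMap A K a) * Polynomial.X ^ n) := by
        apply minpoly.dvd
        rw [Polynomial.aeval_comp, Polynomial.aeval_map_algebraMap]
        simp only [map_mul, Polynomial.aeval_C, map_pow, Polynomial.aeval_X]
        have e : algebraMap K L (algebraMap A K a) = algebraMap A L a :=
          (IsScalarTower.algebraMap_apply A K L a).symm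
        change Polynomial.aeval (algebraMap K L (algebraMap A K a) * x ^ n) p = 0
        rw [e]
        exact hp
      have h0 := Polynomial.aeval_eq_zero_of_dvd_aeval_eq_zero hdvd hy0
      rw [Polynomial.aeval_comp, Polynomial.aeval_map_algebraMap] at h0
      simp only [map_mul, Polynomial.aeval_C, map_pow, Polynomial.aeval_X,
          ← IsScalarTower.algebraMap_apply A K Ω] at h0
      have hI : IsIntegral A (algebraMap A Ω a * y ^ n) := ⟨p, hpm, h0⟩
      refine ⟨⟨_, hI⟩, ?_⟩
      rw [Algebra.smul_def, ← IsScalarTower.algebraMap_apply A B Ω]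
      rfl
  have hcoeff : ∀ i, algebraMap K Ω ((minpoly K x).coeff i) ∈ completeIntegralClosure B Ω := by
    intro i
    have hs := (IsAlgClosed.splits ((minpoly K x).map (algebraMap K Ω))).eq_prod_roots_of_monic
      ((minpoly.monic hxK).map _)
    have hl : (minpoly K x).map (algebraMap K Ω) ∈
        Polynomial.lifts (completeIntegralClosure B Ω).toSubring.subtype := by
      rw [hs]
      apply Subsemiring.multiset_prod_mem
      intro q hq
      obtain ⟨y, hy, rfl⟩ := Multiset.mem_map.1 hq
      refine ⟨Polynomial.X - Polynomial.C ⟨y, hroot y hy⟩, ?_⟩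
      simp
      rfl
    obtain ⟨⟨z, hz⟩, hz'⟩ := (Polynomial.lifts_iff_coeff_lifts _).1 hl i
    rw [Polynomial.coeff_map] at hz'
    rw [← hz']
    exact hz
  have hcoeffA : ∀ i, (minpoly K x).coeff i ∈ (algebraMap A K).range := by
    intro i
    obtain ⟨r, hr, h⟩ := hcoeff i
    obtain ⟨b, hb0, s, hs⟩ :=
      (Algebra.IsIntegral.isIntegral (R := A) r).isAlgebraic.exists_nonzero_dvd hr
    have hai : IsAlmostIntegral A ((minpoly K x).coeff i) := by
      refine ⟨b, mem_nonZeroDivisors_of_ne_zero hb0, fun n => ?_⟩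
      obtain ⟨z, hz⟩ := h n
      have hI : IsIntegral A (algebraMap K Ω (b • (minpoly K x).coeff i ^ n)) := by
        have : algebraMap K Ω (b • (minpoly K x).coeff i ^ n) = ((s * z : B) : Ω) := by
          rw [Algebra.smul_def, map_mul, ← IsScalarTower.algebraMap_apply A K Ω,
            IsScalarTower.algebraMap_apply A B Ω, hs, map_mul, map_pow]
          rw [Algebra.smul_def] at hz
          have hz2 : (z : Ω) = algebraMap B Ω r * algebraMap K Ω ((minpoly K x).coeff i) ^ n := hz
          rw [MulMemClass.coe_mul, hz2]
          change (r : Ω) * (s : Ω) * _ = (s : Ω) * ((r : Ω) * _)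
          ring
        rw [this]
        exact (s * z).2
      exact IsIntegrallyClosed.isIntegral_iff.1
        ((isIntegral_algebraMap_iff (algebraMap K Ω).injective).1 hI)
    exact IsIntegrallyClosed.isIntegral_iff.1 hai.isIntegral
  have hxA : IsIntegral A x := by
    have hl : minpoly K x ∈ Polynomial.lifts (algebraMap A K) :=
      (Polynomial.lifts_iff_coeff_lifts _).2 hcoeffA
    obtain ⟨q, hq, -, hqm⟩ := Polynomial.lifts_and_natDegree_eq_and_monic hl (minpoly.monic hxK)
    refine ⟨q, hqm, ?_⟩
    have := minpoly.aeval K x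
    rwa [← hq, Polynomial.aeval_map_algebraMap] at this
  exact IsIntegrallyClosed.isIntegral_iff.1 (hxA.tower_top (A := C))
end

section
/- Let p be a prime and let A be a perfect F_p-algebra. Then the ring of p-typical Witt vectors W(A) is a p-adic deformation of A: p is a nonzerodivisor in W(A), W(A) is p-adically complete and separated (the natural map W(A) → lim_n W(A)/p^n W(A) is an isomorphism), and there is a ring isomorphism W(A)/p·W(A) ≅ A. -/
/-- For a perfect `𝔽_p`-algebra `A`, the ring of `p`-typical Witt vectors `𝕎 A`
is a `p`-adic deformation of `A`: `p` is a nonzerodivisor in `𝕎 A`, `𝕎 A` is `p`-adically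
complete and separated, and `𝕎 A / p·𝕎 A ≅ A`. -/
theorem witt_vectors_is_p_adic_deformation
    (p : ℕ) [Fact p.Prime] (A : Type*) [CommRing A]
    [CharP A p] [PerfectRing A p] :
    (p : WittVector p A) ∈ nonZeroDivisors (WittVector p A) ∧
    IsAdicComplete (Ideal.span {(p : WittVector p A)}) (WittVector p A) ∧
    Nonempty ((WittVector p A ⧸ Ideal.span {(p : WittVector p A)}) ≃+* A) := by
  refine ⟨?_, WittVector.isAdicCompleteIdealSpanP, ⟨WittVector.quotientPEquiv⟩⟩
  rw [mem_nonZeroDivisors_iff_right]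
  exact fun x h => WittVector.eq_zero_of_p_mul_eq_zero x h
end

section
/- Let p be a prime and let A be a perfect F_p-algebra. If A₁ and A₂ are two p-adic deformations of A, with given ring isomorphisms f_i : A_i/pA_i ≅ A (i = 1,2), then there exists a ring isomorphism φ : A₁ ≅ A₂ such that the induced map A₁/pA₁ → A₂/pA₂ is compatible with f₁ and f₂ (i.e., f₂ ∘ (φ mod p) = f₁). -/
theorem exists_wittEquiv_aux
    (p : ℕ) [Fact p.Prime] (A : Type*) [CommRing A] [CharP A p] [PerfectRing A p]
    (R : Type*) [CommRing R]
    (h : (p : R) ∈ nonZeroDivisors R)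
    (hc : IsAdicComplete (Ideal.span {(p : R)}) R)
    (f : (R ⧸ Ideal.span {(p : R)}) ≃+* A) :
    ∃ e : WittVector p A ≃+* R, ∀ w,
      f (Ideal.Quotient.mk (Ideal.span {(p : R)}) (e w)) = w.coeff 0 := by
  have hA : Nontrivial A := CharP.nontrivial_of_char_ne_one (Fact.out : p.Prime).ne_one
  have hu : Fact (¬ IsUnit (p : R)) := ⟨fun hu => by
    have h1 : Ideal.span {(p : R)} = ⊤ := Ideal.span_singleton_eq_top.2 hu
    have h2 : Subsingleton (R ⧸ Ideal.span {(p : R)}) := Ideal.Quotient.subsingleton_iff.2 h1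
    exact not_subsingleton A f.symm.toEquiv.subsingleton⟩
  let g : A →+* PreTilt R p := Perfection.lift p A (ModP R p) (f.symm : A →+* ModP R p)
  have hg : ∀ a, PreTilt.coeff 0 (g a) = f.symm a := fun a => by
    exact congrArg (fun k : A →+* ModP R p => k a)
      ((Perfection.lift p A (ModP R p)).symm_apply_apply (f.symm : A →+* ModP R p))
  let e : WittVector p A →+* R := (WittVector.fontaineTheta R p).comp (WittVector.map g)
  have he : ∀ w, Ideal.Quotient.mk (Ideal.span {(p : R)}) (e w) = f.symm (w.coeff 0) := fun w => by
    simp only [e, RingHom.comp_apply, WittVector.mk_fontaineTheta, WittVector.map_coeff, hg]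
  have hinj : Function.Injective e := by
    rw [injective_iff_map_eq_zero]
    intro w hw
    have key : ∀ n : ℕ, ∃ v, w = (p : WittVector p A) ^ n * v ∧ e v = 0 := by
      intro n
      induction n with
      | zero => exact ⟨w, by simp, hw⟩
      | succ n ih =>
        obtain ⟨v, hv, hv0⟩ := ih
        have h0 : v.coeff 0 = 0 := by
          have := he v
          rw [hv0, map_zero] at this
          exact (map_eq_zero_iff _ f.symm.injective).1 this.symm
        obtain ⟨u, hu⟩ := Ideal.mem_span_singleton.1
          ((WittVector.mem_span_p_iff_coeff_zero_eq_zero v).2 h0)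
        refine ⟨u, by rw [hv, hu]; ring, ?_⟩
        rw [hu, map_mul, map_natCast, mul_comm] at hv0
        exact (mul_right_mem_nonZeroDivisors_eq_zero_iff h).1 hv0
    ext n
    obtain ⟨v, hv, -⟩ := key (n + 1)
    have := (WittVector.mem_span_p_pow_iff_le_coeff_eq_zero w (n + 1)).1
      (Ideal.mem_span_singleton.2 ⟨v, hv⟩) n (Nat.lt_succ_self n)
    simpa using this
  have hsurj : Function.Surjective e := by
    have hm : Ideal.map e (Ideal.span {(p : WittVector p A)}) = Ideal.span {(p : R)} := by
      simp [Ideal.map_span]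
    have _ : IsHausdorff ((Ideal.span {(p : WittVector p A)}).map e) R := by
      rw [hm]; infer_instance
    apply surjective_of_mk_map_comp_surjective e (I := Ideal.span {(p : WittVector p A)})
    rw [hm]
    intro y
    obtain ⟨w, hw⟩ := WittVector.coeff_surjective (p := p) 0 (f y)
    exact ⟨w, by simp [he, hw]⟩
  refine ⟨RingEquiv.ofBijective e ⟨hinj, hsurj⟩, fun w => ?_⟩
  exact (congrArg f (he w)).trans (f.apply_symm_apply _)

/-- Uniqueness of `p`-adic deformations of a perfect `𝔽_p`-algebra `A`.
If `A₁` and `A₂` are two `p`-adic deformations of `A`, with given isomorphisms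
`fᵢ : Aᵢ/pAᵢ ≃ A`, then there is a ring isomorphism `φ : A₁ ≃ A₂` compatible with
`f₁` and `f₂` modulo `p`. -/
theorem p_adic_deformation_unique
    (p : ℕ) [Fact p.Prime] (A : Type*) [CommRing A] [CharP A p] [PerfectRing A p]
    (A₁ A₂ : Type*) [CommRing A₁] [CommRing A₂]
    (h₁ : (p : A₁) ∈ nonZeroDivisors A₁)
    (h₂ : (p : A₂) ∈ nonZeroDivisors A₂)
    (hc₁ : IsAdicComplete (Ideal.span {(p : A₁)}) A₁)
    (hc₂ : IsAdicComplete (Ideal.span {(p : A₂)}) A₂)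
    (f₁ : (A₁ ⧸ Ideal.span {(p : A₁)}) ≃+* A)
    (f₂ : (A₂ ⧸ Ideal.span {(p : A₂)}) ≃+* A) :
    ∃ φ : A₁ ≃+* A₂, ∀ x : A₁,
      f₂ (Ideal.Quotient.mk (Ideal.span {(p : A₂)}) (φ x)) =
        f₁ (Ideal.Quotient.mk (Ideal.span {(p : A₁)}) x) := by
  obtain ⟨e₁, he₁⟩ := exists_wittEquiv_aux p A A₁ h₁ hc₁ f₁
  obtain ⟨e₂, he₂⟩ := exists_wittEquiv_aux p A A₂ h₂ hc₂ f₂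
  refine ⟨e₁.symm.trans e₂, fun x => ?_⟩
  have := he₁ (e₁.symm x)
  rw [RingEquiv.apply_symm_apply] at this
  rw [this]
  exact he₂ _
end

section
/- Let A be a commutative ring and let x ∈ A be a nonzerodivisor. Then the image of x in the x-adic completion A^∧ = lim_n A/x^n A is a nonzerodivisor in A^∧. -/
/-- If `x` is a nonzerodivisor of a commutative ring `A`, then the image of `x` in
the `x`-adic completion `A^∧ = lim_n A/xⁿA` is again a nonzerodivisor. -/
theorem regular_element_regular_in_adic_completion
    (A : Type*) [CommRing A] (x : A) (hx : x ∈ nonZeroDivisors A) :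
    algebraMap A (AdicCompletion (Ideal.span {x}) A) x ∈
      nonZeroDivisors (AdicCompletion (Ideal.span {x}) A) := by
  rw [mem_nonZeroDivisors_iff_right]
  intro y hy
  rw [mul_comm, ← Algebra.smul_def] at hy
  induction y using AdicCompletion.induction_on with
  | _ f =>
  rw [← map_smul] at hy
  refine AdicCompletion.mk_zero_of _ _ f ⟨0, fun n _ => ⟨n + 1, Nat.le_succ n, n, le_rfl, ?_⟩⟩
  have h : AdicCompletion.eval (Ideal.span {x}) A (n + 1)
      (AdicCompletion.mk (Ideal.span {x}) A (x • f)) = 0 := by rw [hy, map_zero]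
  have h2 : x * f (n + 1) ∈ ((Ideal.span {x}) ^ (n + 1) • ⊤ : Ideal A) :=
    (Submodule.Quotient.mk_eq_zero _).mp h
  simp only [smul_eq_mul, Ideal.mul_top, Ideal.span_singleton_pow,
    Ideal.mem_span_singleton] at h2 ⊢
  obtain ⟨c, hc⟩ := h2
  refine ⟨c, ?_⟩
  have : x * (f (n + 1) - x ^ n * c) = 0 := by rw [mul_sub, hc]; ring
  exact sub_eq_zero.mp ((mem_nonZeroDivisors_iff.mp hx).1 _ this)
end

section
/- Let p be a prime and let A be a commutative ring such that p is a nonzerodivisor in A and the quotient A/pA is a perfect F_p-algebra. Then the p-adic completion A^∧ = lim_n A/p^n A is isomorphic to the ring of p-typical Witt vectors W(A/pA), via an isomorphism lifting the identity of A/pA; in particular there is a canonical ring homomorphism A → W(A/pA) whose composite with the projection W(A/pA) → A/pA is the quotient map, and this homomorphism is injective whenever A is p-adically separated (i.e., ⋂_n p^n A = 0). -/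
section AuxWitt

open WittVector

variable (p : ℕ) [Fact p.Prime] (A : Type*) [CommRing A]
    [CharP (A ⧸ Ideal.span {(p : A)}) p]
    [PerfectRing (A ⧸ Ideal.span {(p : A)}) p]

/-- theta modulo p^(n+1) -/
noncomputable def auxTheta (n : ℕ) :
    WittVector p (A ⧸ Ideal.span {(p : A)}) →+* A ⧸ Ideal.span {(p : A)} ^ (n + 1) :=
  (ghostComponentModPPow n).comp
    (WittVector.map
      ((iterateFrobeniusEquiv (A ⧸ Ideal.span {(p : A)}) p n).symm : _ →+* _))

theorem auxTheta_teichmuller (n : ℕ) (y : A) (x : A ⧸ Ideal.span {(p : A)})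
    (h : (Ideal.Quotient.mk (Ideal.span {(p : A)}) y) ^ p ^ n = x) :
    auxTheta p A n (teichmuller p x) = Ideal.Quotient.mk _ (y ^ p ^ n) := by
  have h2 : (iterateFrobeniusEquiv (A ⧸ Ideal.span {(p : A)}) p n).symm x =
      Ideal.Quotient.mk _ y := by
    rw [RingEquiv.symm_apply_eq, iterateFrobeniusEquiv_apply, iterateFrobenius_def, h]
  have := ghostComponentModPPow_map_mk n (teichmuller p y)
  simp only [map_teichmuller, ghostComponent_teichmuller] at this
  simp [auxTheta, map_teichmuller, h2, this]

theorem auxTheta_zero (x : WittVector p (A ⧸ Ideal.span {(p : A)})) :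
    Ideal.Quotient.factor (show Ideal.span {(p : A)} ^ (0 + 1) ≤ Ideal.span {(p : A)} by simp)
      (auxTheta p A 0 x) = x.coeff 0 := by
  obtain ⟨y, rfl⟩ := WittVector.map_surjective _ Ideal.Quotient.mk_surjective x
  have h0 : (iterateFrobeniusEquiv (A ⧸ Ideal.span {(p : A)}) p 0).symm.toRingHom =
      RingHom.id _ := by
    refine RingHom.ext fun x => ?_
    change (iterateFrobeniusEquiv (A ⧸ Ideal.span {(p : A)}) p 0).symm x = x
    rw [RingEquiv.symm_apply_eq]
    simp
  have h1 : auxTheta p A 0 (WittVector.map (Ideal.Quotient.mk _) y) =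
      ghostComponentModPPow 0 (WittVector.map (Ideal.Quotient.mk _) y) := by
    rw [auxTheta, RingHom.comp_apply]
    congr 1
    ext i
    rw [WittVector.map_coeff]
    exact congr($h0 _)
  rw [h1, ghostComponentModPPow_map_mk]
  simp [ghostComponent_apply]

theorem auxTheta_compat_succ (n : ℕ) :
    (Ideal.Quotient.factorPowSucc _ _).comp (auxTheta p A (n + 1)) = auxTheta p A n := by
  apply eq_of_apply_teichmuller_eq
  · use n + 1
    have : (p : A ⧸ Ideal.span {(p : A)} ^ (n + 1)) = Ideal.Quotient.mk _ (p : A) := by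
      simp [map_natCast]
    rw [this, ← map_pow, Ideal.Quotient.eq_zero_iff_mem]
    exact Ideal.pow_mem_pow (Ideal.mem_span_singleton_self _) _
  intro x
  obtain ⟨z, hz⟩ := Ideal.Quotient.mk_surjective
    ((iterateFrobeniusEquiv (A ⧸ Ideal.span {(p : A)}) p (n + 1)).symm x)
  have hz' : (Ideal.Quotient.mk (Ideal.span {(p : A)}) z) ^ p ^ (n + 1) = x := by
    rw [hz, ← iterateFrobenius_def, ← iterateFrobeniusEquiv_apply, RingEquiv.apply_symm_apply]
  rw [RingHom.comp_apply, auxTheta_teichmuller p A (n + 1) z x hz',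
    auxTheta_teichmuller p A n (z ^ p) x (by rw [← hz', map_pow, ← pow_mul, pow_succ'])]
  rw [← pow_mul, ← pow_succ']
  rfl

theorem auxTheta_compat {m n : ℕ} (h : m ≤ n) :
    (Ideal.Quotient.factorPow _ (Nat.succ_le_succ h)).comp (auxTheta p A n) = auxTheta p A m := by
  induction n, h using Nat.le_induction with
  | base =>
    ext1 x
    obtain ⟨y, hy⟩ := Ideal.Quotient.mk_surjective (auxTheta p A m x)
    rw [RingHom.comp_apply, ← hy]
    rfl
  | succ n h ih =>
    rw [← ih, ← auxTheta_compat_succ p A n]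
    ext1 x
    obtain ⟨y, hy⟩ := Ideal.Quotient.mk_surjective (auxTheta p A (n + 1) x)
    simp only [RingHom.comp_apply, ← hy]
    rfl

theorem auxTheta_compat' {m n : ℕ} (h : m ≤ n) :
    (Ideal.Quotient.factorPow (Ideal.span {(p : A)}) h).comp
      ((Ideal.Quotient.factorPow _ (Nat.le_succ n)).comp (auxTheta p A n)) =
    (Ideal.Quotient.factorPow _ (Nat.le_succ m)).comp (auxTheta p A m) := by
  rw [← auxTheta_compat p A h]
  ext1 x
  obtain ⟨y, hy⟩ := Ideal.Quotient.mk_surjective (auxTheta p A n x)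
  simp only [RingHom.comp_apply, ← hy]
  rfl

/-- the limit map -/
noncomputable def auxLim :
    WittVector p (A ⧸ Ideal.span {(p : A)}) →+* AdicCompletion (Ideal.span {(p : A)}) A :=
  AdicCompletion.liftRingHom _
    (fun n => (Ideal.Quotient.factorPow _ (Nat.le_succ n)).comp (auxTheta p A n))
    (auxTheta_compat' p A)

theorem evalOne_auxLim (x : WittVector p (A ⧸ Ideal.span {(p : A)})) :
    AdicCompletion.evalOneₐ _ (auxLim p A x) = x.coeff 0 := by
  rw [← AdicCompletion.factorₐ_evalₐ_one, auxLim, AdicCompletion.evalₐ_liftRingHom _ _ (auxTheta_compat' p A),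
    ← auxTheta_zero, ← auxTheta_compat p A (Nat.zero_le 1)]

theorem aux_torsion (hp : (p : A) ∈ nonZeroDivisors A)
    (z : AdicCompletion (Ideal.span {(p : A)}) A) (h : p * z = 0) : z = 0 := by
  induction z using AdicCompletion.induction_on with | _ f
  apply AdicCompletion.ext_evalₐ
  intro n
  have h1 := congr(AdicCompletion.evalₐ _ (n + 1) $h)
  rw [map_mul, map_natCast, map_zero, AdicCompletion.evalₐ_mk, ← map_natCast (Ideal.Quotient.mk _),
    ← map_mul, Ideal.Quotient.eq_zero_iff_mem, Ideal.span_singleton_pow,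
    Ideal.mem_span_singleton, pow_succ'] at h1
  rw [AdicCompletion.evalₐ_mk, map_zero, ← AdicCompletion.Ideal.mk_eq_mk _ (Nat.le_succ n),
    Ideal.Quotient.eq_zero_iff_mem, Ideal.span_singleton_pow, Ideal.mem_span_singleton]
  obtain ⟨c, hc⟩ := h1
  refine ⟨c, ?_⟩
  rw [mul_assoc] at hc
  exact (mul_cancel_left_mem_nonZeroDivisors hp).1 hc

theorem auxLim_inj (hp : (p : A) ∈ nonZeroDivisors A) : Function.Injective (auxLim p A) := by
  rw [injective_iff_map_eq_zero]
  have key : ∀ n : ℕ, ∀ x, auxLim p A x = 0 → (p : WittVector p (A ⧸ Ideal.span {(p : A)})) ^ n ∣ x := by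
    intro n
    induction n with
    | zero => simp
    | succ n ih =>
      intro x hx
      have h0 : x.coeff 0 = 0 := by rw [← evalOne_auxLim, hx, map_zero]
      rw [← mem_span_p_iff_coeff_zero_eq_zero, Ideal.mem_span_singleton] at h0
      obtain ⟨y, rfl⟩ := h0
      rw [pow_succ']
      apply mul_dvd_mul_left
      apply ih
      apply aux_torsion p A hp
      rw [← hx, map_mul, map_natCast]
  intro x hx
  ext i
  have := key (i + 1) x hx
  rw [← Ideal.mem_span_singleton, mem_span_p_pow_iff_le_coeff_eq_zero] at this
  simpa using this i (Nat.lt_succ_self i)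

theorem auxLim_surj : Function.Surjective (auxLim p A) := by
  have hmap : Ideal.map (auxLim p A) (Ideal.span {(p : WittVector p (A ⧸ Ideal.span {(p : A)}))})
      = Ideal.span {(p : AdicCompletion (Ideal.span {(p : A)}) A)} := by
    simp [Ideal.map_span]
  have _ : IsHausdorff ((Ideal.span {(p : WittVector p (A ⧸ Ideal.span {(p : A)}))}).map
      (auxLim p A)) (AdicCompletion (Ideal.span {(p : A)}) A) := by
    rw [hmap]
    constructor
    intro x hx
    apply AdicCompletion.ext_evalₐ
    intro n
    have := hx n
    rw [SModEq.zero, smul_eq_mul, Ideal.mul_top, Ideal.span_singleton_pow,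
      Ideal.mem_span_singleton] at this
    obtain ⟨c, rfl⟩ := this
    rw [map_mul, map_pow, map_natCast, map_zero, ← map_natCast (Ideal.Quotient.mk _), ← map_pow,
      Ideal.Quotient.eq_zero_iff_mem.2
        (Ideal.pow_mem_pow (Ideal.mem_span_singleton_self _) _), zero_mul]
  apply surjective_of_mk_map_comp_surjective (auxLim p A)
    (I := Ideal.span {(p : WittVector p (A ⧸ Ideal.span {(p : A)}))})
  intro z
  obtain ⟨z, rfl⟩ := Ideal.Quotient.mk_surjective z
  refine ⟨teichmuller p (AdicCompletion.evalOneₐ _ z), ?_⟩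
  rw [RingHom.comp_apply, Ideal.Quotient.eq, hmap]
  have hk := AdicCompletion.ker_evalOneₐ_eq_map (Ideal.span {(p : A)})
    (Submodule.fg_span_singleton _)
  rw [Ideal.map_span, Set.image_singleton, map_natCast] at hk
  rw [← hk, RingHom.mem_ker, map_sub, sub_eq_zero]
  exact (evalOne_auxLim p A _).trans (teichmuller_coeff_zero p _)

end AuxWitt


/-- If `p` is a nonzerodivisor of `A` and `A/pA` is a perfect `𝔽_p`-algebra, then
the `p`-adic completion of `A` is isomorphic to `𝕎 (A/pA)` via an isomorphism lifting the
identity of `A/pA`; in particular there is a canonical ring homomorphism `A → 𝕎 (A/pA)` whose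
composite with the projection `𝕎 (A/pA) → A/pA` is the quotient map, and it is injective
whenever `A` is `p`-adically separated. -/
theorem adic_completion_iso_witt_vectors
    (p : ℕ) [Fact p.Prime] (A : Type*) [CommRing A]
    (hp : (p : A) ∈ nonZeroDivisors A)
    [CharP (A ⧸ Ideal.span {(p : A)}) p]
    [PerfectRing (A ⧸ Ideal.span {(p : A)}) p] :
    ∃ e : AdicCompletion (Ideal.span {(p : A)}) A ≃+*
        WittVector p (A ⧸ Ideal.span {(p : A)}),
      (∀ a : A,
        WittVector.ghostComponent 0
            (e (algebraMap A (AdicCompletion (Ideal.span {(p : A)}) A) a)) =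
          Ideal.Quotient.mk (Ideal.span {(p : A)}) a) ∧
      ((⨅ n : ℕ, Ideal.span {(p : A)} ^ n) = ⊥ →
        Function.Injective
          (fun a : A => e (algebraMap A (AdicCompletion (Ideal.span {(p : A)}) A) a))) := by

  let e := (RingEquiv.ofBijective (auxLim p A) ⟨auxLim_inj p A hp, auxLim_surj p A⟩).symm
  refine ⟨e, fun a => ?_, fun h => ?_⟩
  · have h1 : auxLim p A (e (algebraMap A _ a)) = algebraMap A _ a :=
      (RingEquiv.ofBijective (auxLim p A)
        ⟨auxLim_inj p A hp, auxLim_surj p A⟩).apply_symm_apply _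
    have h2 := evalOne_auxLim p A (e (algebraMap A _ a))
    rw [h1] at h2
    have h3 : ∀ x : WittVector p (A ⧸ Ideal.span {(p : A)}),
        WittVector.ghostComponent 0 x = x.coeff 0 := by
      intro x
      simp [WittVector.ghostComponent_apply]
    rw [h3, ← h2]
    rfl
  · refine e.injective.comp ?_
    rw [injective_iff_map_eq_zero]
    intro a ha
    have : a ∈ (⨅ n : ℕ, Ideal.span {(p : A)} ^ n) := by
      rw [Ideal.mem_iInf]
      intro n
      have h1 := congr(AdicCompletion.evalₐ _ n $ha)
      rw [AlgHom.commutes, map_zero] at h1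
      exact Ideal.Quotient.eq_zero_iff_mem.1 h1
    rw [h] at this
    exact this
end

section
/- Let A be a Noetherian commutative ring, let x ∈ A, and let J ⊆ A be an ideal. Suppose that A is x-adically complete and separated (the natural map A → lim_n A/x^n A is an isomorphism) and that A/xA is J-adically complete and separated. Then A is complete and separated in the (xA + J)-adic topology, i.e., the natural map A → lim_k A/(xA + J)^k is an isomorphism. -/
/-- Let `A` be Noetherian, `x ∈ A`, `J ⊆ A` an ideal. If `A` is `x`-adically
complete and separated and `A/xA` is `J`-adically complete and separated, then `A` is complete
and separated in the `(xA + J)`-adic topology. -/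
theorem complete_of_complete_mod_noetherian
    (A : Type*) [CommRing A] [IsNoetherianRing A] (x : A) (J : Ideal A)
    (hx : IsAdicComplete (Ideal.span {x}) A)
    (hJ : IsAdicComplete (J.map (Ideal.Quotient.mk (Ideal.span {x})))
      (A ⧸ Ideal.span {x})) :
    IsAdicComplete (Ideal.span {x} ⊔ J) A := by
  set I := Ideal.span {x} ⊔ J with hI
  have hxI : x ∈ I := (le_sup_left : Ideal.span {x} ≤ I) (Ideal.mem_span_singleton_self x)
  have hmap : I.map (algebraMap A (A ⧸ Ideal.span {x})) =
      J.map (Ideal.Quotient.mk (Ideal.span {x})) := by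
    rw [hI, Ideal.map_sup]
    simp [Ideal.Quotient.algebraMap_eq]
  have hjx := @IsAdicComplete.le_jacobson_bot _ _ _ hx
  have hjJ := @IsAdicComplete.le_jacobson_bot _ _ _ hJ
  have hjac : I ≤ (⊥ : Ideal A).jacobson := by
    refine sup_le hjx fun j hj => ?_
    rw [Ideal.mem_jacobson_bot]
    intro y
    have h1 := Ideal.mem_jacobson_bot.1 (hjJ (Ideal.mem_map_of_mem _ hj))
      (Ideal.Quotient.mk _ y)
    obtain ⟨u, hu⟩ := isUnit_iff_exists_inv.1 h1
    obtain ⟨v, rfl⟩ := Ideal.Quotient.mk_surjective u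
    rw [← map_mul, ← map_one (Ideal.Quotient.mk (Ideal.span {x})), ← map_add, ← map_mul,
      Ideal.Quotient.mk_eq_mk_iff_sub_mem] at hu
    have h2 := Ideal.mem_jacobson_bot.1 (hjx hu) 1
    rw [mul_one, sub_add_cancel] at h2
    exact isUnit_of_mul_isUnit_left h2
  have hM : IsAdicComplete I (A ⧸ Ideal.span {x}) := by
    rw [← IsAdicComplete.map_algebraMap_iff (S := A ⧸ Ideal.span {x}), hmap]
    exact hJ
  have key : ∀ b : AdicCompletion I A, ∃ (a : A) (b' : AdicCompletion I A),
      b = AdicCompletion.of I A a + x • b' := by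
    intro b
    let f : A →ₗ[A] A := LinearMap.lsmul A A x
    let g : A →ₗ[A] A ⧸ Ideal.span {x} := (Ideal.span {x}).mkQ
    let p : A →ₗ[A] Ideal.span {x} := f.codRestrict (Ideal.span {x})
      (fun c => Ideal.mul_mem_right c _ (Ideal.mem_span_singleton_self x))
    let ι : Ideal.span {x} →ₗ[A] A := (Ideal.span {x}).subtype
    have hp : Function.Surjective p := by
      rintro ⟨y, hy⟩
      obtain ⟨c, rfl⟩ := Ideal.mem_span_singleton'.1 hy
      exact ⟨c, Subtype.ext (mul_comm _ _)⟩
    have hfg : Function.Exact ι g := LinearMap.exact_subtype_mkQ _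
    have hex := AdicCompletion.map_exact (I := I) (Submodule.subtype_injective _) hfg
      (Submodule.mkQ_surjective _)
    obtain ⟨m, hm⟩ := AdicCompletion.of_surjective I _ (AdicCompletion.map I g b)
    obtain ⟨a, rfl⟩ := Submodule.mkQ_surjective _ m
    have h0 : AdicCompletion.map I g (b - AdicCompletion.of I A a) = 0 := by
      rw [map_sub, ← hm, AdicCompletion.map_of, sub_self]
    obtain ⟨c, hc⟩ := (hex _).1 h0
    obtain ⟨b', rfl⟩ := AdicCompletion.map_surjective I hp c
    have hb' : AdicCompletion.map I f b' = b - AdicCompletion.of I A a := by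
      rw [← hc, AdicCompletion.map_comp_apply]
      rfl
    refine ⟨a, b', ?_⟩
    have : AdicCompletion.map I f b' = x • b' := by
      induction b' using AdicCompletion.induction_on with
      | _ c => rfl
    rw [← this, hb']; abel
  choose a b' hb using key
  have hprec : IsPrecomplete I A := by
    rw [← AdicCompletion.of_surjective_iff]
    intro b
    let B : ℕ → AdicCompletion I A := fun n => b'^[n] b
    have hB : ∀ n, B n = AdicCompletion.of I A (a (B n)) + x • B (n+1) := by
      intro n
      have : B (n+1) = b' (B n) := Function.iterate_succ_apply' _ _ _
      rw [this]; exact hb _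
    let s : ℕ → A := fun n => ∑ i ∈ Finset.range n, x ^ i * a (B i)
    have hs : ∀ n, b = AdicCompletion.of I A (s n) + x ^ n • B n := by
      intro n
      induction n with
      | zero => simp [s, B]
      | succ n ih =>
        have e : s (n+1) = s n + x ^ n • a (B n) := Finset.sum_range_succ _ _
        rw [e, map_add, map_smul, pow_succ, mul_smul, add_assoc, ← smul_add, ← hB, ← ih]
    obtain ⟨L, hL⟩ := hx.toIsPrecomplete.prec (f := s) (by
      intro m n hmn
      rw [SModEq.comm, SModEq.sub_mem, smul_eq_mul, Ideal.mul_top, Ideal.span_singleton_pow,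
        Ideal.mem_span_singleton, ← Finset.sum_Ico_eq_sub _ hmn]
      exact Finset.dvd_sum fun i hi => (pow_dvd_pow x (Finset.mem_Ico.1 hi).1).mul_right _)
    refine ⟨L, ?_⟩
    ext n
    have h1 : (x ^ n • B n).val n = 0 := by
      have := AdicCompletion.pow_smul_top_le_ker_eval (I := I) (M := A) n
        (Submodule.smul_mem_smul (Ideal.pow_mem_pow hxI n) (Submodule.mem_top (x := B n)))
      exact this
    have h2 : (x ^ n) ∈ I ^ n := Ideal.pow_mem_pow hxI n
    conv_rhs => rw [hs n, AdicCompletion.val_add_apply, h1, add_zero]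
    rw [AdicCompletion.of_apply, AdicCompletion.of_apply]
    refine ((hL n).mono ?_).symm
    exact Submodule.smul_mono_left (Ideal.pow_right_mono le_sup_left n)
  have hhaus : IsHausdorff I A := IsHausdorff.of_le_jacobson I A hjac
  exact { toIsHausdorff := hhaus, toIsPrecomplete := hprec }
end

section
/- Let A be a commutative ring, let x, x₁, …, x_d ∈ A, and set J = (x₁, …, x_d). Suppose that A is x-adically complete and separated (the natural map A → lim_n A/x^n A is an isomorphism), that A/xA is J-adically complete and separated, and that (x, x₁, …, x_d) is a regular sequence in A. Then A is complete and separated in the (xA + J)-adic topology, i.e., the natural map A → lim_k A/(xA + J)^k is an isomorphism. -/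
namespace CMR

variable {A : Type*} [CommRing A]

/-- Weak regularity of a list modulo a base ideal. -/
def WR : Ideal A → List A → Prop
  | _, [] => True
  | I, y :: l => (∀ a, y * a ∈ I → a ∈ I) ∧ WR (I ⊔ Ideal.span {y}) l

lemma WR_append (I : Ideal A) (l m : List A) (h : WR I (l ++ m)) : WR I l := by
  induction l generalizing I with
  | nil => trivial
  | cons y l ih => exact ⟨h.1, ih _ h.2⟩

lemma pow_sup_le (K : Ideal A) (y : A) (n : ℕ) :
    (K ⊔ Ideal.span {y}) ^ (n + 1) ≤
      Ideal.span {y} * (K ⊔ Ideal.span {y}) ^ n ⊔ K ^ (n + 1) := by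
  induction n with
  | zero => simp [sup_comm]
  | succ n ih =>
    rw [pow_succ' _ (n + 1)]
    refine (Ideal.mul_mono_right ih).trans ?_
    rw [Ideal.mul_sup, Ideal.sup_mul _ _ (K ^ (n + 1))]
    refine sup_le ?_ (sup_le ?_ ?_)
    · refine le_trans (le_of_eq ?_) le_sup_left
      rw [pow_succ' _ n]; ring
    · refine le_trans (le_of_eq ?_) le_sup_right
      ring
    · refine le_trans ?_ le_sup_left
      exact Ideal.mul_mono_right (Ideal.pow_right_mono le_sup_left _)

lemma decomp (K : Ideal A) (y : A) (n : ℕ) {a : A} (h : a ∈ (K ⊔ Ideal.span {y}) ^ (n + 1)) :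
    ∃ b ∈ (K ⊔ Ideal.span {y}) ^ n, ∃ c ∈ K ^ (n + 1), a = y * b + c := by
  obtain ⟨u, hu, c, hc, rfl⟩ := Submodule.mem_sup.1 (pow_sup_le K y n h)
  obtain ⟨b, hb, rfl⟩ := Ideal.mem_span_singleton_mul.1 hu
  exact ⟨b, hb, c, hc, rfl⟩

lemma mul_mem_pow (K : Ideal A) (y : A) (n : ℕ) {b : A} (h : b ∈ (K ⊔ Ideal.span {y}) ^ n) :
    y * b ∈ (K ⊔ Ideal.span {y}) ^ (n + 1) := by
  rw [pow_succ']
  exact Ideal.mul_mem_mul (Ideal.mem_sup_right (Ideal.mem_span_singleton_self y)) h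

lemma mul_mem_sup_pow (I K : Ideal A) (y : A) (n : ℕ) {b : A}
    (h : b ∈ I ⊔ (K ⊔ Ideal.span {y}) ^ n) :
    y * b ∈ I ⊔ (K ⊔ Ideal.span {y}) ^ (n + 1) := by
  obtain ⟨i, hi, c, hc, rfl⟩ := Submodule.mem_sup.1 h
  rw [mul_add]
  exact add_mem (Ideal.mem_sup_left (I.mul_mem_left _ hi)) 
    (Ideal.mem_sup_right (mul_mem_pow K y n hc))

lemma PQ (m : ℕ) :
    (∀ (I : Ideal A) (x : A) (l : List A), l.length = m → WR I (x :: l) → ∀ n a,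
      x * a ∈ I ⊔ Ideal.ofList l ^ n → a ∈ I ⊔ Ideal.ofList l ^ n) ∧
    (∀ (I : Ideal A) (z : A) (l : List A), l.length = m → WR I (l ++ [z]) → ∀ n a,
      z * a ∈ I ⊔ Ideal.ofList l ^ n → a ∈ I ⊔ Ideal.ofList l ^ n) := by
  induction m with
  | zero =>
    have key : ∀ (I : Ideal A) (x : A), (∀ a, x * a ∈ I → a ∈ I) → ∀ n a, 
        x * a ∈ I ⊔ Ideal.ofList ([] : List A) ^ n → a ∈ I ⊔ Ideal.ofList ([] : List A) ^ n := by
      intro I x h n a ha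
      cases n with
      | zero => simp
      | succ n => 
        simp only [Ideal.ofList_nil, ← Ideal.zero_eq_bot, zero_pow (Nat.succ_ne_zero n)] at ha ⊢
        simp only [Ideal.zero_eq_bot, sup_bot_eq] at ha ⊢
        exact h a ha
    constructor
    · intro I x l hl h
      obtain rfl := List.length_eq_zero_iff.1 hl
      exact key I x h.1
    · intro I x l hl h
      obtain rfl := List.length_eq_zero_iff.1 hl
      exact key I x h.1
  | succ m ih =>
    obtain ⟨P, Q⟩ := ih
    constructor
    · intro I x l hl h n
      obtain ⟨k, y, rfl⟩ : ∃ k y, l = k ++ [y] := by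
        rcases List.eq_nil_or_concat l with rfl | ⟨k, y, rfl⟩
        · simp at hl
        · exact ⟨k, y, by simp⟩
      have hk : k.length = m := by simpa using hl
      have hJ : Ideal.ofList (k ++ [y]) = Ideal.ofList k ⊔ Ideal.span {y} := by
        simp [Ideal.ofList_append]
      rw [hJ]
      have hP := P I x k hk (WR_append I (x :: k) [y] h)
      have hQ := Q _ y k hk h.2
      induction n with
      | zero => simp
      | succ n ihn =>
        intro a ha
        obtain ⟨i0, hi0, w, hw, hxa⟩ := Submodule.mem_sup.1 ha
        obtain ⟨b, hb, c, hc, rfl⟩ := decomp _ _ _ hw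
        have hb1 : b ∈ I ⊔ Ideal.span {x} ⊔ Ideal.ofList k ^ (n + 1) := by
          apply hQ
          have : y * b = (- i0 + x * a) + - c := by rw [← hxa]; ring
          rw [this]
          refine add_mem (Ideal.mem_sup_left (add_mem (Ideal.mem_sup_left (neg_mem hi0)) 
            (Ideal.mem_sup_right ?_))) (Ideal.mem_sup_right (neg_mem hc))
          exact Ideal.mul_mem_right _ _ (Ideal.mem_span_singleton_self x)
        obtain ⟨v, hv, c', hc', hbe⟩ := Submodule.mem_sup.1 hb1
        obtain ⟨i1, hi1, v', hv', rfl⟩ := Submodule.mem_sup.1 hv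
        obtain ⟨b', rfl⟩ := Ideal.mem_span_singleton.1 hv'
        have hb' : b' ∈ I ⊔ (Ideal.ofList k ⊔ Ideal.span {y}) ^ n := by
          apply ihn
          have : x * b' = - i1 + (b - c') := by rw [← hbe]; ring
          rw [this]
          refine add_mem (Ideal.mem_sup_left (neg_mem hi1)) (Ideal.mem_sup_right (sub_mem hb ?_))
          exact Ideal.pow_right_mono le_sup_left n (Ideal.pow_le_pow_right n.le_succ hc')
        have h2 : a - y * b' ∈ I ⊔ Ideal.ofList k ^ (n + 1) := by
          apply hP
          have : x * (a - y * b') = (i0 + y * i1) + (c + y * c') := by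
            rw [mul_sub, ← hxa, ← hbe]; ring
          rw [this]
          exact add_mem (Ideal.mem_sup_left (add_mem hi0 (I.mul_mem_left _ hi1)))
            (Ideal.mem_sup_right (add_mem hc (Ideal.mul_mem_left _ _ hc')))
        have : a = (a - y * b') + y * b' := by ring
        rw [this]
        exact add_mem (sup_le_sup_left (Ideal.pow_right_mono le_sup_left _) I h2)
          (mul_mem_sup_pow _ _ _ _ hb')
    · intro I z l hl h n
      obtain ⟨y, k, rfl⟩ : ∃ y k, l = y :: k := List.exists_cons_of_length_eq_add_one hl
      have hk : k.length = m := by simpa using hl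
      have hJ : Ideal.ofList (y :: k) = Ideal.ofList k ⊔ Ideal.span {y} := by
        simp [Ideal.ofList_cons, sup_comm]
      rw [hJ]
      have hP := P I y k hk (WR_append I (y :: k) [z] h)
      have hQ := Q _ z k hk h.2
      induction n with
      | zero => simp
      | succ n ihn =>
        intro a ha
        obtain ⟨i0, hi0, w, hw, hxa⟩ := Submodule.mem_sup.1 ha
        obtain ⟨e, he, c, hc, rfl⟩ := decomp _ _ _ hw
        have ha1 : a ∈ I ⊔ Ideal.span {y} ⊔ Ideal.ofList k ^ (n + 1) := by
          apply hQ
          rw [← hxa, ← add_assoc]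
          refine add_mem (Ideal.mem_sup_left (add_mem (Ideal.mem_sup_left hi0) 
            (Ideal.mem_sup_right ?_))) (Ideal.mem_sup_right hc)
          exact Ideal.mul_mem_right _ _ (Ideal.mem_span_singleton_self y)
        obtain ⟨v, hv, c', hc', hbe⟩ := Submodule.mem_sup.1 ha1
        obtain ⟨i1, hi1, v', hv', rfl⟩ := Submodule.mem_sup.1 hv
        obtain ⟨b, rfl⟩ := Ideal.mem_span_singleton.1 hv'
        have h2 : z * b - e ∈ I ⊔ Ideal.ofList k ^ (n + 1) := by
          apply hP
          have : y * (z * b - e) = (i0 - z * i1) + (c - z * c') := by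
            rw [← hbe] at hxa; linear_combination -hxa
          rw [this]
          exact add_mem (Ideal.mem_sup_left (sub_mem hi0 (I.mul_mem_left _ hi1)))
            (Ideal.mem_sup_right (sub_mem hc (Ideal.mul_mem_left _ _ hc')))
        have hb : b ∈ I ⊔ (Ideal.ofList k ⊔ Ideal.span {y}) ^ n := by
          apply ihn
          have : z * b = (z * b - e) + e := by ring
          rw [this]
          refine add_mem (sup_le_sup_left ?_ I h2) (Ideal.mem_sup_right he)
          exact (Ideal.pow_le_pow_right n.le_succ).trans (Ideal.pow_right_mono le_sup_left n)
        have : a = i1 + y * b + c' := hbe.symm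
        rw [this]
        exact add_mem (add_mem (Ideal.mem_sup_left hi1) (mul_mem_sup_pow _ _ _ _ hb))
          (Ideal.mem_sup_right (Ideal.pow_right_mono le_sup_left _ hc'))

lemma WR_of_index (l p : List A)
    (h : ∀ i (hi : i < (p ++ l).length), ∀ a, (p ++ l)[i] * a ∈ Ideal.ofList ((p ++ l).take i) →
      a ∈ Ideal.ofList ((p ++ l).take i)) : WR (Ideal.ofList p) l := by
  induction l generalizing p with
  | nil => trivial
  | cons y l ih =>
    constructor
    · have := h p.length (by simp)
      simpa using this
    · have := ih (p ++ [y]) (by simpa using h)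
      simpa [Ideal.ofList_append] using this

lemma WR_of_isWeaklyRegular (l : List A) (h : RingTheory.Sequence.IsWeaklyRegular A l) :
    WR ⊥ l := by
  rw [← Ideal.ofList_nil]
  apply WR_of_index
  intro i hi a ha
  have := h.regular_mod_prev i hi
  simp only [List.nil_append] at ha ⊢
  rw [isSMulRegular_iff_right_eq_zero_of_smul] at this
  have h2 := this (Submodule.Quotient.mk a) (by
    rw [← Submodule.Quotient.mk_smul, Submodule.Quotient.mk_eq_zero]
    simpa using ha)
  rw [Submodule.Quotient.mk_eq_zero] at h2
  simpa using h2

lemma complete_iff (I : Ideal A) : IsAdicComplete I A ↔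
    (∀ a, (∀ n, a ∈ I ^ n) → a = 0) ∧
    (∀ f : ℕ → A, (∀ n, f (n + 1) - f n ∈ I ^ n) → ∃ s, ∀ n, f n - s ∈ I ^ n) := by
  constructor
  · intro h
    refine ⟨fun a ha => h.haus' a fun n => ?_, fun f hf => ?_⟩
    · rw [SModEq.zero]; simpa using ha n
    · obtain ⟨s, hs⟩ := h.prec' f (by
        intro m n hmn
        rw [SModEq.sub_mem]
        simp only [smul_eq_mul, Ideal.mul_top]
        induction n, hmn using Nat.le_induction with
        | base => simp
        | succ n hmn ih =>
          have : f m - f (n + 1) = (f m - f n) - (f (n + 1) - f n) := by ring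
          rw [this]
          exact sub_mem ih (Ideal.pow_le_pow_right hmn (hf n)))
      refine ⟨s, fun n => ?_⟩
      simpa [SModEq.sub_mem] using hs n
  · rintro ⟨h1, h2⟩
    refine { haus' := fun a ha => h1 a fun n => ?_, prec' := fun f hf => ?_ }
    · simpa [SModEq.zero] using ha n
    · obtain ⟨s, hs⟩ := h2 f (fun n => by
        have := (hf n.le_succ).symm
        simpa [SModEq.sub_mem] using this)
      exact ⟨s, fun n => by simpa [SModEq.sub_mem] using hs n⟩

lemma step (J : Ideal A) (x : A)
    (hreg : ∀ n a, x * a ∈ J ^ n → a ∈ J ^ n)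
    (H2 : ∀ f : ℕ → A, (∀ n, f (n + 1) - f n ∈ J ^ n) → 
      ∃ s, ∀ n, f n - s ∈ J ^ n ⊔ Ideal.span {x})
    (F : ℕ → A) (hF : ∀ n, F (n + 1) - F n ∈ (J ⊔ Ideal.span {x}) ^ n) :
    ∃ s : A, ∃ G : ℕ → A, (∀ n, G (n + 1) - G n ∈ (J ⊔ Ideal.span {x}) ^ n) ∧
      ∀ n, F n - (s + x * G n) ∈ (J ⊔ Ideal.span {x}) ^ n := by
  have hJI : ∀ n, J ^ n ≤ (J ⊔ Ideal.span {x}) ^ n := fun n => Ideal.pow_right_mono le_sup_left n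
  have hd : ∀ n, ∃ j g, j ∈ J ^ n ∧ g ∈ (J ⊔ Ideal.span {x}) ^ (n - 1) ∧
      F (n + 1) - F n = x * g + j := by
    intro n
    cases n with
    | zero => exact ⟨F 1 - F 0, 0, by simp, by simp, by simp⟩
    | succ n =>
      obtain ⟨b, hb, c, hc, h⟩ := decomp _ _ _ (hF (n + 1))
      exact ⟨c, b, hc, hb, h⟩
  choose j g hj hg hjg using hd
  obtain ⟨s, hs⟩ := H2 (fun N => ∑ n ∈ Finset.range N, j n) (fun n => by
    simpa [Finset.sum_range_succ] using hj n)
  have hs' : ∀ N, ∃ u ∈ J ^ N, ∃ r, u + x * r = ∑ n ∈ Finset.range N, j n - s := by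
    intro N
    obtain ⟨u, hu, v, hv, h⟩ := Submodule.mem_sup.1 (hs N)
    obtain ⟨r, rfl⟩ := Ideal.mem_span_singleton.1 hv
    exact ⟨u, hu, r, h⟩
  choose u hu r hr using hs'
  have hrr : ∀ N, r (N + 1) - r N ∈ J ^ N := by
    intro N
    apply hreg
    have : x * (r (N + 1) - r N) = j N - u (N + 1) + u N := by
      have h1 := hr (N + 1)
      rw [Finset.sum_range_succ] at h1
      linear_combination h1 - hr N
    rw [this]
    exact add_mem (sub_mem (hj N) (Ideal.pow_le_pow_right N.le_succ (hu _))) (hu N)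
  have hFN : ∀ N, F N = F 0 + ∑ n ∈ Finset.range N, j n + x * ∑ n ∈ Finset.range N, g n := by
    intro N
    induction N with
    | zero => simp
    | succ N ih =>
      rw [Finset.sum_range_succ, Finset.sum_range_succ]
      linear_combination ih + hjg N
  refine ⟨s + F 0, fun N => r (N + 1) + ∑ n ∈ Finset.range (N + 1), g n, fun N => ?_, fun N => ?_⟩
  · have : (r (N + 1 + 1) + ∑ n ∈ Finset.range (N + 1 + 1), g n) - 
        (r (N + 1) + ∑ n ∈ Finset.range (N + 1), g n) = (r (N + 1 + 1) - r (N + 1)) + g (N + 1) := by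
      rw [Finset.sum_range_succ _ (N + 1)]; ring
    simp only [this]
    exact add_mem (hJI _ (Ideal.pow_le_pow_right N.le_succ (hrr _))) (hg (N + 1))
  · have : F N - (s + F 0 + x * (r (N + 1) + ∑ n ∈ Finset.range (N + 1), g n)) =
        u N - x * (r (N + 1) - r N) - ((F (N + 1) - F N) - j N) := by
      rw [Finset.sum_range_succ]
      linear_combination hFN N + hjg N - hr N
    simp only [this]
    exact sub_mem (sub_mem (hJI _ (hu N)) (Ideal.mul_mem_left _ _ (hJI _ (hrr N))))
      (sub_mem (hF N) (hJI _ (hj N)))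

lemma main (J : Ideal A) (x : A) 
    (hreg : ∀ n a, x * a ∈ J ^ n → a ∈ J ^ n)
    (hx : IsAdicComplete (Ideal.span {x}) A)
    (H1 : ∀ a, (∀ n, a ∈ J ^ n ⊔ Ideal.span {x}) → a ∈ Ideal.span {x})
    (H2 : ∀ f : ℕ → A, (∀ n, f (n + 1) - f n ∈ J ^ n) → 
      ∃ s, ∀ n, f n - s ∈ J ^ n ⊔ Ideal.span {x}) :
    IsAdicComplete (J ⊔ Ideal.span {x}) A := by
  rw [complete_iff] at hx ⊢
  have hJI : ∀ n, J ^ n ≤ (J ⊔ Ideal.span {x}) ^ n := fun n => Ideal.pow_right_mono le_sup_left n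
  have hxI : ∀ n, Ideal.span {x} ^ n ≤ (J ⊔ Ideal.span {x}) ^ n := 
    fun n => Ideal.pow_right_mono le_sup_right n
  constructor
  · have key : ∀ a, (∀ n, a ∈ (J ⊔ Ideal.span {x}) ^ n) → 
        ∃ b, a = x * b ∧ ∀ n, b ∈ (J ⊔ Ideal.span {x}) ^ n := by
      intro a ha
      have h1 := H1 a (fun n => by
        cases n with
        | zero => simp
        | succ n =>
          obtain ⟨b, hb, c, hc, h⟩ := decomp _ _ _ (ha (n + 1))
          rw [h]
          exact add_mem (Ideal.mem_sup_right (Ideal.mul_mem_right _ _ 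
            (Ideal.mem_span_singleton_self x))) (Ideal.mem_sup_left hc))
      obtain ⟨b, rfl⟩ := Ideal.mem_span_singleton.1 h1
      refine ⟨b, rfl, fun n => ?_⟩
      obtain ⟨e, he, c, hc, h⟩ := decomp _ _ _ (ha (n + 1))
      have h2 : b - e ∈ J ^ (n + 1) := hreg _ _ (by
        have : x * (b - e) = c := by linear_combination h
        rwa [this])
      have : b = (b - e) + e := by ring
      rw [this]
      exact add_mem (hJI n (Ideal.pow_le_pow_right n.le_succ h2)) he
    intro a ha
    apply hx.1
    intro n
    rw [Ideal.span_singleton_pow, Ideal.mem_span_singleton]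
    suffices h : ∀ n a, (∀ n, a ∈ (J ⊔ Ideal.span {x}) ^ n) → x ^ n ∣ a from h n a ha
    intro n
    induction n with
    | zero => simp
    | succ n ih =>
      intro a ha
      obtain ⟨b, rfl, hb⟩ := key a ha
      rw [pow_succ']
      exact mul_dvd_mul_left x (ih b hb)
  · intro F hF
    let T := {F : ℕ → A // ∀ n, F (n + 1) - F n ∈ (J ⊔ Ideal.span {x}) ^ n}
    have hst : ∀ F : T, ∃ s : A, ∃ G : T, ∀ n, F.1 n - (s + x * G.1 n) ∈ 
        (J ⊔ Ideal.span {x}) ^ n := by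
      intro F
      obtain ⟨s, G, hG, h⟩ := step J x hreg H2 F.1 F.2
      exact ⟨s, ⟨G, hG⟩, h⟩
    choose s G hG using hst
    let Fk : ℕ → T := fun k => G^[k] ⟨F, hF⟩
    have hFk : ∀ k, Fk (k + 1) = G (Fk k) := fun k => Function.iterate_succ_apply' _ _ _
    have hsum : ∀ N K, F N - (∑ k ∈ Finset.range K, x ^ k * s (Fk k) + x ^ K * (Fk K).1 N) ∈ 
        (J ⊔ Ideal.span {x}) ^ N := by
      intro N K
      induction K with
      | zero => simp [Fk]
      | succ K ih =>
        have h := hG (Fk K) N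
        rw [← hFk] at h
        have e : F N - (∑ k ∈ Finset.range (K + 1), x ^ k * s (Fk k) + x ^ (K + 1) * (Fk (K + 1)).1 N) 
          = (F N - (∑ k ∈ Finset.range K, x ^ k * s (Fk k) + x ^ K * (Fk K).1 N)) + 
            x ^ K * ((Fk K).1 N - (s (Fk K) + x * (Fk (K + 1)).1 N)) := by
          rw [Finset.sum_range_succ]; ring
        rw [e]
        exact add_mem ih (Ideal.mul_mem_left _ _ h)
    obtain ⟨t, ht⟩ := hx.2 (fun K => ∑ k ∈ Finset.range K, x ^ k * s (Fk k)) (fun n => by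
      simp only [Finset.sum_range_succ, add_sub_cancel_left]
      exact Ideal.mul_mem_right _ _ (Ideal.pow_mem_pow (Ideal.mem_span_singleton_self x) n))
    refine ⟨t, fun N => ?_⟩
    have e : F N - t = (F N - (∑ k ∈ Finset.range N, x ^ k * s (Fk k) + x ^ N * (Fk N).1 N)) +
      (∑ k ∈ Finset.range N, x ^ k * s (Fk k) - t) + x ^ N * (Fk N).1 N := by ring
    rw [e]
    exact add_mem (add_mem (hsum N N) (hxI N (ht N))) (Ideal.mul_mem_right _ _ 
      (hxI N (Ideal.pow_mem_pow (Ideal.mem_span_singleton_self x) N)))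

end CMR

/-- Let `A` be a commutative ring, `x, x₁, …, x_d ∈ A`, and `J = (x₁, …, x_d)`.
If `A` is `x`-adically complete and separated, `A/xA` is `J`-adically complete and separated,
and `(x, x₁, …, x_d)` is a regular sequence in `A`, then `A` is complete and separated in the
`(xA + J)`-adic topology. -/
theorem complete_of_complete_mod_regular_sequence
    (A : Type*) [CommRing A] (x : A) (d : ℕ) (xs : Fin d → A)
    (hreg : RingTheory.Sequence.IsRegular A (x :: List.ofFn xs))
    (hx : IsAdicComplete (Ideal.span {x}) A)
    (hJ : IsAdicComplete ((Ideal.span (Set.range xs)).map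
      (Ideal.Quotient.mk (Ideal.span {x}))) (A ⧸ Ideal.span {x})) :
    IsAdicComplete (Ideal.span {x} ⊔ Ideal.span (Set.range xs)) A := by
  rw [sup_comm]
  have hl : Ideal.ofList (List.ofFn xs) = Ideal.span (Set.range xs) := by
    simp only [Ideal.ofList, List.mem_ofFn']
    rfl
  rw [CMR.complete_iff] at hJ
  refine CMR.main _ x ?_ hx ?_ ?_
  · intro n a
    have := (CMR.PQ _).1 ⊥ x (List.ofFn xs) rfl
      (CMR.WR_of_isWeaklyRegular _ hreg.toIsWeaklyRegular) n a
    simpa only [hl, bot_sup_eq] using this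
  · intro a ha
    rw [← Ideal.Quotient.eq_zero_iff_mem]
    apply hJ.1
    intro n
    rw [← Ideal.map_pow, Ideal.mem_quotient_iff_mem_sup]
    exact ha n
  · intro f hf
    obtain ⟨s, hs⟩ := hJ.2 (fun n => Ideal.Quotient.mk _ (f n)) (fun n => by
      simp only [← map_sub, ← Ideal.map_pow]
      exact Ideal.mem_map_of_mem _ (hf n))
    obtain ⟨s, rfl⟩ := Ideal.Quotient.mk_surjective s
    refine ⟨s, fun n => ?_⟩
    have := hs n
    simp only [← map_sub, ← Ideal.map_pow] at this
    rwa [Ideal.mem_quotient_iff_mem_sup] at this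
end

section
/- Let p be a prime, let k be a perfect field of characteristic p, let A = k[[z₁, …, z_d]] be a power series ring in d ≥ 1 variables over k, and let A^+ be the absolute integral closure of A. Then the sequence (p, [z₁], …, [z_d]) is a regular sequence on the ring of p-typical Witt vectors W(A^+), where [z_i] ∈ W(A^+) denotes the Teichmüller lift of the image of the variable z_i in A^+. -/
noncomputable section

instance mvPowerSeriesIsDomain (k : Type*) [Field k] (d : ℕ) :
    IsDomain (MvPowerSeries (Fin d) k) :=
  NoZeroDivisors.to_isDomain _

namespace WAux
open RingTheory.Sequence Function

section L1
variable {R : Type*} [CommRing R] {M₁ M₂ M₃ : Type*} [AddCommGroup M₁] [AddCommGroup M₂]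
  [AddCommGroup M₃] [Module R M₁] [Module R M₂] [Module R M₃]

lemma map_inj {f : M₁ →ₗ[R] M₂} {g : M₂ →ₗ[R] M₃} (hf : Injective f) (hfg : Exact f g)
    {r : R} (hr : IsSMulRegular M₃ r) : Injective (QuotSMulTop.map r f) := by
  have h0 : Exact (0 : M₁ →ₗ[R] M₁) f := by
    rw [LinearMap.exact_zero_iff_injective]; exact hf
  have := QuotSMulTop.map_first_exact_on_four_term_exact_of_isSMulRegular_last h0 hfg hr
  rw [map_zero, LinearMap.exact_zero_iff_injective] at this
  exact this

lemma wr_ext {rs : List R} : ∀ {M₁ M₂ M₃ : Type _} [AddCommGroup M₁] [AddCommGroup M₂]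
    [AddCommGroup M₃] [Module R M₁] [Module R M₂] [Module R M₃]
    {f : M₁ →ₗ[R] M₂} {g : M₂ →ₗ[R] M₃} (_ : Injective f) (_ : Exact f g)
    (_ : Surjective g) (_ : IsWeaklyRegular M₁ rs) (_ : IsWeaklyRegular M₃ rs),
    IsWeaklyRegular M₂ rs := by
  induction rs with
  | nil => intros; simp
  | cons r rs ih =>
    intro M₁ M₂ M₃ _ _ _ _ _ _ f g hf hfg hg h1 h3
    rw [isWeaklyRegular_cons_iff] at *
    exact ⟨isSMulRegular_of_range_eq_ker hf (LinearMap.exact_iff.mp hfg).symm h1.1 h3.1,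
      ih (map_inj hf hfg h3.1) (QuotSMulTop.map_exact r hfg hg)
        (QuotSMulTop.map_surjective r hg) h1.2 h3.2⟩

lemma wr_ker {rs : List R} : ∀ {M₁ M₂ M₃ : Type _} [AddCommGroup M₁] [AddCommGroup M₂]
    [AddCommGroup M₃] [Module R M₁] [Module R M₂] [Module R M₃]
    {f : M₁ →ₗ[R] M₂} {g : M₂ →ₗ[R] M₃} (_ : Injective f) (_ : Exact f g)
    (_ : Surjective g) (_ : IsWeaklyRegular M₂ rs) (_ : IsWeaklyRegular M₃ rs),
    IsWeaklyRegular M₁ rs := by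
  induction rs with
  | nil => intros; simp
  | cons r rs ih =>
    intro M₁ M₂ M₃ _ _ _ _ _ _ f g hf hfg hg h1 h3
    rw [isWeaklyRegular_cons_iff] at *
    exact ⟨h1.1.of_injective f hf,
      ih (map_inj hf hfg h3.1) (QuotSMulTop.map_exact r hfg hg)
        (QuotSMulTop.map_surjective r hg) h1.2 h3.2⟩

lemma wr_ker' {rs : List R} {x : R} : ∀ {M₁ M₂ M₃ : Type _} [AddCommGroup M₁] [AddCommGroup M₂]
    [AddCommGroup M₃] [Module R M₁] [Module R M₂] [Module R M₃]
    {f : M₁ →ₗ[R] M₂} {g : M₂ →ₗ[R] M₃} (_ : Injective f) (_ : Exact f g)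
    (_ : Surjective g) (_ : IsWeaklyRegular M₂ (rs ++ [x])) (_ : IsWeaklyRegular M₃ rs),
    IsWeaklyRegular M₁ (rs ++ [x]) := by
  induction rs with
  | nil =>
    intro M₁ M₂ M₃ _ _ _ _ _ _ f g hf hfg hg h1 h3
    simp only [List.nil_append, isWeaklyRegular_singleton_iff] at *
    exact h1.of_injective f hf
  | cons r rs ih =>
    intro M₁ M₂ M₃ _ _ _ _ _ _ f g hf hfg hg h1 h3
    rw [List.cons_append, isWeaklyRegular_cons_iff] at *
    exact ⟨h1.1.of_injective f hf,
      ih (map_inj hf hfg h3.1) (QuotSMulTop.map_exact r hfg hg)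
        (QuotSMulTop.map_surjective r hg) h1.2 h3.2⟩

/-- `M₁/rs → M₂/rs` injective, elementwise. -/
lemma wr_inj {rs : List R} 
    {f : M₁ →ₗ[R] M₂} {g : M₂ →ₗ[R] M₃} (hf : Injective f) (hfg : Exact f g)
    (hg : Surjective g) (h : IsWeaklyRegular M₃ rs) (m : M₁)
    (hm : f m ∈ Ideal.ofList rs • (⊤ : Submodule R M₂)) :
    m ∈ Ideal.ofList rs • (⊤ : Submodule R M₁) := by
  have h0 : Exact (0 : M₁ →ₗ[R] M₁) f := by
    rw [LinearMap.exact_zero_iff_injective]; exact hf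
  have := map_first_exact_on_four_term_right_exact_of_isSMulRegular_last h0 hfg hg h
  have h2 := (this (Submodule.Quotient.mk m)).1 (by
    rw [Submodule.mapQ_apply]; exact (Submodule.Quotient.mk_eq_zero _).2 hm)
  obtain ⟨z, hz⟩ := h2
  induction z using Submodule.Quotient.induction_on with | _ z => 
  rw [Submodule.mapQ_apply, LinearMap.zero_apply, Submodule.Quotient.mk_zero] at hz
  exact (Submodule.Quotient.mk_eq_zero _).1 hz.symm

lemma wr_pow {M : Type*} [AddCommGroup M] [Module R M] {y : R} {rs : List R}
    (h : IsWeaklyRegular M (y :: rs)) (N : ℕ) : IsWeaklyRegular M (y ^ N :: rs) := by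
  rw [isWeaklyRegular_cons_iff] at h
  induction N with
  | zero =>
    rw [pow_zero, isWeaklyRegular_cons_iff]
    refine ⟨by intro a b; simp, ?_⟩
    have : Subsingleton (QuotSMulTop (1 : R) M) := by
      rw [Submodule.Quotient.subsingleton_iff]; simp
    clear h
    refine ⟨fun i hi => ?_⟩
    intro a b _; exact Subsingleton.elim _ _
  | succ N ih =>
    rw [isWeaklyRegular_cons_iff] at ih ⊢
    refine ⟨h.1.pow _, ?_⟩
    let f : QuotSMulTop (y ^ N) M →ₗ[R] QuotSMulTop (y ^ (N+1)) M :=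
      Submodule.mapQ _ _ (LinearMap.lsmul R M y) (by
        intro z hz
        rw [Submodule.mem_smul_pointwise_iff_exists] at hz
        obtain ⟨w, -, rfl⟩ := hz
        rw [Submodule.mem_comap, Submodule.mem_smul_pointwise_iff_exists]
        exact ⟨w, trivial, by rw [LinearMap.lsmul_apply, smul_smul, pow_succ']⟩)
    let g : QuotSMulTop (y ^ (N+1)) M →ₗ[R] QuotSMulTop y M :=
      Submodule.mapQ _ _ LinearMap.id (by
        intro z hz
        rw [Submodule.mem_smul_pointwise_iff_exists] at hz
        obtain ⟨w, -, rfl⟩ := hz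
        rw [Submodule.mem_comap, Submodule.mem_smul_pointwise_iff_exists]
        exact ⟨y ^ N • w, trivial, by simp [pow_succ', mul_smul]⟩)
    have hf : Injective f := by
      rw [injective_iff_map_eq_zero]
      intro a
      induction a using Submodule.Quotient.induction_on with | _ a =>
      intro ha
      rw [Submodule.mapQ_apply, Submodule.Quotient.mk_eq_zero,
        Submodule.mem_smul_pointwise_iff_exists] at ha
      obtain ⟨w, -, hw⟩ := ha
      rw [Submodule.Quotient.mk_eq_zero, Submodule.mem_smul_pointwise_iff_exists]
      refine ⟨w, trivial, h.1 ?_⟩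
      simpa [pow_succ', mul_smul] using hw
    have hfg : Exact f g := by
      intro b
      induction b using Submodule.Quotient.induction_on with | _ b =>
      constructor
      · intro hb
        rw [Submodule.mapQ_apply, Submodule.Quotient.mk_eq_zero,
          Submodule.mem_smul_pointwise_iff_exists] at hb
        obtain ⟨w, -, hw⟩ := hb
        exact ⟨Submodule.Quotient.mk w, by rw [Submodule.mapQ_apply]; congr 1⟩
      · rintro ⟨a, ha⟩
        induction a using Submodule.Quotient.induction_on with | _ a =>
        rw [← ha]
        rw [Submodule.mapQ_apply, Submodule.mapQ_apply, Submodule.Quotient.mk_eq_zero,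
          Submodule.mem_smul_pointwise_iff_exists]
        exact ⟨a, trivial, rfl⟩
    have hg : Surjective g := by
      intro b
      induction b using Submodule.Quotient.induction_on with | _ b =>
      exact ⟨Submodule.Quotient.mk b, rfl⟩
    exact wr_ext hf hfg hg ih.2 h.2
end L1

section Loc
variable {A : Type*} [CommRing A] [IsLocalRing A] {M : Type*} [AddCommGroup M] [Module A M]
 [IsNoetherian A M]
open IsLocalRing

lemma wr_of_pow {y : A} {rs : List A} (hy : y ∈ maximalIdeal A)
    (hrs : ∀ r ∈ rs, r ∈ maximalIdeal A) {N : ℕ} (hN : 0 < N)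
    (h : IsWeaklyRegular M (y ^ N :: rs)) : IsWeaklyRegular M (y :: rs) := by
  have hp : (y ^ N :: rs).Perm (rs ++ [y ^ N]) := (List.perm_append_singleton _ _).symm
  have h1 := isWeaklyRegular_of_perm_of_subset_maximalIdeal h hp
    (by
      intro r hr
      rcases List.mem_cons.1 hr with rfl | hr
      · exact Ideal.pow_mem_of_mem _ hy _ hN
      · exact hrs r hr)
  rw [isWeaklyRegular_append_iff, isWeaklyRegular_singleton_iff] at h1
  have h2 : IsWeaklyRegular M (rs ++ [y]) := by
    rw [isWeaklyRegular_append_iff, isWeaklyRegular_singleton_iff]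
    refine ⟨h1.1, ?_⟩
    obtain ⟨n, rfl⟩ : ∃ n, N = n + 1 := ⟨N - 1, by omega⟩
    have := h1.2
    intro a b hab
    apply this
    simp only [pow_succ, mul_smul] at hab ⊢
    rw [hab]
  refine isWeaklyRegular_of_perm_of_subset_maximalIdeal h2 (List.perm_append_singleton _ _) ?_
  intro r hr
  rcases List.mem_append.1 hr with hr | hr
  · exact hrs r hr
  · simp at hr; exact hr ▸ hy

/-- raising elements to powers -/
lemma wr_map_pow {rs : List A} (hrs : ∀ r ∈ rs, r ∈ maximalIdeal A) (N : ℕ)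
    (h : IsWeaklyRegular M rs) : IsWeaklyRegular M (rs.map (· ^ N)) := by
  induction rs generalizing M with
  | nil => simp
  | cons y rs ih =>
    rw [List.map_cons]
    have h1 := wr_pow h N
    rw [isWeaklyRegular_cons_iff] at h1 ⊢
    exact ⟨h1.1, ih (fun r hr => hrs r (by simp [hr])) h1.2⟩

end Loc
end WAux

namespace WAux
open RingTheory.Sequence Function Pointwise

lemma mem_ofList_smul {A : Type*} [CommRing A] {M : Type*} [AddCommGroup M] [Module A M]
    (xs : List A) (m : M) : m ∈ Ideal.ofList xs • (⊤ : Submodule A M) ↔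
      ∃ b : Fin xs.length → M, m = ∑ i, xs.get i • b i := by
  induction xs generalizing m with
  | nil => simp
  | cons x xs ih =>
    rw [Ideal.ofList_cons_smul, Submodule.mem_sup]
    constructor
    · rintro ⟨y, hy, z, hz, rfl⟩
      rw [Submodule.mem_smul_pointwise_iff_exists] at hy
      obtain ⟨w, -, rfl⟩ := hy
      obtain ⟨b, rfl⟩ := (ih z).1 hz
      refine ⟨Fin.cons w b, ?_⟩
      simp [Fin.sum_univ_succ]
    · rintro ⟨b, rfl⟩
      refine ⟨x • b 0, Submodule.smul_mem_pointwise_smul _ _ _ trivial,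
        ∑ i, xs.get i • b i.succ, (ih _).2 ⟨_, rfl⟩, ?_⟩
      simp [Fin.sum_univ_succ]

lemma map_mem_ofList_smul {A : Type*} [CommRing A] {M N : Type*} [AddCommGroup M] [Module A M]
    [AddCommGroup N] [Module A N] (f : M →ₗ[A] N) {I : Ideal A} {m : M}
    (h : m ∈ I • (⊤ : Submodule A M)) : f m ∈ I • (⊤ : Submodule A N) :=
  Submodule.smul_top_le_comap_smul_top I f h

section L5
variable {p : ℕ} [Fact p.Prime] {A Ω : Type*} [CommRing A] [Field Ω] [IsAlgClosed Ω] [CharP Ω p]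
  [Algebra A Ω]

lemma exists_root_integral (E : ℕ) (a : ℕ → A) (b : Ω) (hb : IsIntegral A b) :
    ∃ t : Ω, IsIntegral A t ∧
      t ^ (p ^ E) - ∑ e ∈ Finset.range E, algebraMap A Ω (a e) * t ^ (p ^ e) = b := by
  classical
  have hp := (Fact.out : p.Prime)
  let B := integralClosure A Ω
  let q : Polynomial B := ∑ e ∈ Finset.range E,
    Polynomial.C (algebraMap A B (a e)) * Polynomial.X ^ (p ^ e) + Polynomial.C ⟨b, hb⟩
  let P : Polynomial B := Polynomial.X ^ (p ^ E) - q
  have hq : q.degree < (p ^ E : ℕ) := by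
    refine lt_of_le_of_lt (Polynomial.degree_add_le _ _) (max_lt ?_ ?_)
    · refine lt_of_le_of_lt (Polynomial.degree_sum_le _ _) ?_
      rw [Finset.sup_lt_iff (WithBot.bot_lt_coe _)]
      intro e he
      refine lt_of_le_of_lt (Polynomial.degree_C_mul_X_pow_le _ _) ?_
      exact_mod_cast Nat.pow_lt_pow_right hp.one_lt (Finset.mem_range.1 he)
    · refine lt_of_le_of_lt Polynomial.degree_C_le ?_
      exact_mod_cast pow_pos hp.pos E
  have hP : P.Monic := Polynomial.monic_X_pow_sub hq
  have hPd : P.natDegree = p ^ E := by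
    have : P.degree = (p ^ E : ℕ) := by
      rw [Polynomial.degree_sub_eq_left_of_degree_lt] <;> rw [Polynomial.degree_X_pow]
      exact hq
    exact Polynomial.natDegree_eq_of_degree_eq_some this
  obtain ⟨t, ht⟩ := IsAlgClosed.exists_eval₂_eq_zero_of_injective (algebraMap B Ω)
    (FaithfulSMul.algebraMap_injective B Ω) P (by
      intro h
      have := Polynomial.natDegree_eq_of_degree_eq_some h
      rw [hPd] at this
      exact absurd this (pow_pos hp.pos E).ne')
  refine ⟨t, ?_, ?_⟩
  · have : IsIntegral B t := ⟨P, hP, ht⟩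
    exact isIntegral_trans t this
  · simp only [P, q, Polynomial.eval₂_sub, Polynomial.eval₂_add, Polynomial.eval₂_finsetSum,
      Polynomial.eval₂_mul, Polynomial.eval₂_pow, Polynomial.eval₂_X, Polynomial.eval₂_C] at ht
    rw [sub_eq_zero] at ht
    rw [ht, add_comm, add_sub_assoc]
    have hh : algebraMap B Ω ⟨b, hb⟩ = b := rfl
    rw [hh]
    have h2 : ∀ x, algebraMap B Ω (algebraMap A B x) = algebraMap A Ω x := fun x => rfl
    simp only [h2, sub_self, add_zero]

lemma equational {ι : Type*} [Fintype ι] [Nonempty ι] (x : ι → A)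
    (hx : ∀ i, algebraMap A Ω (x i) ≠ 0) (E : ℕ) (a : ℕ → A) (r : Ω) (b : ι → Ω)
    (hb : ∀ i, IsIntegral A (b i))
    (h : r ^ (p ^ E) - ∑ e ∈ Finset.range E, algebraMap A Ω (a e * (∏ i, x i) ^ (p ^ E - p ^ e)) *
      r ^ (p ^ e) = ∑ i, algebraMap A Ω (x i ^ (p ^ E)) * b i) :
    ∃ t : ι → Ω, (∀ i, IsIntegral A (t i)) ∧ r = ∑ i, algebraMap A Ω (x i) * t i := by
  classical
  have hp := (Fact.out : p.Prime)
  let c : ι → A := fun j => ∏ i ∈ Finset.univ.erase j, x i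
  have hc : ∀ j, x j * c j = ∏ i, x i := fun j => Finset.mul_prod_erase _ _ (Finset.mem_univ j)
  set π := ∏ i, x i with hπ
  have hπ0 : algebraMap A Ω π ≠ 0 := by
    rw [hπ, map_prod]; exact Finset.prod_ne_zero_iff.2 fun i _ => hx i
  choose t ht1 ht2 using fun j =>
    exists_root_integral (p := p) E (fun e => a e * c j ^ (p ^ E - p ^ e)) (b j) (hb j)
  let T : Ω →+ Ω :=
    { toFun := fun u => u ^ (p ^ E) - ∑ e ∈ Finset.range E,
        algebraMap A Ω (a e * π ^ (p ^ E - p ^ e)) * u ^ (p ^ e)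
      map_zero' := by
        have : ∀ e, p ^ e ≠ 0 := fun e => (pow_pos hp.pos e).ne'
        simp [zero_pow (this _)]
      map_add' := by
        intro u v
        simp only [add_pow_char_pow, mul_add, Finset.sum_add_distrib]
        ring }
  have hT : ∀ u, T u = u ^ (p ^ E) - ∑ e ∈ Finset.range E,
        algebraMap A Ω (a e * π ^ (p ^ E - p ^ e)) * u ^ (p ^ e) := fun u => rfl
  have hTj : ∀ j, T (algebraMap A Ω (x j) * t j) = algebraMap A Ω (x j ^ (p ^ E)) * b j := by
    intro j
    rw [hT, ← ht2 j, mul_sub, Finset.mul_sum, mul_pow, ← map_pow]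
    congr 1
    refine Finset.sum_congr rfl fun e he => ?_
    have hle : p ^ e ≤ p ^ E := Nat.pow_le_pow_right hp.pos (Finset.mem_range.1 he).le
    obtain ⟨s, hs⟩ := Nat.exists_eq_add_of_le hle
    rw [hs, Nat.add_sub_cancel_left, ← hc j]
    simp only [map_mul, map_pow]
    ring
  have hw : T (r - ∑ j, algebraMap A Ω (x j) * t j) = 0 := by
    rw [map_sub, map_sum, hT r, h, sub_eq_zero]
    exact (Finset.sum_congr rfl fun j _ => hTj j).symm
  set w := r - ∑ j, algebraMap A Ω (x j) * t j with hwdef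
  let v := w / algebraMap A Ω π
  have hv : w = algebraMap A Ω π * v := by simp only [v]; field_simp
  have hveq : v ^ (p ^ E) - ∑ e ∈ Finset.range E, algebraMap A Ω (a e) * v ^ (p ^ e) = 0 := by
    have : algebraMap A Ω π ^ (p ^ E) *
      (v ^ (p ^ E) - ∑ e ∈ Finset.range E, algebraMap A Ω (a e) * v ^ (p ^ e)) = 0 := by
      rw [← hw, hT, hv, mul_sub, Finset.mul_sum, mul_pow]
      congr 1
      refine Finset.sum_congr rfl fun e he => ?_
      have hle : p ^ e ≤ p ^ E := Nat.pow_le_pow_right hp.pos (Finset.mem_range.1 he).le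
      obtain ⟨s, hs⟩ := Nat.exists_eq_add_of_le hle
      rw [hs, Nat.add_sub_cancel_left]
      simp only [map_mul, map_pow]
      ring
    exact (mul_eq_zero.1 this).resolve_left (pow_ne_zero _ hπ0)
  have hvint : IsIntegral A v := by
    let q : Polynomial A := ∑ e ∈ Finset.range E,
      Polynomial.C (a e) * Polynomial.X ^ (p ^ e)
    have hq : q.degree < (p ^ E : ℕ) := by
      refine lt_of_le_of_lt (Polynomial.degree_sum_le _ _) ?_
      rw [Finset.sup_lt_iff (WithBot.bot_lt_coe _)]
      intro e he
      refine lt_of_le_of_lt (Polynomial.degree_C_mul_X_pow_le _ _) ?_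
      exact_mod_cast Nat.pow_lt_pow_right hp.one_lt (Finset.mem_range.1 he)
    refine ⟨Polynomial.X ^ (p ^ E) - q, Polynomial.monic_X_pow_sub hq, ?_⟩
    simp only [q, Polynomial.eval₂_sub, Polynomial.eval₂_finsetSum,
      Polynomial.eval₂_mul, Polynomial.eval₂_pow, Polynomial.eval₂_X, Polynomial.eval₂_C]
    exact hveq
  obtain ⟨j₀⟩ := ‹Nonempty ι›
  refine ⟨fun j => t j + if j = j₀ then algebraMap A Ω (c j) * v else 0, ?_, ?_⟩
  · intro j
    refine (ht1 j).add ?_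
    split_ifs
    · exact isIntegral_algebraMap.mul hvint
    · exact isIntegral_zero
  · have : r = w + ∑ j, algebraMap A Ω (x j) * t j := by rw [hwdef]; ring
    rw [this, hv]
    simp only [mul_add, Finset.sum_add_distrib, mul_ite, mul_zero, Finset.sum_ite_eq',
      Finset.mem_univ, if_true]
    rw [← hc j₀, map_mul]; ring
end L5

section L4
variable {A : Type*} [CommRing A] [IsLocalRing A] 
open IsLocalRing

lemma mem_ofList_cons_smul {A : Type*} [CommRing A] {M : Type*} [AddCommGroup M] [Module A M]
    (x : A) (xs : List A) (m : M) : m ∈ Ideal.ofList (x :: xs) • (⊤ : Submodule A M) ↔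
      ∃ b : M, m - x • b ∈ Ideal.ofList xs • (⊤ : Submodule A M) := by
  rw [Ideal.ofList_cons_smul, Submodule.mem_sup]
  constructor
  · rintro ⟨y, hy, z, hz, rfl⟩
    rw [Submodule.mem_smul_pointwise_iff_exists] at hy
    obtain ⟨w, -, rfl⟩ := hy
    exact ⟨w, by simpa using hz⟩
  · rintro ⟨b, hb⟩
    exact ⟨x • b, Submodule.smul_mem_pointwise_smul _ _ _ trivial, _, hb, by simp⟩

lemma mem_ofList_quot {A : Type*} [CommRing A] {M : Type*} [AddCommGroup M] [Module A M]
    (x : A) (xs : List A) (m : M) :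
    (Submodule.Quotient.mk m : QuotSMulTop x M) ∈
      Ideal.ofList xs • (⊤ : Submodule A (QuotSMulTop x M)) ↔
     m ∈ Ideal.ofList (x :: xs) • (⊤ : Submodule A M) := by
  rw [mem_ofList_cons_smul]
  constructor
  · intro h
    have : Submodule.map (Submodule.mkQ (x • (⊤ : Submodule A M))) 
       (Ideal.ofList xs • (⊤ : Submodule A M)) = 
       Ideal.ofList xs • (⊤ : Submodule A (QuotSMulTop x M)) := by
      rw [Submodule.map_smul'', Submodule.map_top, Submodule.range_mkQ]
    rw [← this] at h
    obtain ⟨u, hu, hu2⟩ := h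
    rw [Submodule.mkQ_apply, Submodule.Quotient.eq,
      Submodule.mem_smul_pointwise_iff_exists] at hu2
    obtain ⟨b, -, hb⟩ := hu2
    refine ⟨-b, ?_⟩
    rw [smul_neg, hb]
    simpa using hu
  · rintro ⟨b, hb⟩
    have := map_mem_ofList_smul (Submodule.mkQ (x • (⊤ : Submodule A M))) hb
    have h0 : (Submodule.Quotient.mk (x • b) : QuotSMulTop x M) = 0 := 
      (Submodule.Quotient.mk_eq_zero _).2 (Submodule.smul_mem_pointwise_smul _ _ _ trivial)
    rw [map_sub, Submodule.mkQ_apply, Submodule.mkQ_apply, h0, sub_zero] at this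
    exact this

lemma colon {M : Type*} [AddCommGroup M] [Module A M] [IsNoetherian A M] (xs : List A)
    (hxs : ∀ x ∈ xs, x ∈ maximalIdeal A)
    (h : IsWeaklyRegular M xs) {n q : ℕ} (hnq : n ≤ q) (w : M)
    (hw : ∀ x ∈ xs, x ^ n • w ∈ Ideal.ofList (xs.map (· ^ q)) • (⊤ : Submodule A M)) :
    ∃ u : M, w - xs.prod ^ (q - n) • u ∈ Ideal.ofList (xs.map (· ^ q)) • (⊤ : Submodule A M) := by
  induction xs generalizing M with
  | nil => exact ⟨w, by simp⟩
  | cons x xs ih =>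
    have hx := hxs x (by simp)
    have hxs' : ∀ y ∈ xs, y ∈ maximalIdeal A := fun y hy => hxs y (by simp [hy])
    obtain ⟨b, hb⟩ := (mem_ofList_cons_smul _ _ _).1 (hw x (by simp))
    rcases Nat.eq_zero_or_pos q with rfl | hq
    · exact ⟨w, by simp⟩
    set I := Ideal.ofList (xs.map (· ^ q)) • (⊤ : Submodule A M) with hI
    have hreg : IsSMulRegular (M ⧸ I) x := by
      have h1 : IsWeaklyRegular M (x :: xs.map (· ^ q)) := by
        rw [isWeaklyRegular_cons_iff] at h ⊢
        exact ⟨h.1, wr_map_pow hxs' q h.2⟩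
      have h2 := isWeaklyRegular_of_perm_of_subset_maximalIdeal h1
        (List.perm_append_singleton x _).symm (by
          intro r hr
          rcases List.mem_cons.1 hr with rfl | hr
          · exact hx
          · obtain ⟨y, hy, rfl⟩ := List.mem_map.1 hr
            exact Ideal.pow_mem_of_mem _ (hxs' y hy) _ hq)
      rw [isWeaklyRegular_append_iff, isWeaklyRegular_singleton_iff] at h2
      exact h2.2
    have hcancel : ∀ k (m : M), x ^ k • m ∈ I → m ∈ I := fun k m hm =>
      mem_of_isSMulRegular_quotient_of_smul_mem (hreg.pow k) hm
    have hxq : x ^ q = x ^ n * x ^ (q - n) := by rw [← pow_add]; congr 1; omega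
    have hw' : w - x ^ (q - n) • b ∈ I := by
      apply hcancel n
      rwa [smul_sub, smul_smul, ← hxq]
    have key : ∀ y ∈ xs, ∃ c, y ^ n • b - x ^ n • c ∈ I := by
      intro y hy
      obtain ⟨c, hc⟩ := (mem_ofList_cons_smul _ _ _).1 (hw y (by simp [hy]))
      refine ⟨c, hcancel (q - n) _ ?_⟩
      have h1 := I.sub_mem hc (I.smul_mem (y ^ n) hw')
      convert h1 using 1
      simp only [hxq]
      module
    have hwr : IsWeaklyRegular (QuotSMulTop (x ^ n) M) xs :=
      ((isWeaklyRegular_cons_iff _ _ _).1 (wr_pow h n)).2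
    obtain ⟨u, hu⟩ := ih hxs' hwr (Submodule.Quotient.mk b) (by
      intro y hy
      rw [← Submodule.Quotient.mk_smul, mem_ofList_quot, mem_ofList_cons_smul]
      exact key y hy)
    induction u using Submodule.Quotient.induction_on with | _ u =>
    rw [← Submodule.Quotient.mk_smul, ← Submodule.Quotient.mk_sub, mem_ofList_quot,
      mem_ofList_cons_smul] at hu
    obtain ⟨d, hd⟩ := hu
    refine ⟨u, (mem_ofList_cons_smul _ _ _).2 ⟨d, ?_⟩⟩
    have h1 := I.add_mem hw' (I.smul_mem (x ^ (q - n)) hd)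
    convert h1 using 1
    simp only [hxq, List.prod_cons, mul_pow]
    module
end L4
end WAux

set_option linter.all false
namespace WAux
open RingTheory.Sequence Function Pointwise IsLocalRing
universe u

lemma exists_div {A : Type*} [CommRing A] {K B : Type*} [AddCommGroup K] [AddCommGroup B]
    [Module A K] [Module A B] {c : A} (hc : IsSMulRegular B c) (g : K →ₗ[A] B)
    (h : ∀ k, g k ∈ c • (⊤ : Submodule A B)) : ∃ β : K →ₗ[A] B, ∀ k, c • β k = g k := by
  have h' : ∀ k, ∃ b, c • b = g k := fun k => by
    obtain ⟨b, -, hb⟩ := (Submodule.mem_smul_pointwise_iff_exists _ _ _).1 (h k)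
    exact ⟨b, hb⟩
  choose β hβ using h'
  refine ⟨⟨⟨β, fun x y => hc ?_⟩, fun a x => hc ?_⟩, hβ⟩
  · simp only [smul_add, hβ, map_add]
  · simp only [RingHom.id_apply]
    rw [smul_comm, hβ, hβ, map_smul]

section defs
variable {A : Type u} [CommRing A] {B R : Type u} [AddCommGroup B] [Module A B]
  [AddCommGroup R] [Module A R]

def Fac (c : A) (f : R →ₗ[A] B) : Prop :=
  ∃ (n : ℕ) (φ : R →ₗ[A] (Fin n → A)) (ψ : (Fin n → A) →ₗ[A] B), ψ ∘ₗ φ = c • f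

variable (B) in
def AF (y : A) : Prop :=
  ∀ (R : Type u) [AddCommGroup R] [Module A R] [Module.Finite A R] (f : R →ₗ[A] B),
    ∃ N : ℕ, Fac (y ^ N) f

lemma Fac.mul {c : A} {f : R →ₗ[A] B} (h : Fac c f) (a : A) : Fac (a * c) f := by
  obtain ⟨n, φ, ψ, h⟩ := h
  exact ⟨n, φ, a • ψ, by rw [LinearMap.smul_comp, h, mul_smul]⟩

lemma Fac.pow_le {y : A} {f : R →ₗ[A] B} {N M : ℕ} (h : Fac (y ^ N) f) (hNM : N ≤ M) :
    Fac (y ^ M) f := by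
  obtain ⟨k, rfl⟩ := Nat.exists_eq_add_of_le' hNM
  rw [pow_add]; exact h.mul _
end defs

section depthker
variable {A : Type u} [CommRing A] {G C : Type u} [AddCommGroup G] [Module A G]
  [AddCommGroup C] [Module A C]

lemma depth_ker (χ : G →ₗ[A] C) (hχ : Surjective χ) (c : A) (hcC : ∀ x : C, c • x = 0)
    (xs : List A) (hG : IsWeaklyRegular G (c :: xs)) (hC : IsWeaklyRegular C xs) :
    IsWeaklyRegular (LinearMap.ker χ) (c :: xs) := by
  rw [isWeaklyRegular_cons_iff] at hG ⊢
  refine ⟨hG.1.submodule _ _, ?_⟩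
  let χb : QuotSMulTop c G →ₗ[A] C := Submodule.liftQ _ χ (by
    intro z hz
    obtain ⟨w, -, rfl⟩ := (Submodule.mem_smul_pointwise_iff_exists _ _ _).1 hz
    simp [hcC])
  have hχb : Surjective χb := fun x => by
    obtain ⟨z, rfl⟩ := hχ x
    exact ⟨Submodule.Quotient.mk z, rfl⟩
  have hK : IsWeaklyRegular (LinearMap.ker χb) xs :=
    wr_ker (f := (LinearMap.ker χb).subtype) (g := χb) (Submodule.injective_subtype _)
      (LinearMap.exact_subtype_ker_map χb) hχb hG.2 hC
  let f₀ : G →ₗ[A] LinearMap.ker χ := LinearMap.codRestrict _ (LinearMap.lsmul A G c)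
    (by intro z; simp [hcC])
  let f : (G ⧸ LinearMap.ker χ) →ₗ[A] QuotSMulTop c (LinearMap.ker χ) :=
    Submodule.liftQ _ (Submodule.mkQ _ ∘ₗ f₀) (by
      intro z hz
      rw [LinearMap.mem_ker, LinearMap.comp_apply, Submodule.mkQ_apply,
        Submodule.Quotient.mk_eq_zero, Submodule.mem_smul_pointwise_iff_exists]
      exact ⟨⟨z, hz⟩, trivial, rfl⟩)
  let g : QuotSMulTop c (LinearMap.ker χ) →ₗ[A] LinearMap.ker χb :=
    LinearMap.codRestrict _ (QuotSMulTop.map c (LinearMap.ker χ).subtype) (by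
      intro z
      induction z using Submodule.Quotient.induction_on with | _ z =>
      exact z.2)
  have hC' : IsWeaklyRegular (G ⧸ LinearMap.ker χ) xs :=
    ((χ.quotKerEquivOfSurjective hχ).isWeaklyRegular_congr xs).2 hC
  refine wr_ext (f := f) (g := g) ?_ ?_ ?_ hC' hK
  · rw [injective_iff_map_eq_zero]
    intro a
    induction a using Submodule.Quotient.induction_on with | _ a =>
    intro ha
    have ha : (Submodule.Quotient.mk (f₀ a) : QuotSMulTop c (LinearMap.ker χ)) = 0 := ha
    rw [Submodule.Quotient.mk_eq_zero, Submodule.mem_smul_pointwise_iff_exists] at ha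
    obtain ⟨w, -, hw⟩ := ha
    rw [Submodule.Quotient.mk_eq_zero]
    have : c • (w : G) = c • a := congrArg Subtype.val hw
    rw [← hG.1 this]; exact w.2
  · intro b
    induction b using Submodule.Quotient.induction_on with | _ b =>
    constructor
    · intro hb
      have hb : (Submodule.Quotient.mk (b : G) : QuotSMulTop c G) = 0 := congrArg Subtype.val hb
      rw [Submodule.Quotient.mk_eq_zero, Submodule.mem_smul_pointwise_iff_exists] at hb
      obtain ⟨w, -, hw⟩ := hb
      refine ⟨Submodule.Quotient.mk w, ?_⟩
      have : f₀ w = b := Subtype.ext hw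
      rw [← this]; rfl
    · rintro ⟨a, ha⟩
      induction a using Submodule.Quotient.induction_on with | _ a =>
      rw [← ha]
      apply Subtype.ext
      change (Submodule.Quotient.mk (c • a) : QuotSMulTop c G) = 0
      rw [Submodule.Quotient.mk_eq_zero]
      exact Submodule.smul_mem_pointwise_smul _ _ _ trivial
  · rintro ⟨z, hz⟩
    induction z using Submodule.Quotient.induction_on with | _ z =>
    exact ⟨Submodule.Quotient.mk ⟨z, hz⟩, rfl⟩
end depthker

section AFquot
variable {A : Type u} [CommRing A] [IsNoetherianRing A] {B : Type u} [AddCommGroup B] [Module A B]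

lemma AF_quot {x c : A} (hx : AF B x) (hc : IsSMulRegular B c) :
    AF (A := A ⧸ Ideal.span {c}) (QuotSMulTop c B) (Ideal.Quotient.mk _ x) := by
  intro R₁ _ _ _ f₁
  letI : Module A R₁ := Module.compHom R₁ (algebraMap A (A ⧸ Ideal.span {c}))
  haveI : IsScalarTower A (A ⧸ Ideal.span {c}) R₁ := IsScalarTower.of_algebraMap_smul fun a r => rfl
  haveI : Module.Finite A R₁ := Module.Finite.trans (A ⧸ Ideal.span {c}) R₁
  have hcA : algebraMap A (A ⧸ Ideal.span {c}) c = 0 :=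
    Ideal.Quotient.eq_zero_iff_mem.2 (Ideal.mem_span_singleton_self c)
  obtain ⟨n, s, hs⟩ := Module.Finite.exists_fin' A R₁
  obtain ⟨h, hh⟩ := Module.projective_lifting_property (Submodule.mkQ (c • (⊤ : Submodule A B)))
    ((f₁.restrictScalars A) ∘ₗ s) (Submodule.mkQ_surjective _)
  have hh' : ∀ v, (Submodule.Quotient.mk (h v) : QuotSMulTop c B) = f₁ (s v) := fun v =>
    LinearMap.congr_fun hh v
  obtain ⟨β, hβ⟩ := exists_div hc (h ∘ₗ (LinearMap.ker s).subtype) (by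
    intro k
    rw [← Submodule.Quotient.mk_eq_zero]
    have := hh' k.1
    rw [LinearMap.mem_ker.1 k.2, map_zero] at this
    exact this)
  let R' : Submodule A B := LinearMap.range h ⊔ LinearMap.range β
  haveI : Module.Finite A R' := by
    have h1 : (LinearMap.range h).FG := Module.Finite.iff_fg.1 inferInstance
    have h2 : (LinearMap.range β).FG := Module.Finite.iff_fg.1 inferInstance
    exact Module.Finite.iff_fg.2 (h1.sup h2)
  obtain ⟨M, m, φ, ψ, hφψ⟩ := hx R' R'.subtype
  let h' : (Fin n → A) →ₗ[A] R' := h.codRestrict R' fun v => Submodule.mem_sup_left ⟨v, rfl⟩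
  let red : (Fin m → A) →ₗ[A] (Fin m → A ⧸ Ideal.span {c}) :=
    LinearMap.compLeft (Algebra.linearMap A (A ⧸ Ideal.span {c})) (Fin m)
  have hker : LinearMap.ker s ≤ LinearMap.ker (red ∘ₗ φ ∘ₗ h') := by
    intro k hk
    have : h' k = c • (⟨β ⟨k, hk⟩, Submodule.mem_sup_right ⟨_, rfl⟩⟩ : R') := 
      Subtype.ext (hβ ⟨k, hk⟩).symm
    rw [LinearMap.mem_ker, LinearMap.comp_apply, LinearMap.comp_apply, this, map_smul]
    ext i
    simp [red, hcA]
  let φ₀ : R₁ →ₗ[A] (Fin m → A ⧸ Ideal.span {c}) :=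
    (Submodule.liftQ _ (red ∘ₗ φ ∘ₗ h') hker) ∘ₗ
      (s.quotKerEquivOfSurjective hs).symm.toLinearMap
  have hφ₀ : ∀ v, φ₀ (s v) = red (φ (h' v)) := by
    intro v
    have : (s.quotKerEquivOfSurjective hs).symm (s v) = Submodule.Quotient.mk v := by
      rw [LinearEquiv.symm_apply_eq]; rfl
    simp only [φ₀, LinearMap.comp_apply, LinearEquiv.coe_coe, this]
    rfl
  let φ₁ : R₁ →ₗ[A ⧸ Ideal.span {c}] (Fin m → A ⧸ Ideal.span {c}) :=
    LinearMap.extendScalarsOfSurjective Ideal.Quotient.mk_surjective φ₀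
  let ψ₁ : (Fin m → A ⧸ Ideal.span {c}) →ₗ[A ⧸ Ideal.span {c}] QuotSMulTop c B :=
    (Pi.basisFun (A ⧸ Ideal.span {c}) (Fin m)).constr (A ⧸ Ideal.span {c}) 
      (fun i => Submodule.Quotient.mk (ψ (Pi.single i 1)))
  have hψ₁ : ∀ v, ψ₁ (red v) = Submodule.Quotient.mk (ψ v) := by
    have : (ψ₁.restrictScalars A) ∘ₗ red = Submodule.mkQ _ ∘ₗ ψ := by
      refine (Pi.basisFun A (Fin m)).ext fun i => ?_
      have h1 : red (Pi.basisFun A (Fin m) i) = Pi.basisFun (A ⧸ Ideal.span {c}) (Fin m) i := by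
        ext j
        by_cases hij : j = i <;> simp [red, Pi.single_apply, hij]
      simp only [LinearMap.comp_apply, LinearMap.restrictScalars_apply, h1, ψ₁,
        Module.Basis.constr_basis]
      simp
    exact fun v => LinearMap.congr_fun this v
  refine ⟨M, m, φ₁, ψ₁, ?_⟩
  ext r
  obtain ⟨v, rfl⟩ := hs r
  have e1 : φ₁ (s v) = red (φ (h' v)) := hφ₀ v
  have e2 : ψ (φ (h' v)) = x ^ M • h v := LinearMap.congr_fun hφψ (h' v)
  rw [LinearMap.comp_apply, e1, hψ₁, e2, LinearMap.smul_apply, ← hh' v, ← map_pow]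
  rfl
end AFquot
end WAux

set_option linter.all false
namespace WAux
open RingTheory.Sequence Function Pointwise IsLocalRing
universe u

lemma wr_free {A : Type*} [CommRing A] {M : Type*} [AddCommGroup M] [Module A M] [Module.Flat A M]
    {xs : List A} (h : IsWeaklyRegular A xs) : IsWeaklyRegular M xs :=
  ((TensorProduct.rid A M).isWeaklyRegular_congr xs).1 (h.isWeaklyRegular_lTensor (M₂ := M))

lemma wr_quot {A : Type*} [CommRing A] {c : A} {xs : List A} (h : IsWeaklyRegular A (c :: xs)) :
    IsWeaklyRegular (A ⧸ Ideal.span {c}) (xs.map (Ideal.Quotient.mk (Ideal.span {c}))) := by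
  have h1 := ((isWeaklyRegular_cons_iff _ _ _).1 h).2
  have h2 : IsWeaklyRegular (A ⧸ Ideal.span {c}) xs :=
    ((QuotSMulTop.equivQuotTensor c A ≪≫ₗ TensorProduct.rid A _).isWeaklyRegular_congr xs).1 h1
  exact (isWeaklyRegular_map_algebraMap_iff (A ⧸ Ideal.span {c}) (A ⧸ Ideal.span {c}) xs).2 h2

theorem lemC (t : ℕ) : ∀ (A : Type u) [CommRing A] [IsLocalRing A] [IsNoetherianRing A]
    (B : Type u) [AddCommGroup B] [Module A B] (xs : List A) (_ : xs.length = t)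
    (_ : ∀ x ∈ xs, x ∈ maximalIdeal A)
    (_ : IsWeaklyRegular A xs) (_ : IsWeaklyRegular B xs) (_ : ∀ x ∈ xs, AF B x)
    (R : Type u) [AddCommGroup R] [Module A R] [Module.Finite A R] (f : R →ₗ[A] B),
    ∃ (C : Type u) (_ : AddCommGroup C) (_ : Module A C) (_ : Module.Finite A C)
      (α : R →ₗ[A] C) (β : C →ₗ[A] B), β ∘ₗ α = f ∧ IsWeaklyRegular C xs := by
  induction t with
  | zero =>
    intro A _ _ _ B _ _ xs hl _ _ _ _ R _ _ _ f
    obtain rfl := List.length_eq_zero_iff.1 hl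
    exact ⟨R, _, _, ‹_›, LinearMap.id, f, rfl, by simp⟩
  | succ t ih =>
    intro A _ _ _ B _ _ xs hl hm hA hB hAF R _ _ _ f
    obtain ⟨y, xs, rfl⟩ : ∃ y ys, xs = y :: ys := List.exists_cons_of_length_eq_add_one hl
    have hym : y ∈ maximalIdeal A := hm y (by simp)
    obtain ⟨N₀, hN₀⟩ := hAF y (by simp) R f
    have hN := hN₀.pow_le (Nat.le_succ N₀)
    set N := N₀.succ with hNdef
    obtain ⟨n, φ, ψ, hφψ⟩ := hN
    set c := y ^ N with hc
    have hcm : c ∈ maximalIdeal A := Ideal.pow_mem_of_mem _ hym _ (Nat.succ_pos _)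
    have hAc : IsWeaklyRegular A (c :: xs) := wr_pow hA N
    have hBc : IsWeaklyRegular B (c :: xs) := wr_pow hB N
    have hcB := ((isWeaklyRegular_cons_iff _ _ _).1 hBc).1
    have hne : Ideal.span {c} ≠ ⊤ := by
      intro h
      have : Ideal.span {c} ≤ maximalIdeal A := by
        rw [Ideal.span_singleton_le_iff_mem]; exact hcm
      rw [h] at this
      exact (maximalIdeal.isMaximal A).ne_top (top_le_iff.1 this)
    haveI : Nontrivial (A ⧸ Ideal.span {c}) := Ideal.Quotient.nontrivial_iff.2 hne
    haveI : IsLocalRing (A ⧸ Ideal.span {c}) :=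
      IsLocalRing.of_surjective' (Ideal.Quotient.mk _) Ideal.Quotient.mk_surjective
    have hloc := IsLocalHom.of_surjective (Ideal.Quotient.mk (Ideal.span {c})) Ideal.Quotient.mk_surjective
    let g₁ : (Fin n → A) →ₗ[A] QuotSMulTop c B := Submodule.mkQ _ ∘ₗ ψ
    let R₁ : Submodule (A ⧸ Ideal.span {c}) (QuotSMulTop c B) :=
      Submodule.span _ (Set.range fun i => g₁ (Pi.single i 1))
    haveI : Module.Finite (A ⧸ Ideal.span {c}) R₁ :=
      Module.Finite.iff_fg.2 (Submodule.fg_span (Set.finite_range _))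
    obtain ⟨C₁, _, _, _, α₁, β₁, hαβ, hC₁⟩ := ih (A ⧸ Ideal.span {c}) (QuotSMulTop c B)
      (xs.map (Ideal.Quotient.mk (Ideal.span {c}))) (by simpa using hl)
      (by
        intro x hx
        obtain ⟨z, hz, rfl⟩ := List.mem_map.1 hx
        rw [mem_maximalIdeal, mem_nonunits_iff]
        intro hu
        exact (mem_maximalIdeal z).1 (hm z (by simp [hz])) (hloc.map_nonunit _ hu))
      (wr_quot hAc) ((isWeaklyRegular_cons_iff' _ _ _).1 hBc).2
      (by
        intro x hx
        obtain ⟨z, hz, rfl⟩ := List.mem_map.1 hx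
        exact AF_quot (hAF z (by simp [hz])) hcB)
      R₁ R₁.subtype
    letI : Module A C₁ := Module.compHom C₁ (algebraMap A (A ⧸ Ideal.span {c}))
    haveI : IsScalarTower A (A ⧸ Ideal.span {c}) C₁ :=
      IsScalarTower.of_algebraMap_smul fun a r => rfl
    haveI : Module.Finite A C₁ := Module.Finite.trans (A ⧸ Ideal.span {c}) C₁
    have hcC : ∀ x : C₁, c • x = 0 := by
      intro x
      rw [← algebraMap_smul (A ⧸ Ideal.span {c}) c x]
      have : algebraMap A (A ⧸ Ideal.span {c}) c = 0 :=
        Ideal.Quotient.eq_zero_iff_mem.2 (Ideal.mem_span_singleton_self c)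
      rw [this, zero_smul]
    have hC₁' : IsWeaklyRegular C₁ xs :=
      (isWeaklyRegular_map_algebraMap_iff (A ⧸ Ideal.span {c}) C₁ xs).1 hC₁
    have hgR : ∀ v, g₁ v ∈ R₁.restrictScalars A := by
      intro v
      have : v = ∑ i, v i • (Pi.single i 1 : Fin n → A) := by
        simpa using ((Pi.basisFun A (Fin n)).sum_repr v).symm
      rw [this, map_sum]
      refine Submodule.sum_mem _ fun i _ => ?_
      rw [map_smul]
      exact Submodule.smul_mem _ _ (Submodule.subset_span ⟨i, rfl⟩)
    let e₁ : (Fin n → A) →ₗ[A] R₁ := LinearMap.codRestrict (R₁.restrictScalars A) g₁ hgR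
    let γ : (Fin n → A) →ₗ[A] C₁ := (α₁.restrictScalars A) ∘ₗ e₁
    have hγ : ∀ v, β₁ (γ v) = Submodule.Quotient.mk (ψ v) := fun v =>
      LinearMap.congr_fun hαβ (e₁ v)
    obtain ⟨m, s, hs⟩ := Module.Finite.exists_fin' A C₁
    obtain ⟨ψ', hψ'⟩ := Module.projective_lifting_property
      (Submodule.mkQ (c • (⊤ : Submodule A B)))
      ((β₁.restrictScalars A) ∘ₗ s) (Submodule.mkQ_surjective _)
    have hψ'' : ∀ v, (Submodule.Quotient.mk (ψ' v) : QuotSMulTop c B) = β₁ (s v) := fun v =>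
      LinearMap.congr_fun hψ' v
    let χ : ((Fin n → A) × (Fin m → A)) →ₗ[A] C₁ := γ.coprod s
    have hχ : Surjective χ := by
      intro z
      obtain ⟨v, rfl⟩ := hs z
      exact ⟨(0, v), by simp [χ]⟩
    let Ψ : ((Fin n → A) × (Fin m → A)) →ₗ[A] B := ψ.coprod ψ'
    have hΨ : ∀ z, (Submodule.Quotient.mk (Ψ z) : QuotSMulTop c B) = β₁ (χ z) := by
      intro z
      simp only [Ψ, χ, LinearMap.coprod_apply, Submodule.Quotient.mk_add, map_add, hγ, hψ'']
    obtain ⟨β, hβ⟩ := exists_div hcB (Ψ ∘ₗ (LinearMap.ker χ).subtype) (by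
      intro k
      rw [← Submodule.Quotient.mk_eq_zero]
      have := hΨ k.1
      rw [LinearMap.mem_ker.1 k.2, map_zero] at this
      exact this)
    let α : R →ₗ[A] LinearMap.ker χ := LinearMap.codRestrict _
      (LinearMap.inl A (Fin n → A) (Fin m → A) ∘ₗ φ) (by
        intro r
        have h1 : e₁ (φ r) = 0 := by
          apply Subtype.ext
          change (Submodule.Quotient.mk (ψ (φ r)) : QuotSMulTop c B) = 0
          have : ψ (φ r) = c • f r := LinearMap.congr_fun hφψ r
          rw [this, Submodule.Quotient.mk_eq_zero]
          exact Submodule.smul_mem_pointwise_smul _ _ _ trivial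
        simp [χ, γ, h1])
    refine ⟨LinearMap.ker χ, _, _, inferInstance, α, β, ?_, ?_⟩
    · ext r
      apply hcB
      change c • β (α r) = c • f r
      rw [hβ]
      have : ψ (φ r) = c • f r := LinearMap.congr_fun hφψ r
      change ψ (φ r) + ψ' 0 = c • f r
      rw [map_zero, add_zero, this]
    · have := depth_ker χ hχ c hcC xs (wr_free hAc) hC₁'
      exact wr_of_pow hym (fun r hr => hm r (by simp [hr])) (Nat.succ_pos _) this
end WAux

set_option linter.all false
namespace WAux
open RingTheory.Sequence Function Pointwise IsLocalRing
universe u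

lemma mem_ofList_map_smul {A : Type*} [CommRing A] {M : Type*} [AddCommGroup M] [Module A M]
    (g : A → A) (xs : List A) (m : M) : m ∈ Ideal.ofList (xs.map g) • (⊤ : Submodule A M) ↔
      ∃ b : Fin xs.length → M, m = ∑ i, g (xs.get i) • b i := by
  induction xs generalizing m with
  | nil => simp
  | cons x xs ih =>
    rw [List.map_cons, mem_ofList_cons_smul]
    constructor
    · rintro ⟨w, hw⟩
      obtain ⟨b, hb⟩ := (ih _).1 hw
      refine ⟨Fin.cons w b, ?_⟩
      rw [sub_eq_iff_eq_add'] at hb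
      rw [hb]
      exact (Fin.sum_univ_succ (fun i : Fin (xs.length+1) => g ((x::xs).get i) • (Fin.cons w b : Fin (xs.length+1) → M) i)).symm
    · rintro ⟨b, hb⟩
      refine ⟨b 0, (ih _).2 ⟨fun i => b i.succ, ?_⟩⟩
      rw [hb, sub_eq_iff_eq_add']
      exact (Fin.sum_univ_succ (fun i : Fin (xs.length+1) => g ((x::xs).get i) • b i))

lemma exists_mem_span {A C : Type*} [CommRing A] [AddCommGroup C] [Module A C] [IsNoetherian A C]
    (v : ℕ → C) : ∃ (k : ℕ) (c : ℕ → A), v k = ∑ i ∈ Finset.range k, c i • v i := by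
  classical
  let S : ℕ →o Submodule A C :=
    ⟨fun k => Submodule.span A (v '' (Finset.range k : Set ℕ)), fun a b hab =>
      Submodule.span_mono (Set.image_mono (by simpa using hab))⟩
  obtain ⟨k, hk⟩ := monotone_stabilizes_iff_noetherian.2 ‹IsNoetherian A C› S
  have h1 : v k ∈ S (k + 1) := Submodule.subset_span ⟨k, by simp, rfl⟩
  rw [← hk (k + 1) (Nat.le_succ k)] at h1
  obtain ⟨c, hc⟩ := (Submodule.mem_span_image_finset_iff_exists_fun A).1 h1
  refine ⟨k, fun i => if h : i ∈ Finset.range k then c ⟨i, h⟩ else 0, ?_⟩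
  rw [← hc]
  refine Eq.trans ?_ (Finset.sum_coe_sort (Finset.range k) (fun i => (if h : i ∈ Finset.range k then c ⟨i, h⟩ else 0) • v i))
  refine Finset.sum_congr rfl fun i _ => ?_
  rw [dif_pos i.2]

lemma core {p : ℕ} [Fact p.Prime] {A : Type*} [CommRing A] [IsLocalRing A] {C : Type*}
    [AddCommGroup C] [Module A C]
    [IsNoetherian A C] (xs : List A) (hxs : ∀ x ∈ xs, x ∈ maximalIdeal A)
    (h : IsWeaklyRegular C xs) (e₀ : ℕ) (w : ℕ → C)
    (hw : ∀ e, e₀ ≤ e → ∀ x ∈ xs, x ^ (p ^ e₀) • w e ∈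
      Ideal.ofList (xs.map (· ^ (p ^ e))) • (⊤ : Submodule A C)) :
    ∃ (E : ℕ) (a : ℕ → A), w E - ∑ e ∈ Finset.range E, (a e * xs.prod ^ (p ^ E - p ^ e)) • w e ∈
      Ideal.ofList (xs.map (· ^ (p ^ E))) • (⊤ : Submodule A C) := by
  have hp := (Fact.out : p.Prime)
  have hmono : ∀ {a b}, a ≤ b → p ^ a ≤ p ^ b := fun hab => Nat.pow_le_pow_right hp.pos hab
  have hu : ∀ i, ∃ u : C, w (e₀ + i) - xs.prod ^ (p ^ (e₀ + i) - p ^ e₀) • u ∈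
      Ideal.ofList (xs.map (· ^ (p ^ (e₀ + i)))) • (⊤ : Submodule A C) := fun i =>
    colon xs hxs h (hmono (Nat.le_add_right _ _)) _ (hw _ (Nat.le_add_right _ _))
  choose u hu using hu
  obtain ⟨k, c, hc⟩ := exists_mem_span (A := A) u
  refine ⟨e₀ + k, fun e => if e < e₀ then 0 else c (e - e₀), ?_⟩
  set J := Ideal.ofList (xs.map (· ^ (p ^ (e₀ + k)))) • (⊤ : Submodule A C) with hJ
  rw [Finset.sum_range_add]
  have z : ∑ e ∈ Finset.range e₀, ((if e < e₀ then 0 else c (e - e₀)) *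
      xs.prod ^ (p ^ (e₀ + k) - p ^ e)) • w e = 0 := by
    refine Finset.sum_eq_zero fun e he => ?_
    rw [if_pos (Finset.mem_range.1 he), zero_mul, zero_smul]
  rw [z, zero_add]
  have e1 := hu k
  rw [hc, Finset.smul_sum] at e1
  have e2 : ∀ i ∈ Finset.range k, c i • (xs.prod ^ (p ^ (e₀ + k) - p ^ (e₀ + i)) •
      (w (e₀ + i) - xs.prod ^ (p ^ (e₀ + i) - p ^ e₀) • u i)) ∈ J := by
    intro i hi
    refine J.smul_mem _ ?_
    have hik := (Finset.mem_range.1 hi).le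
    have hQ : p ^ (e₀ + i) ≤ p ^ (e₀ + k) := hmono (by omega)
    obtain ⟨b, hb⟩ := (mem_ofList_map_smul _ _ _).1 (hu i)
    rw [hb, hJ, Finset.smul_sum]
    refine Submodule.sum_mem _ fun j _ => ?_
    obtain ⟨d, hd⟩ : xs.get j ∣ xs.prod := List.dvd_prod (List.get_mem _ _)
    have : xs.prod ^ (p ^ (e₀ + k) - p ^ (e₀ + i)) • xs.get j ^ p ^ (e₀ + i) • b j
      = xs.get j ^ (p ^ (e₀ + k)) • (d ^ (p ^ (e₀ + k) - p ^ (e₀ + i)) • b j) := by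
      rw [smul_smul, smul_smul]
      congr 1
      rw [hd, mul_pow]
      obtain ⟨s, hs⟩ := Nat.exists_eq_add_of_le hQ
      rw [hs, Nat.add_sub_cancel_left]; ring
    rw [this]
    refine Submodule.smul_mem_smul (Ideal.subset_span ?_) trivial
    exact List.mem_map.2 ⟨_, List.get_mem _ _, rfl⟩
  have e3 := J.sub_mem e1 (Submodule.sum_mem J e2)
  convert e3 using 1
  rw [sub_sub, ← Finset.sum_add_distrib]
  congr 1
  refine Finset.sum_congr rfl fun i hi => ?_
  have hik := (Finset.mem_range.1 hi).le
  have hQ : p ^ (e₀ + i) ≤ p ^ (e₀ + k) := hmono (by omega)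
  have hQ' : p ^ e₀ ≤ p ^ (e₀ + i) := hmono (by omega)
  have : xs.prod ^ (p ^ (e₀ + k) - p ^ e₀) = xs.prod ^ (p ^ (e₀ + k) - p ^ (e₀ + i)) *
    xs.prod ^ (p ^ (e₀ + i) - p ^ e₀) := by rw [← pow_add]; congr 1; omega
  rw [this]
  simp only [show ¬ (e₀ + i < e₀) by omega, if_false, Nat.add_sub_cancel_left]
  module

section L6
variable (p : ℕ) [Fact p.Prime] {A Ω : Type u} [CommRing A] [IsLocalRing A] [IsNoetherianRing A]
  [Field Ω] [IsAlgClosed Ω] [Algebra A Ω] [FaithfulSMul A Ω]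

lemma wrB_step [CharP Ω p] (xs : List A) (hne : xs ≠ []) (y : A) (hxs : ∀ x ∈ xs, x ∈ maximalIdeal A)
    (hx0 : ∀ x ∈ xs, x ≠ 0)
    (hA : IsWeaklyRegular A (xs ++ [y])) (hB : IsWeaklyRegular (integralClosure A Ω) xs)
    (hy : y ∈ maximalIdeal A)
    (hAF : ∀ x ∈ xs, AF (integralClosure A Ω) x)
    (r : integralClosure A Ω) 
    (hr : y • r ∈ Ideal.ofList xs • (⊤ : Submodule A (integralClosure A Ω))) :
    r ∈ Ideal.ofList xs • (⊤ : Submodule A (integralClosure A Ω)) := by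
  classical
  have hp := (Fact.out : p.Prime)
  haveI : CharP (integralClosure A Ω) p :=
    (RingHom.charP_iff (algebraMap (integralClosure A Ω) Ω)
      (FaithfulSMul.algebraMap_injective _ _) p).2 inferInstance
  obtain ⟨s, hs⟩ := (mem_ofList_smul _ _).1 hr
  let R₀ : Subalgebra A (integralClosure A Ω) := Algebra.adjoin A (insert r (Set.range s))
  let R : Submodule A (integralClosure A Ω) := Subalgebra.toSubmodule R₀
  have hRfg : R.FG := fg_adjoin_of_finite (Set.toFinite _)
    (fun x _ => Algebra.IsIntegral.isIntegral x)
  haveI : Module.Finite A R := Module.Finite.iff_fg.2 hRfg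
  have hrR : ∀ k, r ^ k ∈ R := fun k => R₀.pow_mem (Algebra.subset_adjoin (Set.mem_insert _ _)) k
  have hsR : ∀ i k, s i ^ k ∈ R := fun i k =>
    R₀.pow_mem (Algebra.subset_adjoin (Set.mem_insert_of_mem _ ⟨i, rfl⟩)) k
  have hN : ∀ j : Fin xs.length, ∃ N, Fac (xs.get j ^ N) R.subtype := fun j =>
    hAF _ (List.get_mem _ _) R R.subtype
  choose N hN using hN
  let e₀ := ∑ j, N j
  have hFac : ∀ j, Fac (xs.get j ^ (p ^ e₀)) R.subtype := fun j =>
    (hN j).pow_le ((Finset.single_le_sum (fun _ _ => Nat.zero_le _) (Finset.mem_univ j)).trans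
      (Nat.lt_pow_self hp.one_lt).le)
  choose m φ ψ hφψ using hFac
  let R' : Submodule A (integralClosure A Ω) := R ⊔ ⨆ j, LinearMap.range (ψ j)
  haveI : Module.Finite A R' := Module.Finite.iff_fg.2
    (hRfg.sup (Submodule.fg_iSup _ fun j => Module.Finite.iff_fg.1 inferInstance))
  have hRR' : R ≤ R' := le_sup_left
  let ψ' : ∀ j, (Fin (m j) → A) →ₗ[A] R' := fun j => (ψ j).codRestrict R' fun v =>
    (le_sup_right : _ ≤ R') ((le_iSup (fun j => LinearMap.range (ψ j)) j) ⟨v, rfl⟩)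
  obtain ⟨C, _, _, _, α, β, hαβ, hC⟩ := lemC xs.length A (integralClosure A Ω) xs rfl hxs
    ((isWeaklyRegular_append_iff _ _ _).1 hA).1 hB hAF R' R'.subtype
  have key : ∀ e j, xs.get j ^ (p ^ e₀) • (⟨r ^ (p ^ e), hRR' (hrR _)⟩ : R') ∈
      Ideal.ofList (xs.map (· ^ (p ^ e))) • (⊤ : Submodule A R') := by
    intro e j
    have h1 : (y ^ (p ^ e)) • (⟨r ^ (p ^ e), hrR _⟩ : R) =
        ∑ i, (xs.get i ^ (p ^ e)) • (⟨s i ^ (p ^ e), hsR i _⟩ : R) := by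
      apply Subtype.ext
      have := congrArg (· ^ (p ^ e)) hs
      simp only [smul_pow, sum_pow_char_pow] at this
      simpa using this
    have h2 : φ j ⟨r ^ (p ^ e), hrR _⟩ ∈ Ideal.ofList (xs.map (· ^ (p ^ e))) •
        (⊤ : Submodule A (Fin (m j) → A)) := by
      have hw : IsWeaklyRegular (Fin (m j) → A) ((xs ++ [y]).map (· ^ (p ^ e))) :=
        wr_map_pow (by
          intro x hx
          rcases List.mem_append.1 hx with hx | hx
          · exact hxs x hx
          · simp at hx; exact hx ▸ hy) _ (wr_free hA)
      rw [List.map_append, isWeaklyRegular_append_iff, List.map_singleton,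
        isWeaklyRegular_singleton_iff] at hw
      refine mem_of_isSMulRegular_quotient_of_smul_mem hw.2 ?_
      rw [← map_smul, h1, map_sum, mem_ofList_map_smul]
      exact ⟨fun i => φ j ⟨s i ^ (p ^ e), hsR i _⟩, by simp only [map_smul]⟩
    have h3 := map_mem_ofList_smul (ψ' j) h2
    convert h3 using 1
    apply Subtype.ext
    exact (LinearMap.congr_fun (hφψ j) ⟨r ^ (p ^ e), hrR _⟩).symm
  obtain ⟨E, a, hE⟩ := core (p := p) (C := C) xs hxs hC e₀
    (fun e => α ⟨r ^ (p ^ e), hRR' (hrR _)⟩) (by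
      intro e _ x hx
      obtain ⟨j, rfl⟩ := List.get_of_mem hx
      have := map_mem_ofList_smul α (key e j)
      rwa [map_smul] at this)
  have hE2 := map_mem_ofList_smul β hE
  have hβα : ∀ z, β (α z) = z.1 := fun z => LinearMap.congr_fun hαβ z
  simp only [map_sub, map_sum, map_smul, hβα] at hE2
  obtain ⟨b, hb⟩ := (mem_ofList_map_smul _ _ _).1 hE2
  haveI : Nonempty (Fin xs.length) := ⟨⟨0, List.length_pos_iff.2 hne⟩⟩
  have hprod : ∏ i, xs.get i = xs.prod := by
    simp
  obtain ⟨t, ht1, ht2⟩ := equational (p := p) (Ω := Ω) (fun i : Fin xs.length => xs.get i)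
    (fun i => by
      rw [Ne, FaithfulSMul.algebraMap_eq_zero_iff]
      exact hx0 _ (List.get_mem _ _)) E a (r : Ω) (fun i => (b i : Ω)) (fun i => (b i).2) (by
      rw [hprod]
      have := congrArg Subtype.val hb
      simp only [AddSubgroupClass.coe_sub, AddSubmonoidClass.coe_finset_sum, SetLike.val_smul,
        SubmonoidClass.coe_pow, Algebra.smul_def] at this
      exact this)
  rw [mem_ofList_smul]
  refine ⟨fun i => ⟨t i, ht1 i⟩, Subtype.ext ?_⟩
  rw [ht2]
  simp [Algebra.smul_def]

theorem wrB [CharP Ω p] (xs : List A) (hxs : ∀ x ∈ xs, x ∈ maximalIdeal A) (hA : IsWeaklyRegular A xs)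
    (hAF : ∀ x ∈ xs, AF (integralClosure A Ω) x) :
    IsWeaklyRegular (integralClosure A Ω) xs := by
  classical
  induction xs using List.reverseRecOn with
  | nil => simp
  | append_singleton xs y ih =>
    have hA' := (isWeaklyRegular_append_iff _ _ _).1 hA
    have hB := ih (fun x hx => hxs x (by simp [hx])) hA'.1 (fun x hx => hAF x (by simp [hx]))
    rw [isWeaklyRegular_append_iff, isWeaklyRegular_singleton_iff]
    refine ⟨hB, ?_⟩
    rw [isSMulRegular_quotient_iff_mem_of_smul_mem]
    intro r hr
    have hreg0 : ∀ x, x ∈ xs ++ [y] → x ≠ 0 := by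
      rintro x hx rfl
      have h1 := isWeaklyRegular_of_perm_of_subset_maximalIdeal hA (List.perm_cons_erase hx) hxs
      have h2 := ((isWeaklyRegular_cons_iff _ _ _).1 h1).1
      exact one_ne_zero (h2 (by simp : (0 : A) • (1 : A) = (0 : A) • (0 : A)))
    by_cases hne : xs = []
    · subst hne
      rw [Ideal.ofList_nil, Submodule.bot_smul, Submodule.mem_bot] at hr ⊢
      rw [Algebra.smul_def, mul_eq_zero] at hr
      refine hr.resolve_left fun h => hreg0 y (by simp) ?_
      have := congrArg Subtype.val h
      exact (FaithfulSMul.algebraMap_eq_zero_iff A Ω).1 this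
    · exact wrB_step p xs hne y (fun x hx => hxs x (by simp [hx]))
        (fun x hx => hreg0 x (by simp [hx])) hA hB (hxs y (by simp))
        (fun x hx => hAF x (by simp [hx])) r hr
end L6
end WAux

set_option linter.all false
namespace WAux
open RingTheory.Sequence Function Pointwise IsLocalRing
universe u

def FD (A : Type u) [CommRing A] : ℕ → ∀ (M : Type u) [AddCommGroup M] [Module A M], Prop
  | 0, M, _, _ => Module.Projective A M
  | n + 1, M, _, _ => ∃ (k : ℕ) (f : (Fin k → A) →ₗ[A] M), Surjective f ∧ FD A n (LinearMap.ker f)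

lemma free_of_pure {A : Type*} [CommRing A] [IsLocalRing A] {K F P : Type*} [AddCommGroup K]
    [AddCommGroup F] [AddCommGroup P] [Module A K] [Module A F] [Module A P]
    (f : K →ₗ[A] F) (g : F →ₗ[A] P) (hg : Surjective g) (h : Exact f g) [Module.Finite A K]
    [Module.Finite A F] [Module.Free A F]
    (hf : ∀ x, f x ∈ maximalIdeal A • (⊤ : Submodule A F) →
      x ∈ maximalIdeal A • (⊤ : Submodule A K)) : Module.Free A P := by
  refine Module.free_of_lTensor_residueField_injective f g hg h ?_
  rw [injective_iff_map_eq_zero]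
  intro t ht
  obtain ⟨x, rfl⟩ := TensorProduct.mk_surjective A K (ResidueField A) Ideal.Quotient.mk_surjective t
  have h1 : ∀ {N : Type _} [AddCommGroup N] [Module A N] (z : N),
      TensorProduct.tmul A (1 : ResidueField A) z = 0 ↔ z ∈ maximalIdeal A • (⊤ : Submodule A N) := by
    intro N _ _ z
    have := TensorProduct.quotTensorEquivQuotSMul_mk_one_tmul (maximalIdeal A) z
    rw [← Submodule.Quotient.mk_eq_zero, ← this]
    exact (LinearEquiv.map_eq_zero_iff (TensorProduct.quotTensorEquivQuotSMul N (maximalIdeal A))).symm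
  have h2 : ∀ {N : Type _} [AddCommGroup N] [Module A N] (z : N),
      TensorProduct.tmul A (1 : ResidueField A) z = 0 ↔ z ∈ maximalIdeal A • (⊤ : Submodule A N) := by
    intro N _ _ z
    have := TensorProduct.quotTensorEquivQuotSMul_mk_one_tmul (maximalIdeal A) z
    rw [← Submodule.Quotient.mk_eq_zero, ← this]
    exact (LinearEquiv.map_eq_zero_iff (TensorProduct.quotTensorEquivQuotSMul N (maximalIdeal A))).symm
  rw [TensorProduct.mk_apply, LinearMap.lTensor_tmul] at ht
  exact (h1 x).2 (hf x ((h2 (f x)).1 ht))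

theorem free_of_FD {A : Type u} [CommRing A] [IsLocalRing A] [IsNoetherianRing A] (xs : List A)
    (hA : IsWeaklyRegular A xs) (y : A) (hy : y ∉ Ideal.ofList xs)
    (hm : ∀ a ∈ maximalIdeal A, a * y ∈ Ideal.ofList xs) (n : ℕ) :
    ∀ (M : Type u) [AddCommGroup M] [Module A M] [Module.Finite A M] (_ : IsWeaklyRegular M xs)
      (_ : FD A n M), Module.Free A M := by
  induction n with
  | zero =>
    intro M _ _ _ _ h
    haveI : Module.Projective A M := h
    exact Module.free_of_flat_of_isLocalRing
  | succ n ih =>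
    intro M _ _ _ hM h
    obtain ⟨k, f, hf, hK⟩ := h
    have hex : Exact (LinearMap.ker f).subtype f := LinearMap.exact_subtype_ker_map f
    have hwK := wr_ker (LinearMap.ker f).subtype_injective hex hf (wr_free hA) hM
    haveI := ih (LinearMap.ker f) hwK hK
    refine free_of_pure (LinearMap.ker f).subtype f hf hex ?_
    intro x hx
    have h1 : y • x ∈ Ideal.ofList xs • (⊤ : Submodule A (LinearMap.ker f)) := by
      refine wr_inj (LinearMap.ker f).subtype_injective hex hf hM _ ?_
      rw [map_smul]
      have : y • (LinearMap.ker f).subtype x ∈ (y • (maximalIdeal A)) • (⊤ : Submodule A (Fin k → A)) := by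
        generalize (LinearMap.ker f).subtype x = w at hx
        induction hx using Submodule.smul_induction_on' with
        | smul a ha z hz =>
          rw [smul_smul]
          exact Submodule.smul_mem_smul (Submodule.smul_mem_pointwise_smul _ _ _ ha) trivial
        | add a _ b _ h1 h2 => rw [smul_add]; exact add_mem h1 h2
      refine Submodule.smul_mono_left ?_ this
      intro z hz
      obtain ⟨a, ha, rfl⟩ := (Submodule.mem_smul_pointwise_iff_exists _ _ _).1 hz
      rw [smul_eq_mul, mul_comm]; exact hm a ha
    let b := Module.Free.chooseBasis A (LinearMap.ker f)
    rw [← b.sum_repr x]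
    refine Submodule.sum_mem _ fun i _ => Submodule.smul_mem_smul ?_ trivial
    have h2 := map_mem_ofList_smul (b.coord i) h1
    rw [map_smul, smul_eq_mul, smul_eq_mul, Ideal.mul_top] at h2
    rw [mem_maximalIdeal, mem_nonunits_iff]
    intro hu
    exact hy ((Ideal.mul_unit_mem_iff_mem _ hu).1 h2)

lemma exists_max_reg (A : Type u) [CommRing A] [IsLocalRing A] [IsNoetherianRing A] :
    ∃ (xs : List A) (y : A), (∀ x ∈ xs, x ∈ maximalIdeal A) ∧ IsWeaklyRegular A xs ∧
      y ∉ Ideal.ofList xs ∧ ∀ a ∈ maximalIdeal A, a * y ∈ Ideal.ofList xs := by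
  obtain ⟨I, ⟨xs, hxs, hA, rfl⟩, hmax⟩ := set_has_maximal_iff_noetherian.2 ‹IsNoetherianRing A›
    {I | ∃ xs : List A, (∀ x ∈ xs, x ∈ maximalIdeal A) ∧ IsWeaklyRegular A xs ∧ I = Ideal.ofList xs}
    ⟨_, [], by simp, by simp, rfl⟩
  have hle : Ideal.ofList xs ≤ maximalIdeal A := by
    rw [Ideal.ofList, Ideal.span_le]; exact hxs
  by_cases hs : Subsingleton ((A ⧸ maximalIdeal A) →ₗ[A] (A ⧸ (Ideal.ofList xs)))
  · exfalso
    obtain ⟨r, hr, hreg⟩ := IsSMulRegular.subsingleton_linearMap_iff.1 hs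
    rw [Ideal.annihilator_quotient] at hr
    refine hmax (Ideal.ofList (xs ++ [r])) ⟨xs ++ [r], ?_, ?_, rfl⟩ ?_
    · intro x hx
      rcases List.mem_append.1 hx with hx | hx
      · exact hxs x hx
      · simp at hx; exact hx ▸ hr
    · rw [isWeaklyRegular_append_iff, isWeaklyRegular_singleton_iff]
      refine ⟨hA, ?_⟩
      rw [smul_eq_mul, Ideal.mul_top]; exact hreg
    · rw [Ideal.ofList_append]
      refine left_lt_sup.2 fun h => ?_
      have hr' : r ∈ Ideal.ofList xs := h (by simp)
      have : (Ideal.Quotient.mk (Ideal.ofList xs) 1) = Ideal.Quotient.mk _ 0 := hreg (by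
        show r • _ = r • _
        rw [map_zero, smul_zero, ← Ideal.Quotient.mk_eq_mk, ← Submodule.Quotient.mk_smul, 
          Submodule.Quotient.mk_eq_zero]
        simpa using hr')
      rw [map_zero, Ideal.Quotient.eq_zero_iff_mem] at this
      exact (Ideal.ne_top_iff_one _).1 (maximalIdeal.isMaximal A).ne_top (hle this)
  · rw [not_subsingleton_iff_nontrivial] at hs
    obtain ⟨g, hg⟩ := exists_ne (0 : (A ⧸ maximalIdeal A) →ₗ[A] (A ⧸ (Ideal.ofList xs)))
    obtain ⟨y, hy⟩ := Ideal.Quotient.mk_surjective (g 1)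
    have key : ∀ a : A, Ideal.Quotient.mk (Ideal.ofList xs) (a * y) = g (Ideal.Quotient.mk _ a) := by
      intro a
      have : (Ideal.Quotient.mk (maximalIdeal A) a) = a • 1 := by
        rw [Algebra.smul_def, mul_one]; rfl
      rw [this, map_smul, ← hy, map_mul, Algebra.smul_def]; rfl
    refine ⟨xs, y, hxs, hA, ?_, ?_⟩
    · intro hy'
      apply hg
      ext
      simp only [LinearMap.comp_apply, Submodule.mkQ_apply, LinearMap.zero_apply]
      have := key 1
      rw [one_mul, Ideal.Quotient.eq_zero_iff_mem.2 hy'] at this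
      exact this.symm
    · intro a ha
      rw [← Ideal.Quotient.eq_zero_iff_mem, key, Ideal.Quotient.eq_zero_iff_mem.2 ha, map_zero]

lemma flat_of_fac {A : Type u} [CommRing A] [Nontrivial A] {B : Type u} [AddCommGroup B] [Module A B]
    (h : ∀ (R : Type u) [AddCommGroup R] [Module A R] [Module.Finite A R] (f : R →ₗ[A] B),
      ∃ (C : Type u) (_ : AddCommGroup C) (_ : Module A C) (_ : Module.Finite A C)
      (_ : Module.Free A C)
      (α : R →ₗ[A] C) (β : C →ₗ[A] B), β ∘ₗ α = f) : Module.Flat A B := by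
  apply Module.Flat.of_forall_exists_factorization
  intro l f x hx
  let S := Submodule.span A {f}
  have hS : S ≤ LinearMap.ker x := by
    rw [Submodule.span_le]; simpa using hx
  obtain ⟨C, _, _, _, _, α, β, hαβ⟩ := h ((Fin l →₀ A) ⧸ S) (S.liftQ x hS)
  let e := (Module.finBasis A C).repr
  refine ⟨_, e.toLinearMap ∘ₗ α ∘ₗ S.mkQ, β ∘ₗ e.symm.toLinearMap, ?_, ?_⟩
  · refine LinearMap.ext fun v => ?_
    simp only [LinearMap.comp_apply, LinearEquiv.coe_coe, LinearEquiv.symm_apply_apply]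
    exact (LinearMap.congr_fun hαβ (S.mkQ v)).symm
  · have : S.mkQ f = 0 := by
      rw [Submodule.mkQ_apply, Submodule.Quotient.mk_eq_zero]
      exact Submodule.subset_span rfl
    simp only [LinearMap.comp_apply, this, map_zero]

theorem flat_step (p : ℕ) [Fact p.Prime] {A Ω : Type u} [CommRing A] [IsLocalRing A]
    [IsNoetherianRing A] [Field Ω] [IsAlgClosed Ω] [Algebra A Ω] [FaithfulSMul A Ω] [CharP Ω p]
    (hFD : ∀ (M : Type u) [AddCommGroup M] [Module A M] [Module.Finite A M], ∃ n, FD A n M)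
    (hAF : ∀ y ∈ maximalIdeal A, AF (integralClosure A Ω) y) :
    Module.Flat A (integralClosure A Ω) := by
  obtain ⟨xs, y, hxs, hA, hy, hm⟩ := exists_max_reg A
  have hB := wrB p (Ω := Ω) xs hxs hA (fun x hx => hAF x (hxs x hx))
  apply flat_of_fac
  intro R _ _ _ f
  obtain ⟨C, _, _, _, α, β, hαβ, hC⟩ := lemC xs.length A (integralClosure A Ω) xs rfl hxs
    hA hB (fun x hx => hAF x (hxs x hx)) R f
  obtain ⟨n, hn⟩ := hFD C
  exact ⟨C, _, _, ‹_›, free_of_FD xs hA y hy hm n C hC hn, α, β, hαβ⟩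
end WAux

set_option linter.all false
namespace WAux
open RingTheory.Sequence Function Pointwise IsLocalRing
universe u

lemma FD_loc {A : Type u} [CommRing A] (S : Submonoid A) (A' : Type u) [CommRing A'] [Algebra A A']
    [IsLocalization S A'] (n : ℕ) : ∀ (M M' : Type u) [AddCommGroup M] [AddCommGroup M']
    [Module A M] [Module A M'] [Module A' M'] [IsScalarTower A A' M'] (g : M →ₗ[A] M')
    [IsLocalizedModule S g], FD A n M → FD A' n M' := by
  induction n with
  | zero =>
    intro M M' _ _ _ _ _ _ g _ h
    haveI : Module.Projective A M := h
    exact Module.projective_of_isLocalizedModule S g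
  | succ n ih =>
    intro M M' _ _ _ _ _ _ g _ h
    obtain ⟨k, f, hf, hK⟩ := h
    let ι : (Fin k → A) →ₗ[A] (Fin k → A') := .pi fun i ↦ (Algebra.linearMap A A') ∘ₗ .proj i
    haveI : IsLocalizedModule S ι := inferInstanceAs (IsLocalizedModule S
      (.pi fun i ↦ (Algebra.linearMap A A') ∘ₗ .proj i))
    refine ⟨k, LinearMap.extendScalarsOfIsLocalization S A' (IsLocalizedModule.map S ι g f),
      IsLocalizedModule.map_surjective S ι g f hf, ?_⟩
    rw [← LinearMap.localized'_ker_eq_ker_localizedMap]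
    exact ih _ _ (Submodule.toLocalized' A' S ι (LinearMap.ker f)) hK

lemma FD_loc_all {A : Type u} [CommRing A] (S : Submonoid A) (A' : Type u) [CommRing A'] [Algebra A A']
    [IsLocalization S A']
    (hFD : ∀ (M : Type u) [AddCommGroup M] [Module A M] [Module.Finite A M], ∃ n, FD A n M)
    (M' : Type u) [AddCommGroup M'] [Module A' M'] [Module.Finite A' M'] : ∃ n, FD A' n M' := by
  letI : Module A M' := Module.compHom M' (algebraMap A A')
  haveI : IsScalarTower A A' M' := IsScalarTower.of_algebraMap_smul fun a r => rfl
  obtain ⟨t, ht⟩ := Module.Finite.fg_top (R := A') (M := M')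
  let M := Submodule.span A (t : Set M')
  haveI : Module.Finite A M := Module.Finite.span_of_finite A t.finite_toSet
  obtain ⟨n, hn⟩ := hFD M
  haveI : IsLocalizedModule S M.subtype := by
    refine ⟨?_, ?_, ?_⟩
    · intro x
      have hx := IsLocalization.map_units A' x
      rw [Module.End.isUnit_iff]
      obtain ⟨u, hu⟩ := hx
      have e : ∀ m : M', (algebraMap A (Module.End A M')) (x : A) m = (u : A') • m := by
        intro m; rw [hu, algebraMap_smul]; rfl
      constructor
      · intro a b hab
        rw [e, e] at hab
        have := congrArg (fun z => (↑u⁻¹ : A') • z) hab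
        simpa only [smul_smul, Units.inv_mul, one_smul] using this
      · intro b
        exact ⟨(↑u⁻¹ : A') • b, by rw [e, smul_smul, Units.mul_inv, one_smul]⟩
    · intro y
      obtain ⟨s, hs⟩ := multiple_mem_span_of_mem_localization_span S A' (t : Set M') y
        (by rw [ht]; trivial)
      exact ⟨⟨⟨_, hs⟩, s⟩, rfl⟩
    · intro a b h
      exact ⟨1, by rw [Subtype.ext h]⟩
  exact ⟨n, FD_loc S A' n M M' M.subtype hn⟩

lemma Fac.of_free {A : Type u} [CommRing A] [Nontrivial A] {B R C : Type u} [AddCommGroup B] [Module A B]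
    [AddCommGroup R] [Module A R] [AddCommGroup C] [Module A C] [Module.Free A C] [Module.Finite A C]
    {c : A} {f : R →ₗ[A] B} (φ : R →ₗ[A] C) (ψ : C →ₗ[A] B) (h : ψ ∘ₗ φ = c • f) : Fac c f := by
  let e := (Module.finBasis A C).equivFun
  refine ⟨_, e.toLinearMap ∘ₗ φ, ψ ∘ₗ e.symm.toLinearMap, ?_⟩
  rw [← h]
  ext x
  simp

def FacIdeal {A : Type u} [CommRing A] [Nontrivial A] {B R : Type u} [AddCommGroup B] [Module A B]
    [AddCommGroup R] [Module A R] (f : R →ₗ[A] B) : Ideal A where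
  carrier := {c | Fac c f}
  add_mem' := by
    rintro c d ⟨n, φ, ψ, h⟩ ⟨m, φ', ψ', h'⟩
    refine Fac.of_free (φ.prod φ') (ψ.coprod ψ') ?_
    rw [add_smul, ← h, ← h']
    ext x
    simp
  zero_mem' := ⟨0, 0, 0, by simp⟩
  smul_mem' := fun a c h => Fac.mul h a

theorem flat_main (p : ℕ) [Fact p.Prime] {Ω : Type u} [Field Ω] [IsAlgClosed Ω] [CharP Ω p] (n : ℕ) :
    ∀ (A : Type u) [CommRing A] [IsLocalRing A]
    [IsNoetherianRing A] [Algebra A Ω] [FaithfulSMul A Ω] 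
    (hFD : ∀ (M : Type u) [AddCommGroup M] [Module A M] [Module.Finite A M], ∃ n, FD A n M)
    (hn : (maximalIdeal A).height < n),
    Module.Flat A (integralClosure A Ω) := by
  induction n with
  | zero => intro A _ _ _ _ _ _ hn; simp at hn
  | succ n ih =>
    intro A _ _ _ _ _ hFD hn
    refine flat_step p hFD ?_
    intro y hy R _ _ _ f
    suffices h : y ∈ (FacIdeal f).radical by
      obtain ⟨N, hN⟩ := h
      exact ⟨N, hN⟩
    rw [Ideal.radical_eq_sInf, Ideal.mem_sInf]
    rintro Q ⟨hJQ, hQ⟩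
    by_contra hyQ
    have hlt : Q < maximalIdeal A :=
      lt_of_le_of_ne (le_maximalIdeal hQ.ne_top) fun h => hyQ (h ▸ hy)
    haveI := (maximalIdeal A).finiteHeight_of_isNoetherianRing
    have hht := Ideal.height_strict_mono_of_isPrime_of_isPrime hlt
    let A' := Localization.AtPrime Q
    have hinj := FaithfulSMul.algebraMap_injective A Ω
    have hu : ∀ s : Q.primeCompl, IsUnit (algebraMap A Ω s) := by
      intro s
      rw [isUnit_iff_ne_zero, Ne, FaithfulSMul.algebraMap_eq_zero_iff]
      exact fun h => s.2 (h ▸ Q.zero_mem)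
    let l : A' →+* Ω := IsLocalization.lift hu
    letI : Algebra A' Ω := l.toAlgebra
    haveI : IsScalarTower A A' Ω := IsScalarTower.of_algebraMap_eq fun a =>
      (IsLocalization.lift_eq hu a).symm
    haveI : FaithfulSMul A' Ω := by
      rw [faithfulSMul_iff_algebraMap_injective]
      refine (IsLocalization.lift_injective_iff hu).2 fun x z => ⟨fun h => ?_, fun h => ?_⟩
      · have := congrArg l h
        rwa [IsLocalization.lift_eq, IsLocalization.lift_eq] at this
      · rw [hinj h]
    have hflat : Module.Flat A' (integralClosure A' Ω) := by
      refine ih A' (fun M => FD_loc_all Q.primeCompl A' hFD M) ?_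
      have h1 : ((maximalIdeal A').height : WithBot ℕ∞) = Q.height := by
        rw [IsLocalRing.maximalIdeal_height_eq_ringKrullDim,
          IsLocalization.AtPrime.ringKrullDim_eq_height Q]
      rw [WithBot.coe_inj.1 h1]
      refine lt_of_lt_of_le hht ?_
      rw [Nat.cast_add, Nat.cast_one] at hn
      exact Order.le_of_lt_add_one hn
    haveI : Module.Flat A A' := IsLocalization.flat A' Q.primeCompl
    haveI : Module.Flat A (integralClosure A' Ω) := Module.Flat.trans A A' _
    let inc : integralClosure A Ω →ₗ[A] integralClosure A' Ω :=
      { toFun := fun x => ⟨x.1, IsIntegral.tower_top x.2⟩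
        map_add' := fun _ _ => rfl
        map_smul' := fun _ _ => rfl }
    haveI : Module.FinitePresentation A R := Module.finitePresentation_of_finite A R
    obtain ⟨k, h₂, h₃, h⟩ := Module.Flat.exists_factorization_of_finitePresentation (inc ∘ₗ f)
    have hs : ∀ i : Fin k, ∃ s : Q.primeCompl, IsIntegral A ((s : A) • (h₃ (Finsupp.single i 1)).1) := 
      fun i => IsIntegral.exists_multiple_integral_of_isLocalization Q.primeCompl (Rₘ := A') _
        (h₃ (Finsupp.single i 1)).2
    choose s hs using hs
    have hs' : ∀ i : Fin k, IsIntegral A (((∏ j, s j : Q.primeCompl) : A) • (h₃ (Finsupp.single i 1)).1) := by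
      intro i
      rw [← Finset.mul_prod_erase _ _ (Finset.mem_univ i), mul_comm, Submonoid.coe_mul, mul_smul]
      exact (hs i).smul _
    set σ : Q.primeCompl := ∏ j, s j
    refine σ.2 (hJQ ?_)
    show Fac (σ : A) f
    let ψ : (Fin k →₀ A) →ₗ[A] integralClosure A Ω :=
      Finsupp.linearCombination A fun i => ⟨_, hs' i⟩
    refine Fac.of_free h₂ ψ ?_
    have hψ : inc ∘ₗ ψ = (σ : A) • h₃ := by
      ext i
      simp [ψ, inc]
    have hinc : Injective inc := fun a b h => Subtype.ext (congrArg (fun z => z.1) h)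
    ext1 x
    apply hinc
    have e1 := LinearMap.congr_fun hψ (h₂ x)
    have e2 := LinearMap.congr_fun h x
    simp only [LinearMap.comp_apply, LinearMap.smul_apply, map_smul] at e1 e2 ⊢
    rw [e1, e2]
end WAux

set_option linter.all false
namespace WAux
open RingTheory.Sequence Function Pointwise IsLocalRing
universe u

lemma FD_reg {A : Type u} [CommRing A] [IsLocalRing A] [IsNoetherianRing A] (zs : List A)
    (hA : IsWeaklyRegular A zs) (hm : Ideal.ofList zs = maximalIdeal A) (l₂ : List A) :
    ∀ (l₁ : List A) (_ : zs = l₁ ++ l₂) (M : Type u) [AddCommGroup M] [Module A M]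
      [Module.Finite A M] (_ : IsWeaklyRegular M l₁), FD A l₂.length M := by
  induction l₂ with
  | nil =>
    intro l₁ h M _ _ _ hM
    rw [List.append_nil] at h
    subst h
    obtain ⟨k, f, hf⟩ := Module.Finite.exists_fin' A M
    have hex : Exact (LinearMap.ker f).subtype f := LinearMap.exact_subtype_ker_map f
    haveI : Module.Free A M := by
      refine free_of_pure (LinearMap.ker f).subtype f hf hex ?_
      rw [← hm]
      exact wr_inj (LinearMap.ker f).subtype_injective hex hf hM
    exact (inferInstance : Module.Projective A M)
  | cons x l₂ ih =>
    intro l₁ h M _ _ _ hM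
    obtain ⟨k, f, hf⟩ := Module.Finite.exists_fin' A M
    have hex : Exact (LinearMap.ker f).subtype f := LinearMap.exact_subtype_ker_map f
    have h' : zs = (l₁ ++ [x]) ++ l₂ := by rw [h]; simp
    refine ⟨k, f, hf, ih (l₁ ++ [x]) h' _ ?_⟩
    refine wr_ker' (LinearMap.ker f).subtype_injective hex hf ?_ hM
    rw [h', isWeaklyRegular_append_iff] at hA
    exact wr_free hA.1

section PS
variable {σ k : Type*} [Field k]
open MvPowerSeries

lemma coeff_X_mul_add (s : σ) (n : σ →₀ ℕ) (f : MvPowerSeries σ k) :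
    coeff (Finsupp.single s 1 + n) (X s * f) = coeff n f := by
  have := coeff_add_monomial_mul (Finsupp.single s 1) n f (1 : k)
  rwa [one_mul] at this

lemma coeff_X_mul_zero (s : σ) (n : σ →₀ ℕ) (hn : n s = 0) (f : MvPowerSeries σ k) :
    coeff n (X s * f) = 0 := by
  classical
  have := coeff_monomial_mul n (Finsupp.single s 1) f (1 : k)
  rw [X, this, if_neg]
  intro h
  have := h s
  simp [hn] at this

lemma mem_ofList_X (l : List σ) (f : MvPowerSeries σ k) :
    f ∈ Ideal.ofList (l.map (X : σ → MvPowerSeries σ k)) ↔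
      ∀ n : σ →₀ ℕ, (∀ i ∈ l, n i = 0) → coeff n f = 0 := by
  classical
  induction l generalizing f with
  | nil =>
    simp [MvPowerSeries.ext_iff]
  | cons s l ih =>
    have h0 := mem_ofList_cons_smul (M := MvPowerSeries σ k) (X s : MvPowerSeries σ k) (l.map X) f
    rw [smul_eq_mul, smul_eq_mul, Ideal.mul_top, Ideal.mul_top] at h0
    rw [List.map_cons, h0]
    constructor
    · rintro ⟨b, hb⟩ n hn
      have := (ih _).1 hb n (fun i hi => hn i (by simp [hi]))
      rw [map_sub, smul_eq_mul, coeff_X_mul_zero s n (hn s (by simp)), sub_zero] at this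
      exact this
    · intro h
      let b : MvPowerSeries σ k := fun n => coeff (Finsupp.single s 1 + n) f
      refine ⟨b, (ih _).2 fun n hn => ?_⟩
      rw [map_sub, smul_eq_mul]
      by_cases hs : n s = 0
      · rw [coeff_X_mul_zero s n hs, sub_zero]
        exact h n (by
          intro i hi
          rcases List.mem_cons.1 hi with rfl | hi
          · exact hs
          · exact hn i hi)
      · have hle : Finsupp.single s 1 ≤ n := by
          rw [Finsupp.single_le_iff]; omega
        obtain ⟨m, rfl⟩ := exists_add_of_le hle
        rw [coeff_X_mul_add, sub_eq_zero]
        rfl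

lemma wr_X (l : List σ) (hl : l.Nodup) :
    IsWeaklyRegular (MvPowerSeries σ k) (l.map (X : σ → MvPowerSeries σ k)) := by
  classical
  induction l using List.reverseRecOn with
  | nil => simp
  | append_singleton l s ih =>
    rw [List.nodup_append] at hl
    rw [List.map_append, isWeaklyRegular_append_iff, List.map_singleton,
      isWeaklyRegular_singleton_iff]
    refine ⟨ih hl.1, ?_⟩
    rw [isSMulRegular_quotient_iff_mem_of_smul_mem]
    intro f hf
    rw [smul_eq_mul, Ideal.mul_top, mem_ofList_X] at hf ⊢
    intro n hn
    have := hf (Finsupp.single s 1 + n) (fun i hi => by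
      have : s ≠ i := fun h => (hl.2.2 i hi s (by simp)) h.symm
      simp [hn i hi, this])
    rwa [smul_eq_mul, coeff_X_mul_add] at this

lemma ofList_X_eq (l : List σ) (hl : ∀ s, s ∈ l) :
    Ideal.ofList (l.map (X : σ → MvPowerSeries σ k)) = maximalIdeal (MvPowerSeries σ k) := by
  ext f
  rw [mem_ofList_X, mem_maximalIdeal, mem_nonunits_iff, MvPowerSeries.isUnit_iff_constantCoeff,
    isUnit_iff_ne_zero, not_not]
  constructor
  · intro h
    exact h 0 (by simp)
  · intro h n hn
    have : n = 0 := Finsupp.ext fun i => hn i (hl i)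
    rw [this]; exact h
end PS

lemma perf {A Ω : Type*} [CommRing A] [Field Ω] [IsAlgClosed Ω] [Algebra A Ω] (p : ℕ) [Fact p.Prime]
    [CharP Ω p] [CharP (integralClosure A Ω) p] : PerfectRing (integralClosure A Ω) p := by
  have hp := (Fact.out : p.Prime)
  refine PerfectRing.ofSurjective _ p ?_
  intro b
  obtain ⟨z, hz⟩ := IsAlgClosed.exists_pow_nat_eq (b : Ω) hp.pos
  exact ⟨⟨z, IsIntegral.of_pow hp.pos (hz ▸ b.2)⟩, Subtype.ext hz⟩

theorem witt_reg (p : ℕ) [Fact p.Prime] (B : Type*) [CommRing B] [IsDomain B] [CharP B p]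
    [PerfectRing B p] (l : List B) (h : IsRegular B l) :
    IsRegular (WittVector p B) ((p : WittVector p B) :: l.map (WittVector.teichmuller p)) := by
  rw [isRegular_cons_iff]
  have hp0 : (p : WittVector p B) ≠ 0 := WittVector.p_nonzero p B
  refine ⟨?_, ?_⟩
  · intro a b hab
    exact mul_left_cancel₀ hp0 hab
  · let g : WittVector p B →+ B := (WittVector.constantCoeff : WittVector p B →+* B).toAddMonoidHom
    have hker : ∀ x : WittVector p B, x ∈ (p : WittVector p B) • (⊤ : Submodule (WittVector p B) (WittVector p B)) ↔
        x ∈ g.ker := by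
      intro x
      have h1 : x ∈ g.ker ↔ x ∈ RingHom.ker (WittVector.constantCoeff : WittVector p B →+* B) := Iff.rfl
      rw [h1, WittVector.ker_constantCoeff, Submodule.mem_smul_pointwise_iff_exists,
        Ideal.mem_span_singleton']
      constructor
      · rintro ⟨y, -, rfl⟩
        exact ⟨y, mul_comm _ _⟩
      · rintro ⟨y, rfl⟩
        exact ⟨y, trivial, mul_comm _ _⟩
    have hsurj : Surjective g := WittVector.constantCoeff_surjective p
    let e : QuotSMulTop (p : WittVector p B) (WittVector p B) ≃+ B :=
      (QuotientAddGroup.quotientAddEquivOfEq (by ext x; exact hker x)).trans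
        (QuotientAddGroup.quotientKerEquivOfSurjective g hsurj)
    refine (AddEquiv.isRegular_congr (e := e) ?_).2 h
    rw [List.forall₂_map_left_iff, List.forall₂_same]
    intro b _ x
    obtain ⟨x, rfl⟩ := Submodule.Quotient.mk_surjective _ x
    show (WittVector.constantCoeff (WittVector.teichmuller p b * x) : B) = b * WittVector.constantCoeff x
    rw [map_mul]
    congr 1

theorem main (p : ℕ) [Fact p.Prime] (k : Type u) [Field k] [CharP k p] (d : ℕ)
    {Ω : Type u} [Field Ω] [IsAlgClosed Ω] [Algebra (MvPowerSeries (Fin d) k) Ω]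
    [FaithfulSMul (MvPowerSeries (Fin d) k) Ω] :
    IsRegular (WittVector p (integralClosure (MvPowerSeries (Fin d) k) Ω))
      ((p : WittVector p (integralClosure (MvPowerSeries (Fin d) k) Ω)) ::
        List.ofFn fun i : Fin d => WittVector.teichmuller p
          (algebraMap (MvPowerSeries (Fin d) k) (integralClosure (MvPowerSeries (Fin d) k) Ω)
            (MvPowerSeries.X i))) := by
  let A := MvPowerSeries (Fin d) k
  have hinj := FaithfulSMul.algebraMap_injective A Ω
  haveI : CharP A p :=
    (RingHom.charP_iff (MvPowerSeries.C : k →+* A) (RingHom.injective _) p).1 inferInstance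
  haveI : CharP Ω p := (RingHom.charP_iff (algebraMap A Ω) hinj p).1 inferInstance
  haveI : CharP (integralClosure A Ω) p :=
    (RingHom.charP_iff (algebraMap (integralClosure A Ω) Ω)
      (FaithfulSMul.algebraMap_injective _ _) p).2 inferInstance
  haveI : PerfectRing (integralClosure A Ω) p := perf p
  let zs : List A := (List.finRange d).map MvPowerSeries.X
  have hwr : IsWeaklyRegular A zs := wr_X _ (List.nodup_finRange d)
  have hm : Ideal.ofList zs = maximalIdeal A := ofList_X_eq _ (List.mem_finRange)
  have hflat : Module.Flat A (integralClosure A Ω) := by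
    have hfin := (maximalIdeal A).finiteHeight_of_isNoetherianRing
    have hlt := (maximalIdeal A).height_ne_top Ideal.IsPrime.ne_top'
    obtain ⟨n, hn⟩ := ENat.ne_top_iff_exists.1 hlt
    refine flat_main p (n + 1) A (fun M => ⟨_, FD_reg zs hwr hm zs [] rfl M (by simp)⟩) ?_
    rw [← hn]
    exact_mod_cast Nat.lt_succ_self n
  have hreg : IsRegular (integralClosure A Ω) zs := by
    refine ⟨wr_free hwr, ?_⟩
    rw [hm]
    intro h
    obtain ⟨Q, hQ, hQm⟩ := Ideal.exists_ideal_over_prime_of_isIntegral_of_isDomain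
      (S := integralClosure A Ω) (maximalIdeal A) (by
        rw [(RingHom.injective_iff_ker_eq_bot _).1 (FaithfulSMul.algebraMap_injective A (integralClosure A Ω))]
        exact bot_le)
    apply hQ.ne_top
    rw [Ideal.eq_top_iff_one]
    have h1 : (1 : integralClosure A Ω) ∈ maximalIdeal A • (⊤ : Submodule A (integralClosure A Ω)) := by
      rw [← h]; trivial
    refine Submodule.smul_induction_on h1 ?_ (fun _ _ => Q.add_mem)
    intro a ha b _
    rw [Algebra.smul_def]
    refine Q.mul_mem_right _ ?_
    rw [← hQm] at ha; exact ha
  have hreg' : IsRegular (integralClosure A Ω) (zs.map (algebraMap A (integralClosure A Ω))) := by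
    refine (AddEquiv.isRegular_congr (e := AddEquiv.refl _) ?_).1 hreg
    rw [List.forall₂_map_right_iff, List.forall₂_same]
    intro a _ x
    exact Algebra.smul_def a x
  have := witt_reg p (integralClosure A Ω) _ hreg'
  rw [List.ofFn_eq_map]
  simp only [zs, List.map_map] at this
  exact this
end WAux

/-- Let `k` be a perfect field of characteristic `p`, `A = k[[z₁, …, z_d]]`
(`d ≥ 1`) and `A⁺` the absolute integral closure of `A` (the integral closure of `A` in an
algebraic closure of its fraction field). Then `(p, [z₁], …, [z_d])` is a regular sequence on
`𝕎(A⁺)`, where `[zᵢ]` is the Teichmüller lift of the image of `zᵢ` in `A⁺`. -/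
theorem witt_of_absolute_integral_closure_regular_sequence
    (p : ℕ) [Fact p.Prime] (k : Type*) [Field k] [CharP k p] [PerfectRing k p]
    (d : ℕ) (hd : 1 ≤ d) :
    RingTheory.Sequence.IsRegular
      (WittVector p
        ↥(integralClosure (MvPowerSeries (Fin d) k)
            (AlgebraicClosure (FractionRing (MvPowerSeries (Fin d) k)))))
      ((p : WittVector p
        ↥(integralClosure (MvPowerSeries (Fin d) k)
            (AlgebraicClosure (FractionRing (MvPowerSeries (Fin d) k))))) ::
        List.ofFn fun i : Fin d =>
          WittVector.teichmuller p
            (algebraMap (MvPowerSeries (Fin d) k)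
              ↥(integralClosure (MvPowerSeries (Fin d) k)
                  (AlgebraicClosure (FractionRing (MvPowerSeries (Fin d) k))))
              (MvPowerSeries.X i))) := by
  haveI : FaithfulSMul (MvPowerSeries (Fin d) k)
      (AlgebraicClosure (FractionRing (MvPowerSeries (Fin d) k))) := by
    rw [faithfulSMul_iff_algebraMap_injective,
      IsScalarTower.algebraMap_eq _ (FractionRing (MvPowerSeries (Fin d) k)) _]
    rw [RingHom.coe_comp]
    exact Function.Injective.comp
      (algebraMap (FractionRing (MvPowerSeries (Fin d) k))
        (AlgebraicClosure (FractionRing (MvPowerSeries (Fin d) k)))).injective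
      (IsFractionRing.injective (MvPowerSeries (Fin d) k)
        (FractionRing (MvPowerSeries (Fin d) k)))
  exact WAux.main p k d

end
end

section
/- Let p be a prime, let k be a perfect field of characteristic p, let A = k[[z₁, …, z_d]] be a power series ring in d ≥ 1 variables over k, and let A^+ be the absolute integral closure of A. Let J ⊆ W(A^+) be the ideal generated by p and the Teichmüller lifts [z₁], …, [z_d] of the variables. Then W(A^+) is J-adically separated: ⋂_{n ≥ 1} J^n = 0. -/
noncomputable section

/-- Power series of order at least `n`. -/
def wsepOrd (k : Type*) [Field k] (d n : ℕ) : Ideal (MvPowerSeries (Fin d) k) where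
  carrier := {f | (n : ℕ∞) ≤ f.order}
  add_mem' {f g} hf hg := le_trans (le_min hf hg) MvPowerSeries.min_order_le_add
  zero_mem' := by simp
  smul_mem' c f hf := by
    have h1 : c.order + f.order ≤ (c * f).order := MvPowerSeries.le_order_mul
    exact le_trans (le_trans hf le_add_self) h1

theorem wsep_mem {k : Type*} [Field k] {d n : ℕ} {f : MvPowerSeries (Fin d) k} :
    f ∈ wsepOrd k d n ↔ (n : ℕ∞) ≤ f.order := Iff.rfl

theorem wsep_pow_le (k : Type*) [Field k] (d n : ℕ) :
    (Ideal.span (Set.range (MvPowerSeries.X : Fin d → MvPowerSeries (Fin d) k))) ^ n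
      ≤ wsepOrd k d n := by
  induction n with
  | zero => intro x _; simp [wsep_mem]
  | succ n ih =>
    rw [pow_succ, Ideal.mul_le]
    intro r hr s hs
    have h1 : (n : ℕ∞) ≤ r.order := ih hr
    have h2 : s ∈ wsepOrd k d 1 := by
      refine (Ideal.span_le.2 ?_) hs
      rintro _ ⟨i, rfl⟩
      change ((1 : ℕ) : ℕ∞) ≤ _
      rw [Nat.cast_one, MvPowerSeries.one_le_order_iff_constCoeff_eq_zero]
      simp
    have h3 : ((1 : ℕ) : ℕ∞) ≤ s.order := h2
    rw [wsep_mem, MvPowerSeries.order_mul, Nat.cast_add]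
    exact add_le_add h1 h3

theorem wsep_order_pow {k : Type*} [Field k] {d : ℕ} (f : MvPowerSeries (Fin d) k) (e : ℕ) :
    (f ^ e).order = e * f.order := by
  induction e with
  | zero =>
    have h : ((1 : MvPowerSeries (Fin d) k)).order = ((0 : ℕ) : ℕ∞) := by
      rw [MvPowerSeries.order_eq_nat]
      exact ⟨⟨0, by simp⟩, by simp⟩
    simpa using h
  | succ n ih => rw [pow_succ, MvPowerSeries.order_mul, ih, Nat.cast_succ, add_mul, one_mul]

theorem wsep_base {k : Type*} [Field k] {d : ℕ} {S : Type*} [CommRing S] [IsDomain S]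
    [Algebra (MvPowerSeries (Fin d) k) S] [Algebra.IsIntegral (MvPowerSeries (Fin d) k) S]
    (hinj : Function.Injective (algebraMap (MvPowerSeries (Fin d) k) S)) :
    (⨅ n : ℕ, (Ideal.span (Set.range fun i : Fin d =>
      algebraMap (MvPowerSeries (Fin d) k) S (MvPowerSeries.X i))) ^ n) = ⊥ := by
  apply Ideal.eq_bot_of_comap_eq_bot (R := MvPowerSeries (Fin d) k)
  rw [eq_bot_iff]
  intro a ha
  by_contra ha0
  rw [Ideal.mem_bot] at ha0
  obtain ⟨s, hs⟩ : ∃ s : ℕ, a.order = s := by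
    have := MvPowerSeries.order_eq_top_iff.not.2 ha0
    exact ⟨_, (ENat.natCast_toNat this).symm⟩
  rw [Ideal.mem_comap, Ideal.mem_iInf] at ha
  have h1 := ha (s + 1)
  have h2 : algebraMap (MvPowerSeries (Fin d) k) S a ∈
      ((Ideal.span (Set.range (MvPowerSeries.X : Fin d → MvPowerSeries (Fin d) k))) ^ (s+1)).map
        (algebraMap _ S) := by
    rw [Ideal.map_pow, Ideal.map_span, ← Set.range_comp]
    exact h1
  obtain ⟨P, hP, hPa, hPc⟩ := Polynomial.exists_monic_aeval_eq_zero_forall_mem_pow_of_mem_map h2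
  rw [Polynomial.aeval_algebraMap_apply] at hPa
  have h3 : Polynomial.aeval a P = 0 := hinj (by rw [hPa, map_zero])
  rw [Polynomial.aeval_eq_sum_range, Finset.sum_range_succ, hP.coeff_natDegree, one_smul] at h3
  set e := P.natDegree with he
  have h4 : a ^ e ∈ wsepOrd k d (e * s + 1) := by
    rw [eq_neg_of_add_eq_zero_right h3]
    refine neg_mem (sum_mem fun i hi => ?_)
    have hi' : i < e := Finset.mem_range.1 hi
    have h5 := hPc i
    rw [← pow_mul] at h5
    have h6 := wsep_pow_le k d _ h5
    rw [wsep_mem] at h6 ⊢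
    rw [smul_eq_mul, MvPowerSeries.order_mul, wsep_order_pow, hs]
    refine le_trans ?_ (add_le_add_left h6 _)
    obtain ⟨t, ht⟩ : ∃ t, e = i + t + 1 := ⟨e - i - 1, by omega⟩
    rw [ht, show i + t + 1 - i = t + 1 by omega]
    norm_cast
    nlinarith
  rw [wsep_mem, wsep_order_pow, hs] at h4
  norm_cast at h4
  omega

open scoped Pointwise in
theorem wsep_witt (p : ℕ) [Fact p.Prime] {S : Type*} [CommRing S] [CharP S p] {ι : Type*}
    (z : ι → S) (hz : (⨅ n : ℕ, (Ideal.span (Set.range z)) ^ n) = ⊥) :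
    (⨅ (n : ℕ) (_ : 1 ≤ n), (Ideal.span ({(p : WittVector p S)} ∪
      Set.range fun i => WittVector.teichmuller p (z i)) : Ideal _) ^ n) = ⊥ := by
  rw [eq_bot_iff]
  intro x hx
  rw [Ideal.mem_bot]
  ext i
  rw [WittVector.zero_coeff, ← Ideal.mem_bot, ← hz, Ideal.mem_iInf]
  intro n
  simp only [Ideal.mem_iInf] at hx
  have h1 := hx ((i + 1) + n) (by omega)
  rw [Ideal.span_union] at h1
  obtain ⟨u, hu, l, hl, rfl⟩ := Submodule.mem_sup.1 (Ideal.sup_pow_add_le_pow_sup_pow h1)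
  rw [Ideal.span_singleton_pow, Ideal.mem_span_singleton'] at hu
  obtain ⟨w, rfl⟩ := hu
  have h2 : l ∈ RingHom.ker (WittVector.map (p := p)
      (Ideal.Quotient.mk ((Ideal.span (Set.range z)) ^ n))) := by
    have h3 : Ideal.span (Set.range fun i => WittVector.teichmuller p (z i)) ^ n
        = Ideal.span ((WittVector.teichmuller p) '' ((Set.range z) ^ n)) := by
      rw [Set.image_pow, ← Set.range_comp]
      exact Submodule.span_pow _ _
    rw [h3] at hl
    refine (Ideal.span_le.2 ?_) hl
    rintro _ ⟨r, hr, rfl⟩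
    have hr' : r ∈ (Ideal.span (Set.range z)) ^ n := by
      have : (Ideal.span (Set.range z)) ^ n = Ideal.span ((Set.range z) ^ n) :=
        Submodule.span_pow _ _
      rw [this]
      exact Ideal.subset_span hr
    rw [SetLike.mem_coe, RingHom.mem_ker, WittVector.map_teichmuller,
      Ideal.Quotient.eq_zero_iff_mem.2 hr', WittVector.teichmuller_zero]
  have h4 : (w * (p : WittVector p S) ^ (i + 1) + l).coeff i = l.coeff i := by
    have h5 : WittVector.truncate (i + 1) (w * (p : WittVector p S) ^ (i + 1)) = 0 := by
      rw [← RingHom.mem_ker, WittVector.mem_ker_truncate]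
      intro j hj
      exact WittVector.mul_pow_charP_coeff_zero w hj
    have h6 : WittVector.truncate (i + 1) (w * (p : WittVector p S) ^ (i + 1) + l)
        = WittVector.truncate (i + 1) l := by rw [map_add, h5, zero_add]
    have h7 := congrArg (fun t => TruncatedWittVector.coeff (Fin.last i) t) h6
    simpa only [WittVector.coeff_truncate, Fin.val_last] using h7
  rw [h4, ← Ideal.Quotient.eq_zero_iff_mem, ← WittVector.map_coeff, RingHom.mem_ker.1 h2,
    WittVector.zero_coeff]

/-- Let `k` be a perfect field of characteristic `p`, `A = k[[z₁, …, z_d]]`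
(`d ≥ 1`), `A⁺` the absolute integral closure of `A`, and `J ⊆ 𝕎(A⁺)` the ideal generated by
`p` and the Teichmüller lifts `[z₁], …, [z_d]`. Then `𝕎(A⁺)` is `J`-adically separated:
`⋂_{n ≥ 1} Jⁿ = 0`. -/
theorem witt_of_absolute_integral_closure_adically_separated
    (p : ℕ) [Fact p.Prime] (k : Type*) [Field k] [CharP k p] [PerfectRing k p]
    (d : ℕ) (hd : 1 ≤ d) :
    (⨅ (n : ℕ) (_ : 1 ≤ n),
      (Ideal.span
        ({(p : WittVector p
            ↥(integralClosure (MvPowerSeries (Fin d) k)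
                (AlgebraicClosure (FractionRing (MvPowerSeries (Fin d) k)))))} ∪
          Set.range fun i : Fin d =>
            WittVector.teichmuller p
              (algebraMap (MvPowerSeries (Fin d) k)
                ↥(integralClosure (MvPowerSeries (Fin d) k)
                    (AlgebraicClosure (FractionRing (MvPowerSeries (Fin d) k))))
                (MvPowerSeries.X i))) : Ideal _) ^ n) = ⊥ := by
  have hinj : Function.Injective (algebraMap (MvPowerSeries (Fin d) k)
      ↥(integralClosure (MvPowerSeries (Fin d) k)
        (AlgebraicClosure (FractionRing (MvPowerSeries (Fin d) k))))) :=
    by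
    intro a b hab
    have h1 := congrArg (algebraMap _
      (AlgebraicClosure (FractionRing (MvPowerSeries (Fin d) k)))) hab
    rw [← IsScalarTower.algebraMap_apply, ← IsScalarTower.algebraMap_apply,
      IsScalarTower.algebraMap_apply _ (FractionRing (MvPowerSeries (Fin d) k)) _ a,
      IsScalarTower.algebraMap_apply _ (FractionRing (MvPowerSeries (Fin d) k)) _ b] at h1
    have h2 := (algebraMap (FractionRing (MvPowerSeries (Fin d) k))
      (AlgebraicClosure (FractionRing (MvPowerSeries (Fin d) k)))).injective h1
    exact IsFractionRing.injective _ (FractionRing (MvPowerSeries (Fin d) k)) h2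
  have hc : CharP (MvPowerSeries (Fin d) k) p :=
    charP_of_injective_ringHom (f := MvPowerSeries.C (σ := Fin d) (R := k))
      MvPowerSeries.C_injective p
  have := charP_of_injective_ringHom hinj p
  exact wsep_witt p _ (wsep_base hinj)

end
end
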